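/- arXiv:1511.09280 — 4 statements merged into one kernel-verified Lean document; each statement's English description precedes it below -/
import Mathlib

section
/- Let X be a Cantor space, K a dynamical simplex on X, and G the group of all homeomorphisms of X preserving every measure in K. Then there exists a K-saturated element g of G. -/
/-!
The saturated homeomorphism is built from a sequence of Kakutani–Rokhlin partitions of `X`. Such a
partition is a list `L` of towers whose levels are clopen and, within each tower, `K`-equivalent.
It determines a relation `Step L x y`: either `y` lies in the level just above that of `x`, or `x`
lies in the top and `y` in the base of the partition. A list obtained from `L` by cutting and
stacking towers (`Ref K L L'`) has a smaller step relation. A homeomorphism `g` is obtained as the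
intersection of the relations `Step (L n)` for a refining sequence `L n`, and the sequence is
arranged so that each of countably many requirements is met at some stage.

* For each clopen `W`, some stage decides `W` on every level, on the whole base and on the whole
  top (`pure_ends`). By compactness the relations then shrink to the graph of a homeomorphism
  (`exists_homeo`). Its invariance follows from the same stages: replacing `W` by its complement if
  necessary, `W` misses the base, so it is a union of levels, and `g` pulls each of them back to the
  `K`-equivalent level below (`measure_preimage`).
* For each pair of `K`-equivalent clopen sets `U`, `V`, some stage has all levels compatible with
  `U` and `V`, and each tower contains as many levels in `U` as in `V` (`balance`). Permuting the
  levels inside each tower by powers of `g` gives an element of the topological full group carrying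
  `U` onto `V` (`exists_fullGroup`).

Both kinds of refinement rest on `absorb`: if the base of a tower `c` is `K`-equivalent to a clopen
subset of the union of the bases of a list `S`, then `c` can be cut and its pieces stacked on top of
the towers of `S`. Goodness of `K` supplies the required clopen subsets.

For `pure_ends`, a small clopen set `C` inside the base of one tower is chosen, all other towers are
cut until their bases are smaller than `C` (possible because the measures in the compact set `K` are
atomless), and they are stacked on the tower over `C`. The last tower to be absorbed comes from the
same original tower as `C`, which controls the top.

For `balance`, let the excess of a tower be the number of its levels in `U` minus the number of its
levels in `V`. The sum of the excesses weighted by the measures of the bases is `μ U - μ V = 0`. If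
`p` bounds all excesses in absolute value and `c` has excess `p`, it follows that the base of `c` is
`K`-equivalent to a clopen subset of the union of the bases of the towers of negative excess
(`exists_target`), and absorbing `c` there reduces the number of towers of excess `p`. Alternating
between `U` and `V` brings all excesses to zero.
-/

open MeasureTheory

namespace DynSimplex

variable {X : Type*} [TopologicalSpace X] [MeasurableSpace X] [OpensMeasurableSpace X]

/-- `g` preserves the probability measure `μ`, i.e. `g_*μ = μ`. -/
def Preserves (g : X ≃ₜ X) (μ : ProbabilityMeasure X) : Prop :=
  (μ : Measure X).map g = (μ : Measure X)

/-- A homeomorphism is minimal if all of its (two-sided) orbits are dense. -/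
def IsMinimal (g : X ≃ₜ X) : Prop :=
  ∀ x : X, Dense (Set.range fun n : ℤ => (g.toEquiv ^ n) x)

/-- A set of probability measures is good if for all clopen `A`, `B` with `μ A < μ B` for
all `μ ∈ K`, there is a clopen `C ⊆ B` with `μ C = μ A` for all `μ ∈ K`. -/
def Good (K : Set (ProbabilityMeasure X)) : Prop :=
  ∀ A B : Set X, IsClopen A → IsClopen B → (∀ μ ∈ K, μ A < μ B) →
    ∃ C : Set X, IsClopen C ∧ C ⊆ B ∧ ∀ μ ∈ K, μ C = μ A

/-- Approximate divisibility of a set of probability measures. -/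
def ApproximatelyDivisible (K : Set (ProbabilityMeasure X)) : Prop :=
  ∀ A : Set X, IsClopen A → ∀ n : ℕ, 1 ≤ n → ∀ ε : ℝ, 0 < ε →
    ∃ B : Set X, IsClopen B ∧ B ⊆ A ∧
      ∀ μ ∈ K, (μ A : ℝ) - ε ≤ (n : ℝ) * (μ B : ℝ) ∧ (n : ℝ) * (μ B : ℝ) ≤ (μ A : ℝ)

/-- A probability measure has full support if every nonempty open set has positive measure. -/
def FullSupport (μ : ProbabilityMeasure X) : Prop :=
  ∀ U : Set X, IsOpen U → U.Nonempty → 0 < μ U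

/-- A probability measure is atomless if all singletons are null. -/
def Atomless (μ : ProbabilityMeasure X) : Prop :=
  ∀ x : X, μ {x} = 0

/-- Convexity of a set of probability measures (as a subset of the `ℝ≥0`-module of
finite measures). -/
def ProbConvex (K : Set (ProbabilityMeasure X)) : Prop :=
  Convex NNReal (ProbabilityMeasure.toFiniteMeasure '' K)

/-- The set of extreme points of a set of probability measures. -/
def ProbExtremePoints (K : Set (ProbabilityMeasure X)) : Set (ProbabilityMeasure X) :=
  ProbabilityMeasure.toFiniteMeasure ⁻¹'
    (Set.extremePoints NNReal (ProbabilityMeasure.toFiniteMeasure '' K))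

/-- A dynamical simplex: a nonempty compact convex set of atomless, fully supported
probability measures which is good and approximately divisible. -/
def DynamicalSimplex (K : Set (ProbabilityMeasure X)) : Prop :=
  K.Nonempty ∧ IsCompact K ∧ ProbConvex K ∧
    (∀ μ ∈ K, Atomless μ ∧ FullSupport μ) ∧ Good K ∧ ApproximatelyDivisible K

/-- Membership in the full group of `g`. -/
def InFullGroup (g h : X ≃ₜ X) : Prop :=
  ∀ x : X, ∃ n : ℤ, h x = (g.toEquiv ^ n) x

/-- Membership in the topological full group of `g`: `h` is given piecewise by powers of `g`
on a finite clopen partition of `X`. -/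
def InTopologicalFullGroup (g h : X ≃ₜ X) : Prop :=
  ∃ (k : ℕ) (A : Fin k → Set X) (n : Fin k → ℤ),
    (∀ i, IsClopen (A i)) ∧ (∀ x : X, ∃! i, x ∈ A i) ∧
    ∀ i, ∀ x ∈ A i, h x = (g.toEquiv ^ (n i)) x

/-- `g` preserves every measure in `K` (i.e. `g` belongs to the group `G`). -/
def PreservesAll (K : Set (ProbabilityMeasure X)) (g : X ≃ₜ X) : Prop :=
  ∀ μ ∈ K, Preserves g μ

/-- `g` is `K`-saturated: any two `K`-equivalent clopen sets are mapped one to the other by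
an element of the topological full group of `g`. -/
def KSaturated (K : Set (ProbabilityMeasure X)) (g : X ≃ₜ X) : Prop :=
  ∀ U V : Set X, IsClopen U → IsClopen V → (∀ μ ∈ K, μ U = μ V) →
    ∃ h : X ≃ₜ X, InTopologicalFullGroup g h ∧ h '' U = V

/-- The topology of uniform convergence on the homeomorphism group of a compact space
(the compact-open topology, induced from `C(X, X)`). -/
instance : TopologicalSpace (X ≃ₜ X) :=
  TopologicalSpace.induced (fun h : X ≃ₜ X => (h : C(X, X))) inferInstance

/-- A KR-partition for `K`: a finite family of columns, each column being a finite sequence of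
clopen sets which are all `K`-equivalent, the atoms of all columns forming a partition of `X`. -/
structure KRPartition (X : Type*) [TopologicalSpace X] [MeasurableSpace X]
    (K : Set (ProbabilityMeasure X)) where
  numCols : ℕ
  height : Fin numCols → ℕ
  atom : (i : Fin numCols) → Fin (height i + 1) → Set X
  clopen : ∀ i j, IsClopen (atom i j)
  equivK : ∀ i j j', ∀ μ ∈ K, μ (atom i j) = μ (atom i j')
  partition : ∀ x : X, ∃! p : (i : Fin numCols) × Fin (height i + 1), x ∈ atom p.1 p.2

/-- The base of a KR-partition: the union of the first atoms of the columns. -/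
def KRPartition.base {K : Set (ProbabilityMeasure X)} (T : KRPartition X K) : Set X :=
  ⋃ i, T.atom i 0

/-- The top of a KR-partition: the union of the last atoms of the columns. -/
def KRPartition.top {K : Set (ProbabilityMeasure X)} (T : KRPartition X K) : Set X :=
  ⋃ i, T.atom i (Fin.last _)

/-- `S` refines `T`: the base (resp. top) of `S` is contained in the base (resp. top) of `T`,
and every column of `S` is obtained by cutting and stacking columns of `T`. -/
def KRPartition.Refines {K : Set (ProbabilityMeasure X)} (S T : KRPartition X K) : Prop :=
  S.base ⊆ T.base ∧ S.top ⊆ T.top ∧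
  ∀ c : Fin S.numCols, ∃ (m : ℕ) (idx : Fin (m + 1) → Fin T.numCols)
    (piece : (k : Fin (m + 1)) → Fin (T.height (idx k) + 1) → Set X),
    (∀ k j, piece k j ⊆ T.atom (idx k) j) ∧
    (S.height c + 1 = ∑ k : Fin (m + 1), (T.height (idx k) + 1)) ∧
    ∀ (k : Fin (m + 1)) (j : Fin (T.height (idx k) + 1))
      (hlt : (∑ l ∈ Finset.Iio k, (T.height (idx l) + 1)) + (j : ℕ) < S.height c + 1),
      S.atom c ⟨(∑ l ∈ Finset.Iio k, (T.height (idx l) + 1)) + (j : ℕ), hlt⟩ = piece k j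

/-- A KR-partition is compatible with a clopen set `U` if `U` is a union of its atoms,
equivalently every atom is either contained in `U` or disjoint from it. -/
def KRPartition.Compatible {K : Set (ProbabilityMeasure X)} (S : KRPartition X K)
    (U : Set X) : Prop :=
  ∀ i j, S.atom i j ⊆ U ∨ Disjoint (S.atom i j) U

end DynSimplex


namespace SaturatedProof

open DynSimplex

set_option linter.unusedSectionVars false

variable {X : Type*} [TopologicalSpace X] [MeasurableSpace X] [BorelSpace X]

/-! ### Measures of clopen sets -/

/-- The real number `μ A`. -/
def ms (μ : ProbabilityMeasure X) (A : Set X) : ℝ := (μ : Measure X).real A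

lemma ms_eq (μ : ProbabilityMeasure X) (A : Set X) : ms μ A = (μ A : ℝ) := by
  simp [ms]

lemma ms_nonneg (μ : ProbabilityMeasure X) (A : Set X) : 0 ≤ ms μ A := measureReal_nonneg

@[simp] lemma ms_empty (μ : ProbabilityMeasure X) : ms μ (∅ : Set X) = 0 := measureReal_empty

lemma ms_add (μ : ProbabilityMeasure X) {A B : Set X} (hB : IsClopen B) :
    ms μ (A ∩ B) + ms μ (A ∩ Bᶜ) = ms μ A := by
  have := measureReal_inter_add_sdiff (μ := (μ : Measure X)) (s := A) (t := B)
    hB.isOpen.measurableSet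
  simpa [ms, Set.sdiff_eq] using this

lemma ms_union (μ : ProbabilityMeasure X) {A B : Set X} (hB : IsClopen B) (h : Disjoint A B) :
    ms μ (A ∪ B) = ms μ A + ms μ B :=
  measureReal_union h hB.isOpen.measurableSet

lemma ms_mono (μ : ProbabilityMeasure X) {A B : Set X} (h : A ⊆ B) : ms μ A ≤ ms μ B :=
  measureReal_mono h

/-- The relation `A ∼_K B`: every measure in `K` gives `A` and `B` the same measure. -/
def Eqv (K : Set (ProbabilityMeasure X)) (A B : Set X) : Prop := ∀ μ ∈ K, ms μ A = ms μ B

/-- The properties of a dynamical simplex on which the construction rests. -/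
structure Hyp (K : Set (ProbabilityMeasure X)) : Prop where
  ne : K.Nonempty
  pos : ∀ μ ∈ K, ∀ A : Set X, IsClopen A → A.Nonempty → 0 < ms μ A
  good : ∀ A B : Set X, IsClopen A → IsClopen B → (∀ μ ∈ K, ms μ A < ms μ B) →
    ∃ C : Set X, IsClopen C ∧ C ⊆ B ∧ Eqv K C A
  small : ∀ (x : X) (B : Set X), IsClopen B → B.Nonempty →
    ∃ C : Set X, IsClopen C ∧ x ∈ C ∧ ∀ μ ∈ K, ms μ C < ms μ B

/-- The `small` clause holds for a single measure by atomlessness, and passes to all of `K` by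
compactness, since `ν ↦ ν A` is continuous for clopen `A`. -/
lemma hyp_of_dynamicalSimplex [CompactSpace X] [TopologicalSpace.MetrizableSpace X]
    [TotallyDisconnectedSpace X] {K : Set (ProbabilityMeasure X)} (hK : DynamicalSimplex K) :
    Hyp K := by
  obtain ⟨hne, hc, -, hat, hg, -⟩ := hK
  refine ⟨hne, ?_, ?_, ?_⟩
  · intro μ hμ A hA hn
    rw [ms_eq]
    exact_mod_cast (hat μ hμ).2 A hA.isOpen hn
  · intro A B hA hB h
    obtain ⟨C, h1, h2, h3⟩ := hg A B hA hB (fun μ hμ => by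
      have := h μ hμ
      simp only [ms_eq] at this
      exact_mod_cast this)
    exact ⟨C, h1, h2, fun μ hμ => by simp only [ms_eq, h3 μ hμ]⟩
  · intro x B hB hn
    refine hc.induction_on (p := fun s => ∃ C : Set X, IsClopen C ∧ x ∈ C ∧
      ∀ μ ∈ s, ms μ C < ms μ B) ?_ ?_ ?_ ?_
    · exact ⟨Set.univ, isClopen_univ, trivial, by simp⟩
    · rintro s t hst ⟨C, h1, h2, h3⟩
      exact ⟨C, h1, h2, fun μ hμ => h3 μ (hst hμ)⟩
    · rintro s t ⟨C, h1, h2, h3⟩ ⟨D, g1, g2, g3⟩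
      refine ⟨C ∩ D, h1.inter g1, ⟨h2, g2⟩, ?_⟩
      rintro μ (hμ | hμ)
      · exact (ms_mono μ Set.inter_subset_left).trans_lt (h3 μ hμ)
      · exact (ms_mono μ Set.inter_subset_right).trans_lt (g3 μ hμ)
    · intro μ hμ
      have hpos : 0 < μ B := (hat μ hμ).2 B hB.isOpen hn
      have h0 : (μ : Measure X) {x} = 0 :=
        (ProbabilityMeasure.null_iff_toMeasure_null μ {x}).1 ((hat μ hμ).1 x)
      have hpos' : (μ : Measure X) {x} < (μ : Measure X) B := by
        rw [h0, pos_iff_ne_zero]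
        intro h
        exact hpos.ne' ((ProbabilityMeasure.null_iff_toMeasure_null μ B).2 h)
      obtain ⟨U, hxU, hU, hlt⟩ := Set.exists_isOpen_lt_of_lt {x} _ hpos'
      obtain ⟨C, hC, hxC, hCU⟩ := compact_exists_isClopen_in_isOpen hU (hxU rfl)
      have hlt' : μ C < μ B := by
        have h1 : (μ : Measure X) C < (μ : Measure X) B := (measure_mono hCU).trans_lt hlt
        rw [← ProbabilityMeasure.ennreal_coeFn_eq_coeFn_toMeasure,
          ← ProbabilityMeasure.ennreal_coeFn_eq_coeFn_toMeasure] at h1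
        exact_mod_cast h1
      have t1 := ProbabilityMeasure.tendsto_measure_of_isClopen_of_tendsto
        (Filter.tendsto_id (x := nhds μ)) hC
      have t2 := ProbabilityMeasure.tendsto_measure_of_isClopen_of_tendsto
        (Filter.tendsto_id (x := nhds μ)) hB
      refine ⟨{ν | ν C < ν B}, mem_nhdsWithin_of_mem_nhds (t1.eventually_lt t2 hlt'), C, hC, hxC, ?_⟩
      intro ν hν
      simp only [ms_eq]
      exact_mod_cast hν

variable {K : Set (ProbabilityMeasure X)}

lemma Eqv.rfl' (A : Set X) : Eqv K A A := fun _ _ => rfl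

lemma Eqv.symm' {A B : Set X} (h : Eqv K A B) : Eqv K B A := fun μ hμ => (h μ hμ).symm

lemma Eqv.trans' {A B C : Set X} (h : Eqv K A B) (h' : Eqv K B C) : Eqv K A C :=
  fun μ hμ => (h μ hμ).trans (h' μ hμ)

lemma Hyp.empty_of_eqv (H : Hyp K) {A : Set X} (hA : IsClopen A) (h : Eqv K A ∅) : A = ∅ := by
  by_contra hne
  obtain ⟨μ, hμ⟩ := H.ne
  have h1 := H.pos μ hμ A hA (Set.nonempty_iff_ne_empty.2 hne)
  rw [h μ hμ, ms_empty] at h1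
  exact lt_irrefl _ h1

/-- Clopen subsets can be transported between `K`-equivalent clopen sets. -/
lemma Hyp.sub (H : Hyp K) {A B E : Set X} (hA : IsClopen A) (hB : IsClopen B) (hE : IsClopen E)
    (hEA : E ⊆ A) (h : Eqv K A B) : ∃ F : Set X, IsClopen F ∧ F ⊆ B ∧ Eqv K F E := by
  by_cases hne : (A ∩ Eᶜ).Nonempty
  · refine H.good E B hE hB (fun μ hμ => ?_)
    have h1 := H.pos μ hμ _ (hA.inter hE.compl) hne
    have h2 := ms_add μ (A := A) hE
    rw [Set.inter_eq_self_of_subset_right hEA] at h2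
    have h3 := h μ hμ
    linarith
  · have : E = A := hEA.antisymm (fun x hx => by
      by_contra hxE
      exact hne ⟨x, hx, hxE⟩)
    exact ⟨B, hB, subset_rfl, this ▸ h.symm'⟩

/-! ### Towers and their lists -/

/-- A column of a Kakutani–Rokhlin partition: the levels are `at' j` for `j < len`. -/
structure Tower (X : Type*) where
  len : ℕ
  at' : ℕ → Set X

namespace Tower

/-- The base of a tower. -/
def hd (c : Tower X) : Set X := c.at' 0

/-- The top level of a tower. -/
def lt (c : Tower X) : Set X := c.at' (c.len - 1)

/-- The set covered by a tower. -/
def sup (c : Tower X) : Set X := {x | ∃ j, x ∈ c.at' j}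

/-- `y` lies one level above `x`. -/
def adj (c : Tower X) (x y : X) : Prop := ∃ j, x ∈ c.at' j ∧ y ∈ c.at' (j + 1)

/-- The tower cut down to a set `D`. -/
def restr (c : Tower X) (D : Set X) : Tower X := ⟨c.len, fun j => c.at' j ∩ D⟩

/-- The tower `c` stacked on top of `s`. -/
def app (s c : Tower X) : Tower X :=
  ⟨s.len + c.len, fun j => if j < s.len then s.at' j else c.at' (j - s.len)⟩

/-- Well-formed towers: the levels are disjoint, clopen and `K`-equivalent, and the junk levels
`at' j` with `len ≤ j` are empty. -/
structure Ok (K : Set (ProbabilityMeasure X)) (c : Tower X) : Prop where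
  pos : 0 < c.len
  clopen : ∀ j, IsClopen (c.at' j)
  eqv : ∀ j < c.len, Eqv K (c.at' j) c.hd
  empty : ∀ j, c.len ≤ j → c.at' j = ∅
  disj : ∀ i j, ∀ x ∈ c.at' i, x ∈ c.at' j → i = j

/-- `c'` is obtained by cutting `c`. -/
def Piece (c' c : Tower X) : Prop := ∃ D, c' = c.restr D

lemma Piece.refl (c : Tower X) : Piece c c := ⟨Set.univ, by simp [restr]⟩

lemma Piece.trans {a b c : Tower X} (h : Piece a b) (h' : Piece b c) : Piece a c := by
  obtain ⟨D, rfl⟩ := h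
  obtain ⟨E, rfl⟩ := h'
  exact ⟨E ∩ D, by simp [restr, Set.inter_assoc]⟩

lemma Piece.at_subset {a b : Tower X} (h : Piece a b) (j : ℕ) : a.at' j ⊆ b.at' j := by
  obtain ⟨D, rfl⟩ := h
  exact Set.inter_subset_left

lemma Ok.lt_len {c : Tower X} (h : c.Ok K) {j : ℕ} {x : X} (hx : x ∈ c.at' j) : j < c.len := by
  by_contra hj
  rw [h.empty j (not_lt.1 hj)] at hx
  exact hx

lemma Ok.nonempty {c : Tower X} (H : Hyp K) (h : c.Ok K) {i j : ℕ} (hi : (c.at' i).Nonempty)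
    (hj : j < c.len) : (c.at' j).Nonempty := by
  rw [Set.nonempty_iff_ne_empty] at hi ⊢
  intro h0
  refine hi (H.empty_of_eqv (h.clopen i) ?_)
  by_cases hil : i < c.len
  · rw [← h0]
    exact (h.eqv i hil).trans' (h.eqv j hj).symm'
  · rw [h.empty i (not_lt.1 hil)]
    exact Eqv.rfl' _

lemma Ok.restr {c : Tower X} (h : c.Ok K) {D : Set X} (hD : IsClopen D)
    (hE : ∀ j < c.len, Eqv K (c.at' j ∩ D) (c.hd ∩ D)) : (c.restr D).Ok K where
  pos := h.pos
  clopen j := (h.clopen j).inter hD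
  eqv j hj := hE j hj
  empty j hj := by
    show c.at' j ∩ D = ∅
    rw [h.empty j hj, Set.empty_inter]
  disj i j x hx hx' := h.disj i j x hx.1 hx'.1

lemma Ok.restr_compl {c : Tower X} (h : c.Ok K) {D : Set X} (hD : IsClopen D)
    (hE : ∀ j < c.len, Eqv K (c.at' j ∩ D) (c.hd ∩ D)) : (c.restr Dᶜ).Ok K := by
  refine h.restr hD.compl (fun j hj μ hμ => ?_)
  have h1 := ms_add μ (A := c.at' j) hD
  have h2 := ms_add μ (A := c.hd) hD
  have h3 := hE j hj μ hμ
  have h4 := h.eqv j hj μ hμ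
  linarith

lemma Ok.app {s c : Tower X} (hs : s.Ok K) (hc : c.Ok K) (hd : Disjoint s.sup c.sup)
    (hE : Eqv K s.hd c.hd) : (s.app c).Ok K := by
  have hhd : (s.app c).hd = s.hd := by simp [Tower.app, Tower.hd, hs.pos]
  refine ⟨Nat.add_pos_left hs.pos _, fun j => ?_, fun j hj => ?_, fun j hj => ?_, ?_⟩
  · simp only [Tower.app]
    split_ifs
    · exact hs.clopen _
    · exact hc.clopen _
  · rw [hhd]
    simp only [Tower.app] at hj ⊢
    split_ifs with h
    · exact hs.eqv _ h
    · exact (hc.eqv _ (by omega)).trans' hE.symm'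
  · simp only [Tower.app] at hj ⊢
    rw [if_neg (by omega)]
    exact hc.empty _ (by omega)
  · intro i j x hx hx'
    simp only [Tower.app] at hx hx'
    split_ifs at hx hx' with h1 h2 h2
    · exact hs.disj _ _ x hx hx'
    · exact (Set.disjoint_left.1 hd ⟨_, hx⟩ ⟨_, hx'⟩).elim
    · exact (Set.disjoint_left.1 hd ⟨_, hx'⟩ ⟨_, hx⟩).elim
    · have := hc.disj _ _ x hx hx'
      omega

/-- Any clopen subset `E` of a level extends to a clopen set `D` that cuts the whole tower. -/
lemma Ok.cut {c : Tower X} (H : Hyp K) (h : c.Ok K) {i : ℕ} (hi : i < c.len) {E : Set X}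
    (hE : IsClopen E) (hEs : E ⊆ c.at' i) :
    ∃ D : Set X, IsClopen D ∧ c.at' i ∩ D = E ∧ ∀ j < c.len, Eqv K (c.at' j ∩ D) (c.hd ∩ D) := by
  have key : ∀ j, ∃ F : Set X, IsClopen F ∧ (j < c.len → F ⊆ c.at' j ∧ Eqv K F E) ∧
      (j = i → F = E) := by
    intro j
    by_cases hji : j = i
    · subst hji
      exact ⟨E, hE, fun _ => ⟨hEs, Eqv.rfl' _⟩, fun _ => rfl⟩
    · by_cases hj : j < c.len
      · obtain ⟨F, h1, h2, h3⟩ := H.sub (h.clopen i) (h.clopen j) hE hEs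
          ((h.eqv i hi).trans' (h.eqv j hj).symm')
        exact ⟨F, h1, fun _ => ⟨h2, h3⟩, fun h => (hji h).elim⟩
      · exact ⟨∅, isClopen_empty, fun h => (hj h).elim, fun h => (hji h).elim⟩
  choose F hF1 hF2 hF3 using key
  have hD : ∀ j < c.len, c.at' j ∩ (⋃ k ∈ Finset.range c.len, F k) = F j := by
    intro j hj
    ext x
    simp only [Set.mem_inter_iff, Set.mem_iUnion, Finset.mem_range, exists_prop]
    constructor
    · rintro ⟨hx, k, hk, hxk⟩
      rwa [h.disj j k x hx ((hF2 k hk).1 hxk)]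
    · exact fun hx => ⟨(hF2 j hj).1 hx, j, hj, hx⟩
  refine ⟨⋃ k ∈ Finset.range c.len, F k, ?_, ?_, ?_⟩
  · exact Set.Finite.isClopen_biUnion (Finset.finite_toSet _) (fun k _ => hF1 k)
  · rw [hD i hi, hF3 i rfl]
  · intro j hj
    have h0 := hD 0 h.pos
    rw [hD j hj, show c.hd = c.at' 0 from rfl, h0]
    exact (hF2 j hj).2.trans' (hF2 0 h.pos).2.symm'

end Tower

open Tower

/-- The union of the bases. -/
def Hd (L : List (Tower X)) : Set X := {x | ∃ c ∈ L, x ∈ c.hd}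

/-- The union of the tops. -/
def Lt (L : List (Tower X)) : Set X := {x | ∃ c ∈ L, x ∈ c.lt}

/-- The set covered by a list of towers. -/
def Sup (L : List (Tower X)) : Set X := {x | ∃ c ∈ L, x ∈ c.sup}

/-- `y` lies one level above `x` in some tower. -/
def Adj (L : List (Tower X)) (x y : X) : Prop := ∃ c ∈ L, c.adj x y

/-- A list of well-formed, pairwise disjoint towers. -/
def Valid (K : Set (ProbabilityMeasure X)) (L : List (Tower X)) : Prop :=
  (∀ c ∈ L, c.Ok K) ∧ L.Pairwise (fun c c' => Disjoint c.sup c'.sup)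

/-- `L'` is a valid list obtained from `L` by cutting and stacking, as far as the construction
needs to know: moving up one level in `L'` either moves up one level in `L` or goes from the top
of `L` to its base. -/
structure Ref (K : Set (ProbabilityMeasure X)) (L L' : List (Tower X)) : Prop where
  valid : Valid K L'
  adj : ∀ x y, Adj L' x y → Adj L x y ∨ (x ∈ Lt L ∧ y ∈ Hd L)
  hd : Hd L' ⊆ Hd L
  lt : Lt L' ⊆ Lt L
  sup : Sup L' = Sup L
  atom : ∀ c' ∈ L', ∀ j', ∃ c ∈ L, ∃ j, c'.at' j' ⊆ c.at' j

lemma sup_subset {L : List (Tower X)} {c : Tower X} (h : c ∈ L) : c.sup ⊆ Sup L :=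
  fun _ hx => ⟨c, h, hx⟩

lemma Ref.of_mem_iff {L L' : List (Tower X)} (hL : Valid K L') (h : ∀ c, c ∈ L' ↔ c ∈ L) :
    Ref K L L' := by
  refine ⟨hL, ?_, ?_, ?_, ?_, ?_⟩
  · rintro x y ⟨c, hc, hxy⟩
    exact Or.inl ⟨c, (h c).1 hc, hxy⟩
  · rintro x ⟨c, hc, hx⟩
    exact ⟨c, (h c).1 hc, hx⟩
  · rintro x ⟨c, hc, hx⟩
    exact ⟨c, (h c).1 hc, hx⟩
  · ext x
    simp [Sup, h]
  · exact fun c hc j => ⟨c, (h c).1 hc, j, subset_rfl⟩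

lemma Ref.refl {L : List (Tower X)} (hL : Valid K L) : Ref K L L :=
  Ref.of_mem_iff hL (fun _ => Iff.rfl)

lemma Valid.perm {L L' : List (Tower X)} (hL : Valid K L) (h : L.Perm L') : Valid K L' :=
  ⟨fun c hc => hL.1 c (h.mem_iff.2 hc), (h.pairwise_iff (fun h => h.symm)).1 hL.2⟩

lemma Ref.perm {L L' : List (Tower X)} (hL : Valid K L) (h : L.Perm L') : Ref K L L' :=
  Ref.of_mem_iff (hL.perm h) (fun _ => h.mem_iff.symm)

lemma Ref.trans {L₁ L₂ L₃ : List (Tower X)} (h : Ref K L₁ L₂) (h' : Ref K L₂ L₃) :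
    Ref K L₁ L₃ := by
  refine ⟨h'.valid, ?_, h'.hd.trans h.hd, h'.lt.trans h.lt, h'.sup.trans h.sup, ?_⟩
  · intro x y hxy
    rcases h'.adj x y hxy with h1 | ⟨h1, h2⟩
    · exact h.adj x y h1
    · exact Or.inr ⟨h.lt h1, h.hd h2⟩
  · intro c hc j
    obtain ⟨d, hd, k, hk⟩ := h'.atom c hc j
    obtain ⟨e, he, l, hl⟩ := h.atom d hd k
    exact ⟨e, he, l, hk.trans hl⟩

lemma Valid.append_left {L M : List (Tower X)} (h : Valid K (L ++ M)) : Valid K L :=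
  ⟨fun c hc => h.1 c (List.mem_append_left _ hc), (List.pairwise_append.1 h.2).1⟩

lemma Valid.append_right {L M : List (Tower X)} (h : Valid K (L ++ M)) : Valid K M :=
  ⟨fun c hc => h.1 c (List.mem_append_right _ hc), (List.pairwise_append.1 h.2).2.1⟩

lemma Ref.append {L L' M M' : List (Tower X)} (hV : Valid K (L ++ M)) (h : Ref K L L')
    (h' : Ref K M M') : Ref K (L ++ M) (L' ++ M') := by
  refine ⟨⟨?_, ?_⟩, ?_, ?_, ?_, ?_, ?_⟩
  · intro c hc
    rcases List.mem_append.1 hc with hc | hc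
    · exact h.valid.1 c hc
    · exact h'.valid.1 c hc
  · refine List.pairwise_append.2 ⟨h.valid.2, h'.valid.2, fun a ha b hb => ?_⟩
    rw [Set.disjoint_left]
    intro x hxa hxb
    obtain ⟨c, hc, hxc⟩ : x ∈ Sup L := h.sup ▸ sup_subset ha hxa
    obtain ⟨d, hd, hxd⟩ : x ∈ Sup M := h'.sup ▸ sup_subset hb hxb
    exact Set.disjoint_left.1 ((List.pairwise_append.1 hV.2).2.2 c hc d hd) hxc hxd
  · rintro x y ⟨c, hc, hxy⟩
    rcases List.mem_append.1 hc with hc | hc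
    · rcases h.adj x y ⟨c, hc, hxy⟩ with ⟨d, hd, h1⟩ | ⟨⟨d, hd, h1⟩, ⟨e, he, h2⟩⟩
      · exact Or.inl ⟨d, List.mem_append_left _ hd, h1⟩
      · exact Or.inr ⟨⟨d, List.mem_append_left _ hd, h1⟩, ⟨e, List.mem_append_left _ he, h2⟩⟩
    · rcases h'.adj x y ⟨c, hc, hxy⟩ with ⟨d, hd, h1⟩ | ⟨⟨d, hd, h1⟩, ⟨e, he, h2⟩⟩
      · exact Or.inl ⟨d, List.mem_append_right _ hd, h1⟩
      · exact Or.inr ⟨⟨d, List.mem_append_right _ hd, h1⟩, ⟨e, List.mem_append_right _ he, h2⟩⟩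
  · rintro x ⟨c, hc, hx⟩
    rcases List.mem_append.1 hc with hc | hc
    · obtain ⟨d, hd, h1⟩ := h.hd ⟨c, hc, hx⟩
      exact ⟨d, List.mem_append_left _ hd, h1⟩
    · obtain ⟨d, hd, h1⟩ := h'.hd ⟨c, hc, hx⟩
      exact ⟨d, List.mem_append_right _ hd, h1⟩
  · rintro x ⟨c, hc, hx⟩
    rcases List.mem_append.1 hc with hc | hc
    · obtain ⟨d, hd, h1⟩ := h.lt ⟨c, hc, hx⟩
      exact ⟨d, List.mem_append_left _ hd, h1⟩
    · obtain ⟨d, hd, h1⟩ := h'.lt ⟨c, hc, hx⟩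
      exact ⟨d, List.mem_append_right _ hd, h1⟩
  · have e : ∀ A B : List (Tower X), Sup (A ++ B) = Sup A ∪ Sup B := by
      intro A B
      ext x
      simp only [Sup, List.mem_append, Set.mem_union, Set.mem_ofPred_eq]
      constructor
      · rintro ⟨c, hc | hc, hx⟩
        · exact Or.inl ⟨c, hc, hx⟩
        · exact Or.inr ⟨c, hc, hx⟩
      · rintro (⟨c, hc, hx⟩ | ⟨c, hc, hx⟩)
        · exact ⟨c, Or.inl hc, hx⟩
        · exact ⟨c, Or.inr hc, hx⟩
    rw [e, e, h.sup, h'.sup]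
  · intro c hc j
    rcases List.mem_append.1 hc with hc | hc
    · obtain ⟨d, hd, k, hk⟩ := h.atom c hc j
      exact ⟨d, List.mem_append_left _ hd, k, hk⟩
    · obtain ⟨d, hd, k, hk⟩ := h'.atom c hc j
      exact ⟨d, List.mem_append_right _ hd, k, hk⟩

lemma Ref.cut {c : Tower X} (hc : c.Ok K) {D : Set X} (hD : IsClopen D)
    (hE : ∀ j < c.len, Eqv K (c.at' j ∩ D) (c.hd ∩ D)) :
    Ref K [c] [c.restr D, c.restr Dᶜ] := by
  refine ⟨⟨?_, ?_⟩, ?_, ?_, ?_, ?_, ?_⟩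
  · simpa using ⟨hc.restr hD hE, hc.restr_compl hD hE⟩
  · simp only [List.pairwise_cons, List.mem_singleton, forall_eq, List.not_mem_nil, IsEmpty.forall_iff,
      implies_true, List.Pairwise.nil, and_true]
    rw [Set.disjoint_left]
    rintro x ⟨j, hj⟩ ⟨k, hk⟩
    exact hk.2 hj.2
  · rintro x y ⟨d, hd, j, h1, h2⟩
    refine Or.inl ⟨c, by simp, j, ?_⟩
    simp only [List.mem_cons, List.not_mem_nil, or_false] at hd
    rcases hd with rfl | rfl <;> exact ⟨h1.1, h2.1⟩
  · rintro x ⟨d, hd, hx⟩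
    refine ⟨c, by simp, ?_⟩
    simp only [List.mem_cons, List.not_mem_nil, or_false] at hd
    rcases hd with rfl | rfl <;> exact hx.1
  · rintro x ⟨d, hd, hx⟩
    refine ⟨c, by simp, ?_⟩
    simp only [List.mem_cons, List.not_mem_nil, or_false] at hd
    rcases hd with rfl | rfl <;> exact hx.1
  · ext x
    constructor
    · rintro ⟨d, hd, j, hx⟩
      refine ⟨c, by simp, j, ?_⟩
      simp only [List.mem_cons, List.not_mem_nil, or_false] at hd
      rcases hd with rfl | rfl <;> exact hx.1
    · rintro ⟨d, hd, j, hx⟩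
      simp only [List.mem_cons, List.not_mem_nil, or_false] at hd
      subst hd
      by_cases hxD : x ∈ D
      · exact ⟨d.restr D, by simp, j, hx, hxD⟩
      · exact ⟨d.restr Dᶜ, by simp, j, hx, hxD⟩
  · intro d hd j
    refine ⟨c, by simp, j, ?_⟩
    simp only [List.mem_cons, List.not_mem_nil, or_false] at hd
    rcases hd with rfl | rfl <;> exact Set.inter_subset_left

lemma Ref.stack {s c : Tower X} (hV : Valid K [s, c]) (hE : Eqv K s.hd c.hd) :
    Ref K [s, c] [s.app c] := by
  have hs := hV.1 s (by simp)
  have hc := hV.1 c (by simp)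
  have hpos := hs.pos
  have hpos' := hc.pos
  have hd : Disjoint s.sup c.sup := by simpa using hV.2
  refine ⟨⟨by simpa using hs.app hc hd hE, by simp⟩, ?_, ?_, ?_, ?_, ?_⟩
  · rintro x y ⟨d, hd, j, h1, h2⟩
    rw [List.mem_singleton] at hd
    subst hd
    simp only [Tower.app] at h1 h2
    by_cases ha : j + 1 < s.len
    · rw [if_pos (by omega)] at h1 h2
      exact Or.inl ⟨s, by simp, j, h1, h2⟩
    · rw [if_neg ha] at h2
      by_cases hb : j < s.len
      · rw [if_pos hb] at h1
        have e1 : j = s.len - 1 := by omega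
        have e2 : j + 1 - s.len = 0 := by omega
        rw [e2] at h2
        rw [e1] at h1
        exact Or.inr ⟨⟨s, by simp, h1⟩, ⟨c, by simp, h2⟩⟩
      · rw [if_neg hb] at h1
        have e1 : j + 1 - s.len = j - s.len + 1 := by omega
        rw [e1] at h2
        exact Or.inl ⟨c, by simp, _, h1, h2⟩
  · rintro x ⟨d, hd, hx⟩
    rw [List.mem_singleton] at hd
    subst hd
    refine ⟨s, by simp, ?_⟩
    simpa [Tower.app, Tower.hd, hpos] using hx
  · rintro x ⟨d, hd, hx⟩
    rw [List.mem_singleton] at hd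
    subst hd
    refine ⟨c, by simp, ?_⟩
    simp only [Tower.lt, Tower.app] at hx ⊢
    rw [if_neg (by omega)] at hx
    rwa [show s.len + c.len - 1 - s.len = c.len - 1 by omega] at hx
  · ext x
    constructor
    · rintro ⟨d, hd, j, hx⟩
      rw [List.mem_singleton] at hd
      subst hd
      simp only [Tower.app] at hx
      split_ifs at hx
      · exact ⟨s, by simp, _, hx⟩
      · exact ⟨c, by simp, _, hx⟩
    · rintro ⟨d, hd, j, hx⟩
      refine ⟨s.app c, by simp, ?_⟩
      simp only [List.mem_cons, List.not_mem_nil, or_false] at hd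
      rcases hd with rfl | rfl
      · refine ⟨j, ?_⟩
        simpa only [Tower.app, if_pos (hs.lt_len hx)] using hx
      · refine ⟨s.len + j, ?_⟩
        simpa [Tower.app] using hx
  · intro d hd j
    rw [List.mem_singleton] at hd
    subst hd
    simp only [Tower.app]
    split_ifs
    · exact ⟨s, by simp, _, subset_rfl⟩
    · exact ⟨c, by simp, _, subset_rfl⟩

/-- Empty towers may be dropped. -/
lemma Ref.drop (H : Hyp K) {L : List (Tower X)} (hL : Valid K L) :
    ∃ L' : List (Tower X), Ref K L L' ∧ ∀ c ∈ L', c ∈ L ∧ c.hd.Nonempty := by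
  classical
  refine ⟨L.filter (fun c => c.hd.Nonempty), ⟨⟨?_, hL.2.filter _⟩, ?_, ?_, ?_, ?_, ?_⟩, ?_⟩
  · exact fun c hc => hL.1 c (List.mem_filter.1 hc).1
  · rintro x y ⟨c, hc, h⟩
    exact Or.inl ⟨c, (List.mem_filter.1 hc).1, h⟩
  · rintro x ⟨c, hc, h⟩
    exact ⟨c, (List.mem_filter.1 hc).1, h⟩
  · rintro x ⟨c, hc, h⟩
    exact ⟨c, (List.mem_filter.1 hc).1, h⟩
  · ext x
    constructor
    · rintro ⟨c, hc, h⟩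
      exact ⟨c, (List.mem_filter.1 hc).1, h⟩
    · rintro ⟨c, hc, j, h⟩
      have : c.hd.Nonempty := (hL.1 c hc).nonempty H ⟨x, h⟩ (hL.1 c hc).pos
      exact ⟨c, List.mem_filter.2 ⟨hc, by simpa using this⟩, j, h⟩
  · exact fun c hc j => ⟨c, (List.mem_filter.1 hc).1, j, subset_rfl⟩
  · intro c hc
    simpa using List.mem_filter.1 hc

/-! ### Making a list compatible with clopen sets -/

/-- `A` does not cross the boundary of `W`. -/
def Pure (A W : Set X) : Prop := A ⊆ W ∨ Disjoint A W

lemma Pure.mono {A B W : Set X} (h : Pure B W) (hAB : A ⊆ B) : Pure A W :=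
  h.imp hAB.trans (fun h => h.mono_left hAB)

lemma Pure.mem {A W : Set X} (h : Pure A W) {x y : X} (hx : x ∈ A) (hy : y ∈ A) (hxW : x ∈ W) :
    y ∈ W := by
  rcases h with h | h
  · exact h hy
  · exact (Set.disjoint_left.1 h hx hxW).elim

lemma Ref.pure {L L' : List (Tower X)} (h : Ref K L L') {W : Set X}
    (hp : ∀ c ∈ L, ∀ j, Pure (c.at' j) W) : ∀ c ∈ L', ∀ j, Pure (c.at' j) W := by
  intro c hc j
  obtain ⟨d, hd, k, hk⟩ := h.atom c hc j
  exact (hp d hd k).mono hk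

lemma valid_singleton {c : Tower X} (hc : c.Ok K) : Valid K [c] := ⟨by simpa using hc, by simp⟩

/-- Cutting a tower level by level makes its first `n` levels pure. -/
lemma compat_tower (H : Hyp K) {W : Set X} (hW : IsClopen W) (n : ℕ) :
    ∀ c : Tower X, c.Ok K → ∃ L : List (Tower X), Ref K [c] L ∧
      ∀ c' ∈ L, Piece c' c ∧ ∀ j < n, Pure (c'.at' j) W := by
  induction n with
  | zero =>
    intro c hc
    refine ⟨[c], Ref.refl (valid_singleton hc), ?_⟩
    simpa using Piece.refl c
  | succ n ih =>
    intro c hc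
    by_cases hn : n < c.len
    · obtain ⟨D, hD, hDn, hDE⟩ := hc.cut H hn ((hc.clopen n).inter hW) Set.inter_subset_left
      have h0 := Ref.cut hc hD hDE
      obtain ⟨L₁, hL₁, hp₁⟩ := ih (c.restr D) (hc.restr hD hDE)
      obtain ⟨L₂, hL₂, hp₂⟩ := ih (c.restr Dᶜ) (hc.restr_compl hD hDE)
      refine ⟨L₁ ++ L₂, h0.trans (Ref.append h0.valid hL₁ hL₂), ?_⟩
      intro c' hc'
      rcases List.mem_append.1 hc' with h | h
      · obtain ⟨h1, h2⟩ := hp₁ c' h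
        refine ⟨h1.trans ⟨D, rfl⟩, fun j hj => ?_⟩
        rcases Nat.lt_succ_iff_lt_or_eq.1 hj with hj | rfl
        · exact h2 j hj
        · left
          refine (h1.at_subset j).trans ?_
          show c.at' j ∩ D ⊆ W
          rw [hDn]
          exact Set.inter_subset_right
      · obtain ⟨h1, h2⟩ := hp₂ c' h
        refine ⟨h1.trans ⟨Dᶜ, rfl⟩, fun j hj => ?_⟩
        rcases Nat.lt_succ_iff_lt_or_eq.1 hj with hj | rfl
        · exact h2 j hj
        · right
          rw [Set.disjoint_left]
          intro x hx hxW
          obtain ⟨hx1, hx2⟩ : x ∈ c.at' j ∩ Dᶜ := h1.at_subset j hx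
          have : x ∈ c.at' j ∩ D := hDn ▸ ⟨hx1, hxW⟩
          exact hx2 this.2
    · obtain ⟨L, hL, hp⟩ := ih c hc
      refine ⟨L, hL, fun c' hc' => ⟨(hp c' hc').1, fun j hj => ?_⟩⟩
      rcases Nat.lt_succ_iff_lt_or_eq.1 hj with hj | rfl
      · exact (hp c' hc').2 j hj
      · left
        refine ((hp c' hc').1.at_subset j).trans ?_
        rw [hc.empty j (not_lt.1 hn)]
        exact Set.empty_subset _

lemma compat (H : Hyp K) {W : Set X} (hW : IsClopen W) :
    ∀ L : List (Tower X), Valid K L → ∃ L' : List (Tower X), Ref K L L' ∧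
      ∀ c ∈ L', ∀ j, Pure (c.at' j) W
  | [], hL => ⟨[], Ref.refl hL, by simp⟩
  | c :: L, hL => by
    have hc := hL.1 c (by simp)
    obtain ⟨L₁, hL₁, hp₁⟩ := compat_tower H hW c.len c hc
    obtain ⟨L₂, hL₂, hp₂⟩ := compat H hW L (Valid.append_right (L := [c]) hL)
    refine ⟨L₁ ++ L₂, Ref.append (L := [c]) hL hL₁ hL₂, ?_⟩
    intro c' hc' j
    rcases List.mem_append.1 hc' with h | h
    · by_cases hj : j < c.len
      · exact (hp₁ c' h).2 j hj
      · left
        refine ((hp₁ c' h).1.at_subset j).trans ?_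
        rw [hc.empty j (not_lt.1 hj)]
        exact Set.empty_subset _
    · exact hp₂ c' h j

lemma compat_list (H : Hyp K) : ∀ Ws : List (Set X), (∀ W ∈ Ws, IsClopen W) →
    ∀ L : List (Tower X), Valid K L → ∃ L' : List (Tower X), Ref K L L' ∧
      ∀ W ∈ Ws, ∀ c ∈ L', ∀ j, Pure (c.at' j) W
  | [], _, L, hL => ⟨L, Ref.refl hL, by simp⟩
  | W :: Ws, hWs, L, hL => by
    obtain ⟨L₁, hL₁, hp₁⟩ := compat H (hWs W (by simp)) L hL
    obtain ⟨L₂, hL₂, hp₂⟩ := compat_list H Ws (fun W' h => hWs W' (by simp [h])) L₁ hL₁.valid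
    refine ⟨L₂, hL₁.trans hL₂, ?_⟩
    intro W' hW'
    rcases List.mem_cons.1 hW' with rfl | h
    · exact hL₂.pure hp₁
    · exact hp₂ W' h

/-- Every list can be cut into towers whose levels are all smaller than a given clopen set. -/
lemma make_small [CompactSpace X] (H : Hyp K) {B : Set X} (hB : IsClopen B) (hne : B.Nonempty)
    {L : List (Tower X)} (hL : Valid K L) : ∃ L' : List (Tower X), Ref K L L' ∧
      ∀ c ∈ L', ∀ μ ∈ K, ms μ c.hd < ms μ B := by
  choose C hC hxC hlt using fun x => H.small x B hB hne
  obtain ⟨t, ht⟩ := isCompact_univ.elim_finite_subcover C (fun x => (hC x).isOpen)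
    (fun x _ => Set.mem_iUnion.2 ⟨x, hxC x⟩)
  obtain ⟨L', hL', hp⟩ := compat_list H (t.toList.map C) (by simpa using fun x _ => hC x) L hL
  refine ⟨L', hL', fun c hc μ hμ => ?_⟩
  rcases c.hd.eq_empty_or_nonempty with h | ⟨x, hx⟩
  · rw [h, ms_empty]
    exact H.pos μ hμ B hB hne
  · obtain ⟨y, hy, hxy⟩ := Set.mem_iUnion₂.1 (ht (Set.mem_univ x))
    have := hp (C y) (List.mem_map.2 ⟨y, by simpa using hy, rfl⟩) c hc 0
    exact (ms_mono μ (fun z hz => this.mem hx hz hxy)).trans_lt (hlt y μ hμ)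

/-! ### Absorbing a tower -/

lemma Hd_cons (c : Tower X) (L : List (Tower X)) : Hd (c :: L) = c.hd ∪ Hd L := by
  ext x
  simp [Hd]

/-- If the base of `c` is `K`-equivalent to a clopen subset `C` of the union of the bases of `S`,
then `c` can be cut and its pieces stacked on top of the parts of `S` standing over `C`. -/
lemma absorb (H : Hyp K) : ∀ (S : List (Tower X)) (c : Tower X) (C : Set X), Valid K (c :: S) →
    IsClopen C → C ⊆ Hd S → Eqv K C c.hd → ∃ S' : List (Tower X), Ref K (c :: S) S' ∧
      Hd S' = Hd S ∧ ∀ c' ∈ S', (∃ s ∈ S, Piece c' s ∧ Disjoint c'.hd C) ∨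
        (∃ s ∈ S, ∃ s₁ c₁ : Tower X, c' = s₁.app c₁ ∧ Piece s₁ s ∧ Piece c₁ c)
  | [], c, C, hV, hC, hCS, hE => by
    have hc := hV.1 c (by simp)
    have hC0 : C = ∅ := by
      rw [Set.eq_empty_iff_forall_notMem]
      intro x hx
      obtain ⟨d, hd, -⟩ := hCS hx
      simp at hd
    obtain ⟨S', hS', hp⟩ := Ref.drop H hV
    refine ⟨S', hS', ?_⟩
    have hnil : S' = [] := by
      rw [List.eq_nil_iff_forall_not_mem]
      intro d hd
      obtain ⟨h1, h2⟩ := hp d hd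
      rw [List.mem_singleton] at h1
      subst h1
      have := H.empty_of_eqv (hc.clopen 0) (hC0 ▸ hE.symm')
      exact h2.ne_empty this
    subst hnil
    exact ⟨rfl, by simp⟩
  | s :: S, c, C, hV, hC, hCS, hE => by
    have hc := hV.1 c (by simp)
    have hs := hV.1 s (by simp)
    have hC1 : IsClopen (C ∩ s.hd) := hC.inter (hs.clopen 0)
    obtain ⟨D, hD, hDh, hDE⟩ := hs.cut H hs.pos hC1 Set.inter_subset_right
    obtain ⟨E, hE1, hE2, hE3⟩ := H.sub hC (hc.clopen 0) hC1 Set.inter_subset_left hE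
    obtain ⟨F, hF, hFh, hFE⟩ := hc.cut H hc.pos hE1 hE2
    have hrs := Ref.cut hs hD hDE
    have hrc := Ref.cut hc hF hFE
    have hVS : Valid K S := Valid.append_right (L := [c, s]) hV
    have r1 : Ref K ([c] ++ ([s] ++ S))
        ([c.restr F, c.restr Fᶜ] ++ ([s.restr D, s.restr Dᶜ] ++ S)) :=
      Ref.append hV hrc (Ref.append (Valid.append_right (L := [c]) hV) hrs (Ref.refl hVS))
    have r2 : Ref K ([c.restr F, c.restr Fᶜ] ++ ([s.restr D, s.restr Dᶜ] ++ S))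
        ([s.restr D, c.restr F] ++ ([s.restr Dᶜ] ++ (c.restr Fᶜ :: S))) := by
      refine Ref.perm r1.valid ?_
      simp only [List.cons_append, List.nil_append]
      refine List.Perm.trans (l₂ := c.restr F :: s.restr D :: c.restr Fᶜ :: s.restr Dᶜ :: S) ?_ ?_
      · exact (List.Perm.swap _ _ _).cons _
      · refine (List.Perm.swap _ _ _).trans ?_
        exact ((List.Perm.swap _ _ _).cons _).cons _
    have hV2 := r2.valid
    have hV3 : Valid K (c.restr Fᶜ :: S) := Valid.append_right (L := [s.restr Dᶜ])
      (Valid.append_right (L := [s.restr D, c.restr F]) hV2)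
    have hCm : C ∩ s.hdᶜ ⊆ Hd S := by
      rintro x ⟨hx, hxs⟩
      have := hCS hx
      rw [Hd_cons] at this
      exact this.resolve_left hxs
    have hEm : Eqv K (C ∩ s.hdᶜ) (c.restr Fᶜ).hd := by
      intro μ hμ
      have h1 := ms_add μ (A := C) (hs.clopen 0)
      have h2 := ms_add μ (A := c.hd) hF
      have h3 := hE3 μ hμ
      have h4 := hE μ hμ
      have h5 : c.hd ∩ F = E := hFh
      rw [h5] at h2
      show ms μ (C ∩ (s.at' 0)ᶜ) = ms μ (c.hd ∩ Fᶜ)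
      change ms μ E = ms μ (C ∩ s.at' 0) at h3
      linarith
    obtain ⟨S', hS', hHd, hp⟩ := absorb H S (c.restr Fᶜ) (C ∩ s.hdᶜ) hV3
      (hC.inter (hs.clopen 0).compl) hCm hEm
    have hst : Ref K [s.restr D, c.restr F] [(s.restr D).app (c.restr F)] := by
      refine Ref.stack hV2.append_left ?_
      show Eqv K (s.at' 0 ∩ D) (c.at' 0 ∩ F)
      rw [hDh, hFh]
      exact hE3.symm'
    have r3 := Ref.append hV2 hst (Ref.append (Valid.append_right hV2)
      (Ref.refl (valid_singleton (hrs.valid.1 (s.restr Dᶜ) (by simp)))) hS')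
    refine ⟨_, (r1.trans r2).trans r3, ?_, ?_⟩
    · simp only [List.cons_append, List.nil_append, Hd_cons, hHd]
      have e : ((s.restr D).app (c.restr F)).hd = s.hd ∩ D := by
        have := hs.pos
        simp [Tower.app, Tower.hd, Tower.restr, this]
      rw [e, ← Set.union_assoc]
      congr 1
      exact Set.inter_union_compl _ _
    · intro c' hc'
      simp only [List.cons_append, List.nil_append, List.mem_cons] at hc'
      rcases hc' with rfl | rfl | hc'
      · exact Or.inr ⟨s, by simp, _, _, rfl, ⟨D, rfl⟩, ⟨F, rfl⟩⟩
      · refine Or.inl ⟨s, by simp, ⟨Dᶜ, rfl⟩, ?_⟩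
        rw [Set.disjoint_left]
        rintro x ⟨hx1, hx2⟩ hxC
        have : x ∈ s.at' 0 ∩ D := hDh ▸ ⟨hxC, hx1⟩
        exact hx2 this.2
      · rcases hp c' hc' with ⟨t, ht, h1, h2⟩ | ⟨t, ht, s₁, c₁, h1, h2, h3⟩
        · refine Or.inl ⟨t, by simp [ht], h1, ?_⟩
          rw [Set.disjoint_left] at h2 ⊢
          intro x hx hxC
          refine h2 hx ⟨hxC, fun hxs => ?_⟩
          have hdis : Disjoint s.sup t.sup :=
            (List.pairwise_cons.1 (Valid.append_right (L := [c]) hV).2).1 t ht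
          exact Set.disjoint_left.1 hdis ⟨0, hxs⟩ ⟨0, h1.at_subset 0 hx⟩
        · exact Or.inr ⟨t, by simp [ht], s₁, c₁, h1, h2, h3.trans ⟨_, rfl⟩⟩

lemma absorb_list (H : Hyp K) : ∀ (M S : List (Tower X)), Valid K (M ++ S) → IsClopen (Hd S) →
    (∀ c ∈ M, ∀ μ ∈ K, ms μ c.hd < ms μ (Hd S)) →
    ∃ S' : List (Tower X), Ref K (M ++ S) S' ∧ Hd S' = Hd S
  | [], S, hV, _, _ => ⟨S, Ref.refl hV, rfl⟩
  | c :: M, S, hV, hS, hlt => by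
    have hperm : ((c :: M) ++ S).Perm (M ++ (c :: S)) := by
      simpa using (List.perm_middle (l₁ := M) (l₂ := S) (a := c)).symm
    have r1 := Ref.perm hV hperm
    have hc := hV.1 c (by simp)
    obtain ⟨C, hC, hCS, hE⟩ := H.good _ _ (hc.clopen 0) hS (hlt c (by simp))
    obtain ⟨S₁, r2, hHd, -⟩ := absorb H S c C r1.valid.append_right hC hCS hE
    have r3 := Ref.append r1.valid (Ref.refl r1.valid.append_left) r2
    obtain ⟨S', r4, hHd'⟩ := absorb_list H M S₁ r3.valid (hHd ▸ hS)
      (fun d hd μ hμ => hHd ▸ hlt d (by simp [hd]) μ hμ)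
    exact ⟨S', (r1.trans r3).trans r4, hHd'.trans hHd⟩

/-! ### Shrinking base and top -/

/-- A list can be refined so that all levels, the whole base and the whole top are pure. The base
becomes a small clopen set `C` inside the base of a single tower `c`; the top becomes the top of
the part of `c` standing over a set `D` disjoint from `C` and `K`-equivalent to it. -/
lemma pure_ends [CompactSpace X] [Nonempty X] (H : Hyp K) {L : List (Tower X)} (hL : Valid K L)
    (hsup : Sup L = Set.univ) {W : Set X} (hW : IsClopen W) :
    ∃ L' : List (Tower X), Ref K L L' ∧ (∀ c ∈ L', ∀ j, Pure (c.at' j) W) ∧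
      Pure (Hd L') W ∧ Pure (Lt L') W := by
  obtain ⟨L₁, r1, hp⟩ := compat H hW L hL
  obtain ⟨x₀⟩ := ‹Nonempty X›
  obtain ⟨c, hcL, j₀, hx₀⟩ : x₀ ∈ Sup L₁ := by rw [r1.sup, hsup]; trivial
  have hc := r1.valid.1 c hcL
  obtain ⟨x, hx⟩ : c.hd.Nonempty := hc.nonempty H ⟨x₀, hx₀⟩ hc.pos
  have hB : IsClopen c.hd := hc.clopen 0
  -- The first small set splits the base of `c` into two nonempty parts.
  obtain ⟨C₀, hC₀, hxC₀, hlt₀⟩ := H.small x c.hd hB ⟨x, hx⟩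
  have hB₂ : (c.hd ∩ C₀ᶜ).Nonempty := by
    by_contra hne
    obtain ⟨μ, hμ⟩ := H.ne
    have h1 := hlt₀ μ hμ
    have h2 : c.hd ⊆ C₀ := fun y hy => by
      by_contra hyC
      exact hne ⟨y, hy, hyC⟩
    exact absurd (ms_mono μ h2) (not_le.2 h1)
  obtain ⟨C₁, hC₁, hxC₁, hlt₁⟩ := H.small x _ (hB.inter hC₀.compl) hB₂
  obtain ⟨E, hE, hEh, hEE⟩ := hc.cut H hc.pos (hB.inter (hC₀.inter hC₁)) Set.inter_subset_left
  change c.hd ∩ E = c.hd ∩ (C₀ ∩ C₁) at hEh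
  have hcC : (c.restr E).hd = c.hd ∩ (C₀ ∩ C₁) := hEh
  have hc' := hc.restr_compl hE hEE
  have hCne : (c.restr E).hd.Nonempty := hcC ▸ ⟨x, hx, hxC₀, hxC₁⟩
  have hcE := hc.restr hE hEE
  obtain ⟨D, hD, hDs, hDE⟩ := H.good (c.restr E).hd (c.hd ∩ C₀ᶜ) (hcE.clopen 0)
    (hB.inter hC₀.compl) (fun μ hμ => (ms_mono μ (hcC ▸ fun y hy => hy.2.2)).trans_lt (hlt₁ μ hμ))
  have hDs' : D ⊆ (c.restr Eᶜ).hd := by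
    intro y hy
    refine ⟨(hDs hy).1, fun hyE => ?_⟩
    have : y ∈ c.hd ∩ (C₀ ∩ C₁) := hEh ▸ ⟨(hDs hy).1, hyE⟩
    exact (hDs hy).2 this.2.1
  obtain ⟨F, hF, hFh, hFE⟩ := hc'.cut H hc'.pos hD hDs'
  have k1 := Ref.cut hc hE hEE
  have k2 := Ref.cut hc' hF hFE
  obtain ⟨l₁, l₂, rfl⟩ := List.append_of_mem hcL
  set cC := c.restr E with hcCdef
  set cD := (c.restr Eᶜ).restr F with hcDdef
  set cR := (c.restr Eᶜ).restr Fᶜ with hcRdef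
  have r2 : Ref K (l₁ ++ c :: l₂) ([c] ++ (l₁ ++ l₂)) :=
    Ref.perm r1.valid (by simp)
  have r3 := Ref.append r2.valid k1 (Ref.refl r2.valid.append_right)
  have r4 := Ref.append (L := [cC]) (M := [c.restr Eᶜ] ++ (l₁ ++ l₂)) r3.valid
    (Ref.refl (valid_singleton hcE))
    (Ref.append (Valid.append_right (L := [cC]) r3.valid) k2 (Ref.refl r2.valid.append_right))
  have r5 : Ref K ([cC] ++ ([cD, cR] ++ (l₁ ++ l₂))) ([cD] ++ ((cR :: (l₁ ++ l₂)) ++ [cC])) := by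
    refine Ref.perm r4.valid ?_
    simp only [List.cons_append, List.nil_append]
    refine (List.Perm.swap _ _ _).trans ?_
    refine List.Perm.cons _ ?_
    simpa using (List.perm_append_comm (l₁ := [cC]) (l₂ := cR :: (l₁ ++ l₂)))
  obtain ⟨M, r6, hsm⟩ := make_small H (hcE.clopen 0) hCne
    (Valid.append_left (Valid.append_right (L := [cD]) r5.valid))
  have r7 := Ref.append r5.valid (Ref.refl r5.valid.append_left)
    (Ref.append (Valid.append_right (L := [cD]) r5.valid) r6 (Ref.refl (valid_singleton hcE)))
  have hHdC : Hd [cC] = cC.hd := by simp [Hd]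
  obtain ⟨S, r8, hHdS⟩ := absorb_list H M [cC] (Valid.append_right (L := [cD]) r7.valid)
    (hHdC ▸ hcE.clopen 0) (fun d hd μ hμ => hHdC ▸ hsm d hd μ hμ)
  have r9 := Ref.append r7.valid (Ref.refl r7.valid.append_left) r8
  have hDhd : cD.hd = D := hFh
  obtain ⟨S', r10, hHdS', hS'⟩ := absorb H S cD cC.hd r9.valid (hcE.clopen 0)
    (by rw [hHdS, hHdC]) (by rw [hDhd]; exact hDE.symm')
  have rr : Ref K (l₁ ++ c :: l₂) S' :=
    ((((r2.trans r3).trans r4).trans r5).trans r7).trans (r9.trans r10)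
  have hpc : ∀ j, Pure (c.at' j) W := hp c hcL
  refine ⟨S', r1.trans rr, rr.pure hp, ?_, ?_⟩
  · rw [hHdS', hHdS, hHdC]
    exact (hpc 0).mono Set.inter_subset_left
  · refine (hpc (c.len - 1)).mono ?_
    rintro y ⟨d, hd, hy⟩
    have hdO := r10.valid.1 d hd
    rcases hS' d hd with ⟨s, hs, h1, h2⟩ | ⟨s, hs, s₁, c₁, rfl, h2, h3⟩
    · -- Such a piece stands over the complement of `C`, hence is empty.
      exfalso
      obtain ⟨z, hz⟩ : d.hd.Nonempty := hdO.nonempty H ⟨y, hy⟩ hdO.pos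
      have : z ∈ Hd S' := ⟨d, hd, hz⟩
      rw [hHdS', hHdS, hHdC] at this
      exact Set.disjoint_left.1 h2 hz this
    · have hl : c₁.len = c.len := by
        obtain ⟨G, rfl⟩ := h3
        rfl
      have hpos := hc.pos
      have : y ∈ c₁.at' (c.len - 1) := by
        simp only [Tower.lt, Tower.app] at hy
        rw [if_neg (by omega)] at hy
        rwa [show s₁.len + c₁.len - 1 - s₁.len = c.len - 1 by omega] at hy
      exact (h3.at_subset _ this).1.1

/-! ### Balancing two equivalent clopen sets -/

open Classical in
/-- For a tower compatible with `U` and `V`: the number of levels in `U` minus the number of levels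
in `V`. -/
noncomputable def exc (U V : Set X) (c : Tower X) : ℤ :=
  ∑ j ∈ Finset.range c.len, ((if c.at' j ⊆ U then 1 else 0) - (if c.at' j ⊆ V then 1 else 0))

lemma exc_swap (U V : Set X) (c : Tower X) : exc V U c = - exc U V c := by
  simp only [exc, ← Finset.sum_neg_distrib, neg_sub]

lemma exc_app (U V : Set X) (s c : Tower X) : exc U V (s.app c) = exc U V s + exc U V c := by
  unfold exc
  rw [show (s.app c).len = s.len + c.len from rfl, Finset.sum_range_add]
  congr 1
  · refine Finset.sum_congr rfl fun j hj => ?_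
    have e : (s.app c).at' j = s.at' j := by simp only [Tower.app, if_pos (Finset.mem_range.1 hj)]
    rw [e]
  · refine Finset.sum_congr rfl fun j _ => ?_
    have e : (s.app c).at' (s.len + j) = c.at' j := by simp [Tower.app]
    rw [e]

lemma Pure.subset_iff {A B U : Set X} (h : Pure B U) (hAB : A ⊆ B) (hA : A.Nonempty) :
    A ⊆ U ↔ B ⊆ U := by
  refine ⟨fun hAU => ?_, hAB.trans⟩
  obtain ⟨x, hx⟩ := hA
  exact fun y hy => h.mem (hAB hx) hy (hAU hx)

lemma exc_piece {U V : Set X} {c' c : Tower X} (h : Piece c' c)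
    (hne : ∀ j < c.len, (c'.at' j).Nonempty) (hU : ∀ j, Pure (c.at' j) U)
    (hV : ∀ j, Pure (c.at' j) V) : exc U V c' = exc U V c := by
  have hl : c'.len = c.len := by
    obtain ⟨D, rfl⟩ := h
    rfl
  unfold exc
  rw [hl]
  refine Finset.sum_congr rfl fun j hj => ?_
  have h1 := hne j (Finset.mem_range.1 hj)
  have e1 := propext ((hU j).subset_iff (h.at_subset j) h1)
  have e2 := propext ((hV j).subset_iff (h.at_subset j) h1)
  congr! 2

lemma Tower.Ok.isClopen_sup {c : Tower X} (h : c.Ok K) : IsClopen c.sup := by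
  have : c.sup = ⋃ j ∈ Finset.range c.len, c.at' j := by
    ext x
    simp only [Tower.sup, Set.mem_ofPred_eq, Set.mem_iUnion, Finset.mem_range, exists_prop]
    exact ⟨fun ⟨j, hj⟩ => ⟨j, h.lt_len hj, hj⟩, fun ⟨j, _, hj⟩ => ⟨j, hj⟩⟩
  rw [this]
  exact Set.Finite.isClopen_biUnion (Finset.finite_toSet _) (fun k _ => h.clopen k)

open Classical in
lemma ms_sup_inter {c : Tower X} (h : c.Ok K) {U : Set X} (hUc : IsClopen U)
    (hU : ∀ j, Pure (c.at' j) U) {μ : ProbabilityMeasure X} (hμ : μ ∈ K) :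
    ms μ (c.sup ∩ U) =
      (∑ j ∈ Finset.range c.len, (if c.at' j ⊆ U then (1 : ℝ) else 0)) * ms μ c.hd := by
  have e : c.sup ∩ U = ⋃ j ∈ Finset.range c.len, (c.at' j ∩ U) := by
    ext x
    simp only [Tower.sup, Set.mem_ofPred_eq, Set.mem_iUnion, Finset.mem_range, exists_prop,
      Set.mem_inter_iff]
    exact ⟨fun ⟨⟨j, hj⟩, hx⟩ => ⟨j, h.lt_len hj, hj, hx⟩, fun ⟨j, _, hj, hx⟩ => ⟨⟨j, hj⟩, hx⟩⟩
  have e2 : ms μ (c.sup ∩ U) = ∑ j ∈ Finset.range c.len, ms μ (c.at' j ∩ U) := by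
    rw [e]
    refine measureReal_biUnion_finset ?_ ?_
    · intro i _ j _ hij
      rw [Function.onFun, Set.disjoint_left]
      exact fun x hx hx' => hij (h.disj i j x hx.1 hx'.1)
    · exact fun j _ => ((h.clopen j).inter hUc).isOpen.measurableSet
  rw [e2, Finset.sum_mul]
  refine Finset.sum_congr rfl fun j hj => ?_
  have hE := h.eqv j (Finset.mem_range.1 hj) μ hμ
  split_ifs with hs
  · rw [Set.inter_eq_self_of_subset_left hs, hE, one_mul]
  · rw [((hU j).resolve_left hs).inter_eq, ms_empty, zero_mul]

lemma ms_sup_sub {c : Tower X} (h : c.Ok K) {U V : Set X} (hUc : IsClopen U) (hVc : IsClopen V)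
    (hU : ∀ j, Pure (c.at' j) U) (hV : ∀ j, Pure (c.at' j) V) {μ : ProbabilityMeasure X}
    (hμ : μ ∈ K) : ms μ (c.sup ∩ U) - ms μ (c.sup ∩ V) = (exc U V c : ℝ) * ms μ c.hd := by
  rw [ms_sup_inter h hUc hU hμ, ms_sup_inter h hVc hV hμ, ← sub_mul, ← Finset.sum_sub_distrib]
  congr 1
  unfold exc
  push_cast
  rfl

lemma Sup_cons (c : Tower X) (L : List (Tower X)) : Sup (c :: L) = c.sup ∪ Sup L := by
  ext x
  simp [Sup]

lemma disjoint_Sup {c : Tower X} {L : List (Tower X)} (hV : Valid K (c :: L)) :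
    Disjoint c.sup (Sup L) := by
  rw [Set.disjoint_left]
  rintro x hx ⟨d, hd, hxd⟩
  exact Set.disjoint_left.1 ((List.pairwise_cons.1 hV.2).1 d hd) hx hxd

lemma isClopen_Sup : ∀ {L : List (Tower X)}, Valid K L → IsClopen (Sup L)
  | [], _ => by
    have : Sup ([] : List (Tower X)) = ∅ := by ext; simp [Sup]
    rw [this]
    exact isClopen_empty
  | c :: L, hV => by
    rw [Sup_cons]
    exact (hV.1 c (by simp)).isClopen_sup.union (isClopen_Sup (Valid.append_right (L := [c]) hV))

lemma isClopen_Hd : ∀ {L : List (Tower X)}, Valid K L → IsClopen (Hd L)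
  | [], _ => by
    have : Hd ([] : List (Tower X)) = ∅ := by ext; simp [Hd]
    rw [this]
    exact isClopen_empty
  | c :: L, hV => by
    rw [Hd_cons]
    exact ((hV.1 c (by simp)).clopen 0).union (isClopen_Hd (Valid.append_right (L := [c]) hV))

lemma ms_Hd (μ : ProbabilityMeasure X) : ∀ {L : List (Tower X)}, Valid K L →
    ms μ (Hd L) = (L.map (fun c => ms μ c.hd)).sum
  | [], _ => by
    have : Hd ([] : List (Tower X)) = ∅ := by ext; simp [Hd]
    simp [this]
  | c :: L, hV => by
    have hV' : Valid K L := Valid.append_right (L := [c]) hV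
    rw [Hd_cons, ms_union μ (isClopen_Hd hV'), ms_Hd μ hV']
    · simp
    · refine (disjoint_Sup hV).mono (show c.hd ⊆ c.sup from fun x hx => ⟨0, hx⟩)
        (show Hd L ⊆ Sup L from ?_)
      rintro x ⟨d, hd, hx⟩
      exact ⟨d, hd, 0, hx⟩

lemma sum_exc {U V : Set X} (hUc : IsClopen U) (hVc : IsClopen V) {μ : ProbabilityMeasure X}
    (hμ : μ ∈ K) : ∀ {L : List (Tower X)}, Valid K L → (∀ c ∈ L, ∀ j, Pure (c.at' j) U) →
    (∀ c ∈ L, ∀ j, Pure (c.at' j) V) →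
    (L.map (fun c => (exc U V c : ℝ) * ms μ c.hd)).sum = ms μ (Sup L ∩ U) - ms μ (Sup L ∩ V)
  | [], _, _, _ => by
    have : Sup ([] : List (Tower X)) = ∅ := by ext; simp [Sup]
    simp [this]
  | c :: L, hVal, hU, hV => by
    have hV' : Valid K L := Valid.append_right (L := [c]) hVal
    have ih := sum_exc hUc hVc hμ hV' (fun d hd => hU d (by simp [hd]))
      (fun d hd => hV d (by simp [hd]))
    have h1 := ms_sup_sub (hVal.1 c (by simp)) hUc hVc (hU c (by simp)) (hV c (by simp)) hμ
    have hd := disjoint_Sup hVal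
    rw [List.map_cons, List.sum_cons, ih, ← h1, Sup_cons, Set.union_inter_distrib_right,
      Set.union_inter_distrib_right,
      ms_union μ ((isClopen_Sup hV').inter hUc) (hd.mono Set.inter_subset_left Set.inter_subset_left),
      ms_union μ ((isClopen_Sup hV').inter hVc) (hd.mono Set.inter_subset_left Set.inter_subset_left)]
    ring

/-- The invariant maintained while balancing `U` and `V`. -/
structure Inv (K : Set (ProbabilityMeasure X)) (U V : Set X) (L : List (Tower X)) : Prop where
  valid : Valid K L
  sup : Sup L = Set.univ
  pureU : ∀ c ∈ L, ∀ j, Pure (c.at' j) U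
  pureV : ∀ c ∈ L, ∀ j, Pure (c.at' j) V
  ne : ∀ c ∈ L, c.hd.Nonempty

lemma Inv.swap {U V : Set X} {L : List (Tower X)} (h : Inv K U V L) : Inv K V U L :=
  ⟨h.valid, h.sup, h.pureV, h.pureU, h.ne⟩

lemma list_sum_split {α : Type*} (f : α → ℤ) (a : α → ℝ) (p : ℤ) (R : List α) :
    (R.map (fun d => ((if f d < 0 then p + f d else f d : ℤ) : ℝ) * a d)).sum =
      (R.map (fun d => (f d : ℝ) * a d)).sum +
        p * ((R.filter (fun d => f d < 0)).map a).sum := by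
  induction R with
  | nil => simp
  | cons d R ih =>
    by_cases h : f d < 0
    · simp only [List.map_cons, List.sum_cons, ih, List.filter_cons, h, decide_true, if_true]
      push_cast
      ring
    · simp only [List.map_cons, List.sum_cons, ih, List.filter_cons, h, decide_false, if_false]
      simp only [Bool.false_eq_true, if_false]
      ring

/-- The comparison behind each balancing step: if `c` has the largest possible excess `p`, its base
is `K`-equivalent to a clopen subset of the union of the bases of the towers of negative excess.
Writing `w d` for `p + exc d` or `exc d` according to the sign of `exc d`, the quantity
`p * (μ (Hd N) - μ c.hd)` is the sum of the nonnegative terms `w d * μ d.hd`, so by full support it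
is either positive for all `μ ∈ K` or zero for all `μ ∈ K`. -/
lemma exists_target (H : Hyp K) {U V : Set X} (hUc : IsClopen U) (hVc : IsClopen V)
    (hE : Eqv K U V) {p q : ℤ} (hqp : q ≤ p) (hp : 0 < p) {c : Tower X} {R : List (Tower X)}
    (hI : Inv K U V (c :: R)) (hc : exc U V c = p) (hb : ∀ d ∈ R, -q ≤ exc U V d) :
    ∃ C : Set X, IsClopen C ∧ C ⊆ Hd (R.filter (fun d => exc U V d < 0)) ∧ Eqv K C c.hd := by
  set N := R.filter (fun d => exc U V d < 0) with hN
  have hVR : Valid K R := Valid.append_right (L := [c]) hI.valid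
  have hVN : Valid K N :=
    ⟨fun d hd => hVR.1 d (List.mem_filter.1 hd).1, hVR.2.filter _⟩
  have hp' : (0 : ℝ) < p := by exact_mod_cast hp
  let w : Tower X → ℤ := fun d => if exc U V d < 0 then p + exc U V d else exc U V d
  have hw : ∀ d ∈ R, 0 ≤ w d := by
    intro d hd
    have := hb d hd
    simp only [w]
    split_ifs <;> omega
  have key : ∀ μ ∈ K, (R.map (fun d => (w d : ℝ) * ms μ d.hd)).sum =
      p * (ms μ (Hd N) - ms μ c.hd) := by
    intro μ hμ
    have h1 := list_sum_split (exc U V) (fun d => ms μ d.hd) p R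
    have h2 := sum_exc hUc hVc hμ hI.valid hI.pureU hI.pureV
    rw [hI.sup, Set.univ_inter, Set.univ_inter, hE μ hμ, sub_self, List.map_cons, List.sum_cons,
      hc] at h2
    rw [ms_Hd μ hVN]
    change (R.map (fun d => (w d : ℝ) * ms μ d.hd)).sum = _ at h1
    rw [h1]
    linarith
  by_cases hex : ∃ d ∈ R, 0 < w d
  · obtain ⟨d, hd, hwd⟩ := hex
    refine H.good _ _ ((hI.valid.1 c (by simp)).clopen 0) (isClopen_Hd hVN) (fun μ hμ => ?_)
    have h1 := key μ hμ
    have h2 : (w d : ℝ) * ms μ d.hd ≤ (R.map (fun d => (w d : ℝ) * ms μ d.hd)).sum := by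
      refine List.single_le_sum ?_ _ (List.mem_map.2 ⟨d, hd, rfl⟩)
      intro y hy
      obtain ⟨e, he, rfl⟩ := List.mem_map.1 hy
      exact mul_nonneg (by exact_mod_cast hw e he) (ms_nonneg μ _)
    have h3 : 0 < (w d : ℝ) * ms μ d.hd :=
      mul_pos (by exact_mod_cast hwd) (H.pos μ hμ _ ((hVR.1 d hd).clopen 0)
        (hI.ne d (by simp [hd])))
    have h4 : 0 < ms μ (Hd N) - ms μ c.hd := by
      by_contra hcon
      nlinarith
    exact sub_pos.1 h4
  · push Not at hex
    refine ⟨Hd N, isClopen_Hd hVN, subset_rfl, fun μ hμ => ?_⟩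
    have h1 := key μ hμ
    have h2 : (R.map (fun d => (w d : ℝ) * ms μ d.hd)).sum = 0 := by
      refine List.sum_eq_zero ?_
      intro y hy
      obtain ⟨e, he, rfl⟩ := List.mem_map.1 hy
      have : w e = 0 := le_antisymm (hex e he) (hw e he)
      simp [this]
    rw [h2] at h1
    have := (mul_eq_zero.1 h1.symm).resolve_left hp'.ne'
    linarith

/-- Stacking a tower of maximal excess `p` on towers of negative excess lowers the number of towers
of excess `p`; repeating this, the maximal excess drops below `p`. -/
lemma phase (H : Hyp K) {U V : Set X} (hUc : IsClopen U) (hVc : IsClopen V)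
    (hE : Eqv K U V) {p q : ℤ} (hqp : q ≤ p) (hp : 0 < p) (n : ℕ) :
    ∀ L : List (Tower X), Inv K U V L → (∀ c ∈ L, -q ≤ exc U V c ∧ exc U V c ≤ p) →
      L.countP (fun c => exc U V c = p) ≤ n →
      ∃ L' : List (Tower X), Ref K L L' ∧ Inv K U V L' ∧
        ∀ c ∈ L', -q ≤ exc U V c ∧ exc U V c ≤ p - 1 := by
  induction n with
  | zero =>
    intro L hI hb hn
    refine ⟨L, Ref.refl hI.valid, hI, fun c hc => ⟨(hb c hc).1, ?_⟩⟩
    have h0 := List.countP_eq_zero.1 (Nat.le_zero.1 hn) c hc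
    have := (hb c hc).2
    simp only [decide_eq_true_eq] at h0
    omega
  | succ n ih =>
    intro L hI hb hn
    by_cases hex : ∃ c ∈ L, exc U V c = p
    swap
    · push Not at hex
      refine ⟨L, Ref.refl hI.valid, hI, fun c hc => ⟨(hb c hc).1, ?_⟩⟩
      have h0 := hex c hc
      have := (hb c hc).2
      omega
    obtain ⟨c, hcL, hc⟩ := hex
    obtain ⟨l₁, l₂, rfl⟩ := List.append_of_mem hcL
    have hperm : (l₁ ++ c :: l₂).Perm (c :: (l₁ ++ l₂)) := List.perm_middle
    rw [hperm.countP_eq, List.countP_cons] at hn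
    set R := l₁ ++ l₂ with hR
    have r1 := Ref.perm hI.valid hperm
    have hI1 : Inv K U V (c :: R) := ⟨r1.valid, r1.sup.trans hI.sup, r1.pure hI.pureU,
      r1.pure hI.pureV, fun d hd => hI.ne d (hperm.mem_iff.2 hd)⟩
    have hb1 : ∀ d ∈ c :: R, -q ≤ exc U V d ∧ exc U V d ≤ p :=
      fun d hd => hb d (hperm.mem_iff.2 hd)
    obtain ⟨C, hC, hCN, hCE⟩ := exists_target H hUc hVc hE hqp hp hI1 hc
      (fun d hd => (hb1 d (by simp [hd])).1)
    set N := R.filter (fun d => exc U V d < 0) with hN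
    set M := R.filter (fun d => !decide (exc U V d < 0)) with hM
    have r2 : Ref K (c :: R) ((c :: N) ++ M) := by
      refine Ref.perm r1.valid ?_
      rw [List.cons_append]
      exact List.Perm.cons _ (List.filter_append_perm _ R).symm
    obtain ⟨S, r3, -, hS⟩ := absorb H N c C r2.valid.append_left hC hCN hCE
    obtain ⟨S', r4, hS'⟩ := Ref.drop H r3.valid
    have r5 := Ref.append r2.valid (r3.trans r4) (Ref.refl r2.valid.append_right)
    have r6 := (r1.trans r2).trans r5
    have hMR : ∀ d ∈ M, d ∈ R := fun d hd => (List.mem_filter.1 hd).1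
    have hI2 : Inv K U V (S' ++ M) := by
      refine ⟨r5.valid, r6.sup.trans hI.sup, r6.pure hI.pureU, r6.pure hI.pureV, ?_⟩
      intro d hd
      rcases List.mem_append.1 hd with hd | hd
      · exact (hS' d hd).2
      · exact hI1.ne d (by simp [hMR d hd])
    have hbS : ∀ d ∈ S', -q ≤ exc U V d ∧ exc U V d ≤ p - 1 := by
      intro d hd
      have hdO := r4.valid.1 d hd
      have hdne : ∀ j < d.len, (d.at' j).Nonempty := fun j hj => hdO.nonempty H (hS' d hd).2 hj
      have hNb : ∀ s ∈ N, s ∈ c :: R ∧ -q ≤ exc U V s ∧ exc U V s < 0 := by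
        intro s hs
        obtain ⟨h1, h2⟩ := List.mem_filter.1 hs
        have h3 : s ∈ c :: R := by simp [h1]
        exact ⟨h3, (hb1 s h3).1, by simpa using h2⟩
      rcases hS d (hS' d hd).1 with ⟨s, hs, h1, -⟩ | ⟨s, hs, s₁, c₁, rfl, h2, h3⟩
      · obtain ⟨hsR, hs1, hs2⟩ := hNb s hs
        have hl : d.len = s.len := by
          obtain ⟨D, rfl⟩ := h1
          rfl
        rw [exc_piece h1 (fun j hj => hdne j (hl ▸ hj)) (hI1.pureU s hsR) (hI1.pureV s hsR)]
        omega
      · obtain ⟨hsR, hs1, hs2⟩ := hNb s hs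
        have hl : s₁.len = s.len := by
          obtain ⟨D, rfl⟩ := h2
          rfl
        have hl' : c₁.len = c.len := by
          obtain ⟨D, rfl⟩ := h3
          rfl
        have e1 : exc U V s₁ = exc U V s := by
          refine exc_piece h2 (fun j hj => ?_) (hI1.pureU s hsR) (hI1.pureV s hsR)
          have := hdne j (by simp only [Tower.app]; omega)
          simpa only [Tower.app, hl, if_pos hj] using this
        have e2 : exc U V c₁ = exc U V c := by
          refine exc_piece h3 (fun j hj => ?_) (hI1.pureU c (by simp)) (hI1.pureV c (by simp))
          have := hdne (s₁.len + j) (by simp only [Tower.app]; omega)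
          simpa [Tower.app] using this
        rw [exc_app, e1, e2, hc]
        omega
    obtain ⟨L', r7, hI', hL'⟩ := ih (S' ++ M) hI2 (by
      intro d hd
      rcases List.mem_append.1 hd with hd | hd
      · have := hbS d hd
        omega
      · exact hb1 d (by simp [hMR d hd])) (by
      rw [List.countP_append]
      have h1 : S'.countP (fun c => exc U V c = p) = 0 := by
        refine List.countP_eq_zero.2 (fun d hd => ?_)
        have := hbS d hd
        simp only [decide_eq_true_eq]
        omega
      have h2 : M.countP (fun c => exc U V c = p) ≤ R.countP (fun c => exc U V c = p) :=
        List.filter_sublist.countP_le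
      simp only [hc, decide_true, if_true] at hn
      omega)
    exact ⟨L', r6.trans r7, hI', hL'⟩

lemma balance_aux (H : Hyp K) {U V : Set X} (hUc : IsClopen U) (hVc : IsClopen V)
    (hE : Eqv K U V) (p : ℕ) : ∀ L : List (Tower X), Inv K U V L →
      (∀ c ∈ L, -(p : ℤ) ≤ exc U V c ∧ exc U V c ≤ p) →
      ∃ L' : List (Tower X), Ref K L L' ∧ Inv K U V L' ∧ ∀ c ∈ L', exc U V c = 0 := by
  induction p with
  | zero =>
    intro L hI hb
    refine ⟨L, Ref.refl hI.valid, hI, fun c hc => ?_⟩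
    have := hb c hc
    omega
  | succ p ih =>
    intro L hI hb
    obtain ⟨L₁, r1, hI1, hb1⟩ := phase H hUc hVc hE (p := (p + 1 : ℕ)) (q := (p + 1 : ℕ)) le_rfl
      (by omega) _ L hI hb le_rfl
    -- The lower bound is improved by exchanging the roles of `U` and `V`.
    obtain ⟨L₂, r2, hI2, hb2⟩ := phase H hVc hUc hE.symm' (p := (p + 1 : ℕ)) (q := (p : ℕ))
      (by omega) (by omega) _ L₁ hI1.swap (fun c hc => by
        have := hb1 c hc
        rw [exc_swap]
        push_cast at this ⊢
        omega) le_rfl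
    obtain ⟨L₃, r3, hI3, hb3⟩ := ih L₂ hI2.swap (fun c hc => by
      have := hb2 c hc
      rw [exc_swap] at this
      push_cast at this ⊢
      omega)
    exact ⟨L₃, (r1.trans r2).trans r3, hI3, hb3⟩

lemma balance (H : Hyp K) {U V : Set X} (hUc : IsClopen U) (hVc : IsClopen V)
    (hE : Eqv K U V) {L : List (Tower X)} (hL : Valid K L) (hsup : Sup L = Set.univ) :
    ∃ L' : List (Tower X), Ref K L L' ∧ Inv K U V L' ∧ ∀ c ∈ L', exc U V c = 0 := by
  obtain ⟨L₁, r1, hp1⟩ := compat H hUc L hL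
  obtain ⟨L₂, r2, hp2⟩ := compat H hVc L₁ r1.valid
  obtain ⟨L₃, r3, hp3⟩ := Ref.drop H r2.valid
  have hI : Inv K U V L₃ := ⟨r3.valid, ((r1.trans r2).trans r3).sup.trans hsup,
    r3.pure (r2.pure hp1), r3.pure hp2, fun c hc => (hp3 c hc).2⟩
  obtain ⟨L₄, r4, hI4, hb⟩ := balance_aux H hUc hVc hE (L₃.map (fun c => (exc U V c).natAbs)).sum
    L₃ hI (fun c hc => by
      have : (exc U V c).natAbs ≤ (L₃.map (fun c => (exc U V c).natAbs)).sum :=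
        List.single_le_sum (fun _ _ => Nat.zero_le _) _ (List.mem_map.2 ⟨c, hc, rfl⟩)
      omega)
  exact ⟨L₄, ((r1.trans r2).trans r3).trans r4, hI4, hb⟩


/-! ### The step relation of a list of towers -/

/-- `y` is a possible image of `x`: it lies one level above `x`, or `x` lies in the top and `y` in
the base of the list. -/
def Step (L : List (Tower X)) (x y : X) : Prop := Adj L x y ∨ (x ∈ Lt L ∧ y ∈ Hd L)

lemma Ref.step {L L' : List (Tower X)} (h : Ref K L L') {x y : X} (hxy : Step L' x y) :
    Step L x y := by
  rcases hxy with h1 | ⟨h1, h2⟩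
  · exact h.adj x y h1
  · exact Or.inr ⟨h.lt h1, h.hd h2⟩

lemma Valid.pos_unique {L : List (Tower X)} (hL : Valid K L) {c c' : Tower X} (hc : c ∈ L)
    (hc' : c' ∈ L) {x : X} {i j : ℕ} (hx : x ∈ c.at' i) (hx' : x ∈ c'.at' j) : c = c' ∧ i = j := by
  have h : c = c' := by
    by_contra hne
    have : Std.Symm (fun c c' : Tower X => Disjoint c.sup c'.sup) := ⟨fun _ _ h => h.symm⟩
    exact Set.disjoint_left.1 (hL.2.forall hc hc' hne) ⟨i, hx⟩ ⟨j, hx'⟩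
  subst h
  exact ⟨rfl, (hL.1 c hc).disj i j x hx hx'⟩

section step

variable {L : List (Tower X)} {c : Tower X} {x y : X} {j : ℕ}

lemma Step.mid (hL : Valid K L) (hc : c ∈ L) (hx : x ∈ c.at' j) (hj : j + 1 < c.len)
    (h : Step L x y) : y ∈ c.at' (j + 1) := by
  rcases h with ⟨d, hd, i, h1, h2⟩ | ⟨⟨d, hd, h1⟩, -⟩
  · obtain ⟨rfl, rfl⟩ := hL.pos_unique hc hd hx h1
    exact h2
  · obtain ⟨rfl, rfl⟩ := hL.pos_unique hc hd hx h1
    omega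

lemma Step.top (hL : Valid K L) (hc : c ∈ L) (hx : x ∈ c.at' j) (hj : ¬ j + 1 < c.len)
    (h : Step L x y) : y ∈ Hd L := by
  rcases h with ⟨d, hd, i, h1, h2⟩ | ⟨-, h⟩
  · obtain ⟨rfl, rfl⟩ := hL.pos_unique hc hd hx h1
    exact (hj ((hL.1 c hc).lt_len h2)).elim
  · exact h

lemma Step.back_mid (hL : Valid K L) (hc : c ∈ L) (hy : y ∈ c.at' (j + 1))
    (h : Step L x y) : x ∈ c.at' j := by
  rcases h with ⟨d, hd, i, h1, h2⟩ | ⟨-, ⟨d, hd, h1⟩⟩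
  · obtain ⟨rfl, h⟩ := hL.pos_unique hc hd hy h2
    obtain rfl : j = i := by omega
    exact h1
  · obtain ⟨-, h⟩ := hL.pos_unique hc hd hy h1
    omega

lemma Step.back_bot (hL : Valid K L) (hc : c ∈ L) (hy : y ∈ c.at' 0)
    (h : Step L x y) : x ∈ Lt L := by
  rcases h with ⟨d, hd, i, h1, h2⟩ | ⟨h, -⟩
  · obtain ⟨-, h⟩ := hL.pos_unique hc hd hy h2
    omega
  · exact h

lemma mem_Lt (hL : Valid K L) (hc : c ∈ L) (hx : x ∈ c.at' j) (hj : ¬ j + 1 < c.len) :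
    x ∈ Lt L := by
  refine ⟨c, hc, ?_⟩
  have := (hL.1 c hc).lt_len hx
  obtain rfl : j = c.len - 1 := by omega
  exact hx

lemma exists_pos (hs : Sup L = Set.univ) (x : X) : ∃ c ∈ L, ∃ j, x ∈ c.at' j := by
  have : x ∈ Sup L := hs ▸ Set.mem_univ x
  exact this

lemma exists_step (H : Hyp K) (hL : Valid K L) (hs : Sup L = Set.univ) (x : X) :
    ∃ y, Step L x y := by
  obtain ⟨c, hc, j, hx⟩ := exists_pos hs x
  by_cases hj : j + 1 < c.len
  · obtain ⟨y, hy⟩ := (hL.1 c hc).nonempty H ⟨x, hx⟩ hj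
    exact ⟨y, Or.inl ⟨c, hc, j, hx, hy⟩⟩
  · obtain ⟨y, hy⟩ := (hL.1 c hc).nonempty H ⟨x, hx⟩ (hL.1 c hc).pos
    exact ⟨y, Or.inr ⟨mem_Lt hL hc hx hj, c, hc, hy⟩⟩

lemma exists_step_back (H : Hyp K) (hL : Valid K L) (hs : Sup L = Set.univ) (y : X) :
    ∃ x, Step L x y := by
  obtain ⟨c, hc, j, hy⟩ := exists_pos hs y
  rcases j with _ | j
  · have := (hL.1 c hc).pos
    obtain ⟨x, hx⟩ := (hL.1 c hc).nonempty H ⟨y, hy⟩ (j := c.len - 1) (by omega)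
    exact ⟨x, Or.inr ⟨⟨c, hc, hx⟩, c, hc, hy⟩⟩
  · have := (hL.1 c hc).lt_len hy
    obtain ⟨x, hx⟩ := (hL.1 c hc).nonempty H ⟨y, hy⟩ (j := j) (by omega)
    exact ⟨x, Or.inl ⟨c, hc, j, hx, hy⟩⟩

lemma isOpen_of_inv (hL : Valid K L) (hs : Sup L = Set.univ) {S : Set X}
    (h : ∀ c ∈ L, ∀ j, ∀ x ∈ c.at' j, ∀ x' ∈ c.at' j, x ∈ S → x' ∈ S) : IsOpen S := by
  refine isOpen_iff_mem_nhds.2 (fun x hx => ?_)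
  obtain ⟨c, hc, j, hxc⟩ := exists_pos hs x
  exact Filter.mem_of_superset (((hL.1 c hc).clopen j).isOpen.mem_nhds hxc)
    (fun x' hx' => h c hc j x hxc x' hx' hx)

lemma isClopen_of_inv (hL : Valid K L) (hs : Sup L = Set.univ) {S : Set X}
    (h : ∀ c ∈ L, ∀ j, ∀ x ∈ c.at' j, ∀ x' ∈ c.at' j, x ∈ S → x' ∈ S) : IsClopen S :=
  ⟨⟨isOpen_of_inv hL hs (fun c hc j x hx x' hx' hxS hxS' => hxS (h c hc j x' hx' x hx hxS'))⟩,
    isOpen_of_inv hL hs h⟩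

lemma isClopen_step_left (hL : Valid K L) (hs : Sup L = Set.univ) (y : X) :
    IsClopen {x | Step L x y} := by
  refine isClopen_of_inv hL hs (fun c hc j x hx x' hx' h => ?_)
  by_cases hj : j + 1 < c.len
  · exact Or.inl ⟨c, hc, j, hx', Step.mid hL hc hx hj h⟩
  · exact Or.inr ⟨mem_Lt hL hc hx' hj, Step.top hL hc hx hj h⟩

lemma isClopen_step_right (hL : Valid K L) (hs : Sup L = Set.univ) (x : X) :
    IsClopen {y | Step L x y} := by
  refine isClopen_of_inv hL hs (fun c hc j y hy y' hy' h => ?_)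
  rcases j with _ | j
  · exact Or.inr ⟨Step.back_bot hL hc hy h, c, hc, hy'⟩
  · exact Or.inl ⟨c, hc, j, Step.back_mid hL hc hy h, hy'⟩

variable {W : Set X} {x' y' : X}

lemma Step.det (hL : Valid K L) (hs : Sup L = Set.univ) (hp : ∀ c ∈ L, ∀ j, Pure (c.at' j) W)
    (hH : Pure (Hd L) W) (h : Step L x y) (h' : Step L x y') (hy : y ∈ W) : y' ∈ W := by
  obtain ⟨c, hc, j, hx⟩ := exists_pos hs x
  by_cases hj : j + 1 < c.len
  · exact (hp c hc (j + 1)).mem (h.mid hL hc hx hj) (h'.mid hL hc hx hj) hy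
  · exact hH.mem (h.top hL hc hx hj) (h'.top hL hc hx hj) hy

lemma Step.det_back (hL : Valid K L) (hs : Sup L = Set.univ)
    (hp : ∀ c ∈ L, ∀ j, Pure (c.at' j) W) (hH : Pure (Lt L) W) (h : Step L x y)
    (h' : Step L x' y) (hx : x ∈ W) : x' ∈ W := by
  obtain ⟨c, hc, j, hy⟩ := exists_pos hs y
  rcases j with _ | j
  · exact hH.mem (h.back_bot hL hc hy) (h'.back_bot hL hc hy) hx
  · exact (hp c hc j).mem (h.back_mid hL hc hy) (h'.back_mid hL hc hy) hx

end step

/-! ### The homeomorphism as a limit of step relations -/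

lemma exists_mem_all [CompactSpace X] {R : ℕ → X → X → Prop}
    (hanti : ∀ n x y, R (n + 1) x y → R n x y) (hex : ∀ n x, ∃ y, R n x y)
    (hcl : ∀ n x, IsClosed {y | R n x y}) (x : X) : ∃ y, ∀ n, R n x y := by
  obtain ⟨y, hy⟩ := IsCompact.nonempty_iInter_of_sequence_nonempty_isCompact_isClosed
    (fun n => {y | R n x y}) (fun n y hy => hanti n x y hy) (fun n => hex n x)
    (hcl 0 x).isCompact (fun n => hcl n x)
  exact ⟨y, fun n => Set.mem_iInter.1 hy n⟩

lemma eq_of_clopen [CompactSpace X] [T2Space X] [TotallyDisconnectedSpace X] {x y : X}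
    (h : ∀ W : Set X, IsClopen W → x ∈ W → y ∈ W) : x = y := by
  by_contra hne
  obtain ⟨W, hW, hx, hWs⟩ := compact_exists_isClopen_in_isOpen
    (isOpen_compl_singleton (x := y)) hne
  exact hWs (h W hW hx) rfl

/-- A decreasing sequence of relations with clopen sections, total on both sides, which decides
membership in each clopen set at some stage, shrinks to the graph of a homeomorphism. -/
lemma exists_homeo [CompactSpace X] [T2Space X] [TotallyDisconnectedSpace X]
    {R : ℕ → X → X → Prop} (hanti : ∀ n x y, R (n + 1) x y → R n x y)
    (hex : ∀ n x, ∃ y, R n x y) (hex' : ∀ n y, ∃ x, R n x y)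
    (hl : ∀ n y, IsClopen {x | R n x y}) (hr : ∀ n x, IsClopen {y | R n x y})
    (hdet : ∀ W : Set X, IsClopen W → ∃ n, (∀ x y y', R n x y → R n x y' → y ∈ W → y' ∈ W) ∧
      ∀ x x' y, R n x y → R n x' y → x ∈ W → x' ∈ W) :
    ∃ g : X ≃ₜ X, ∀ n x, R n x (g x) := by
  choose f hf using exists_mem_all hanti hex (fun n x => (hr n x).isClosed)
  choose f' hf' using exists_mem_all (R := fun n y x => R n x y) (fun n y x h => hanti n x y h)
    hex' (fun n y => (hl n y).isClosed)
  let e : X ≃ X := ⟨f, f',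
    fun x => eq_of_clopen fun W hW hx => by
      obtain ⟨n, -, hn⟩ := hdet W hW
      exact hn _ _ _ (hf' (f x) n) (hf x n) hx,
    fun y => eq_of_clopen fun W hW hy => by
      obtain ⟨n, hn, -⟩ := hdet W hW
      exact hn _ _ _ (hf (f' y) n) (hf' y n) hy⟩
  have hc : Continuous e := by
    refine isTopologicalBasis_isClopen.continuous_iff.2 (fun W hW => ?_)
    obtain ⟨n, hn, -⟩ := hdet W hW
    have : e ⁻¹' W = ⋃ y ∈ W, {x | R n x y} := by
      ext x
      simp only [Set.mem_preimage, Set.mem_iUnion, exists_prop, Set.mem_ofPred_eq]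
      exact ⟨fun hx => ⟨_, hx, hf x n⟩, fun ⟨y, hy, hxy⟩ => hn _ _ _ hxy (hf x n) hy⟩
    rw [this]
    exact isOpen_biUnion (fun y _ => (hl n y).isOpen)
  exact ⟨hc.homeoOfEquivCompactToT2, fun n x => hf x n⟩

/-! ### Invariance of the measures -/

lemma measure_eq_of_eqv {A B : Set X} (h : Eqv K A B) {μ : ProbabilityMeasure X} (hμ : μ ∈ K) :
    (μ : Measure X) A = (μ : Measure X) B :=
  (ENNReal.toReal_eq_toReal_iff' (measure_ne_top _ _) (measure_ne_top _ _)).1 (h μ hμ)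

/-- Away from the base, `U` is a union of levels, and each of them is pulled back by `g` to the
`K`-equivalent level below it. -/
lemma measure_preimage_of_disjoint {L : List (Tower X)} (hL : Valid K L) (hs : Sup L = Set.univ)
    {g : X ≃ₜ X} (hg : ∀ x, Step L x (g x)) {U : Set X} (hU : IsClopen U)
    (hp : ∀ c ∈ L, ∀ j, Pure (c.at' j) U) (hd : Disjoint (Hd L) U) {μ : ProbabilityMeasure X}
    (hμ : μ ∈ K) : (μ : Measure X) (g ⁻¹' U) = (μ : Measure X) U := by
  have hfin : Finite {c // c ∈ L} := (List.finite_toSet L).to_subtype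
  let P : {c // c ∈ L} × ℕ → Set X := fun p => U ∩ p.1.1.at' (p.2 + 1)
  have hP : ∀ p, IsClopen (P p) := fun p => hU.inter ((hL.1 _ p.1.2).clopen _)
  have hPd : Pairwise (Function.onFun Disjoint P) := by
    rintro ⟨⟨c, hc⟩, i⟩ ⟨⟨d, hd⟩, j⟩ hne
    refine Set.disjoint_left.2 (fun x hx hx' => hne ?_)
    obtain ⟨rfl, h⟩ := hL.pos_unique hc hd hx.2 hx'.2
    obtain rfl : i = j := by omega
    rfl
  have hUP : U = ⋃ p, P p := by
    refine Set.Subset.antisymm (fun x hx => ?_) (Set.iUnion_subset fun p => Set.inter_subset_left)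
    obtain ⟨c, hc, j, hxc⟩ := exists_pos hs x
    rcases j with _ | j
    · exact (Set.disjoint_left.1 hd ⟨c, hc, hxc⟩ hx).elim
    · exact Set.mem_iUnion.2 ⟨(⟨c, hc⟩, j), hx, hxc⟩
  rw [hUP, Set.preimage_iUnion, measure_iUnion (fun p q hpq => (hPd hpq).preimage g)
      (fun p => ((hP p).preimage g.continuous).isOpen.measurableSet),
    measure_iUnion hPd (fun p => (hP p).isOpen.measurableSet)]
  refine tsum_congr ?_
  rintro ⟨⟨c, hc⟩, j⟩
  show (μ : Measure X) (g ⁻¹' (U ∩ c.at' (j + 1))) = (μ : Measure X) (U ∩ c.at' (j + 1))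
  rcases hp c hc (j + 1) with h | h
  · rw [Set.inter_eq_self_of_subset_right h]
    by_cases hj : j + 1 < c.len
    · have : g ⁻¹' (c.at' (j + 1)) = c.at' j := by
        ext x
        exact ⟨fun hx => (hg x).back_mid hL hc hx, fun hx => (hg x).mid hL hc hx hj⟩
      rw [this]
      exact measure_eq_of_eqv (((hL.1 c hc).eqv j (by omega)).trans'
        ((hL.1 c hc).eqv _ hj).symm') hμ
    · rw [(hL.1 c hc).empty _ (not_lt.1 hj), Set.preimage_empty]
  · rw [Set.inter_comm, Set.disjoint_iff_inter_eq_empty.1 h, Set.preimage_empty]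

lemma Pure.compl {A W : Set X} (h : Pure A W) : Pure A Wᶜ := by
  rcases h with h | h
  · exact Or.inr (Set.disjoint_compl_right_iff_subset.2 h)
  · exact Or.inl (Set.subset_compl_iff_disjoint_right.2 h)

lemma measure_preimage {L : List (Tower X)} (hL : Valid K L) (hs : Sup L = Set.univ)
    {g : X ≃ₜ X} (hg : ∀ x, Step L x (g x)) {U : Set X} (hU : IsClopen U)
    (hp : ∀ c ∈ L, ∀ j, Pure (c.at' j) U) (hd : Pure (Hd L) U) {μ : ProbabilityMeasure X}
    (hμ : μ ∈ K) : (μ : Measure X) (g ⁻¹' U) = (μ : Measure X) U := by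
  rcases hd with hd | hd
  · have h := measure_preimage_of_disjoint hL hs hg hU.compl (fun c hc j => (hp c hc j).compl)
      (Set.disjoint_compl_right_iff_subset.2 hd) hμ
    have h1 := prob_compl_eq_one_sub (μ := (μ : Measure X)) hU.compl.isOpen.measurableSet
    have h2 := prob_compl_eq_one_sub (μ := (μ : Measure X))
      (hU.compl.preimage g.continuous).isOpen.measurableSet
    rw [h, ← h1, Set.preimage_compl, compl_compl, compl_compl] at h2
    exact h2
  · exact measure_preimage_of_disjoint hL hs hg hU hp hd hμ

lemma preserves_of_clopen [CompactSpace X] [T2Space X] [SecondCountableTopology X]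
    [TotallyDisconnectedSpace X] {g : X ≃ₜ X} {μ : ProbabilityMeasure X}
    (h : ∀ U : Set X, IsClopen U → (μ : Measure X) (g ⁻¹' U) = (μ : Measure X) U) :
    Preserves g μ := by
  have hm : Measurable g := g.continuous.measurable
  refine ext_of_generate_finite {U : Set X | IsClopen U} ?_ ?_ ?_ ?_
  · rw [BorelSpace.measurable_eq (α := X), isTopologicalBasis_isClopen.borel_eq_generateFrom]
  · rintro A hA B hB -
    exact IsClopen.inter hA hB
  · intro U hU
    rw [Measure.map_apply hm hU.isOpen.measurableSet]
    exact h U hU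
  · rw [Measure.map_apply hm MeasurableSet.univ, Set.preimage_univ]

/-! ### Saturation -/

/-- The levels of a balanced tower can be permuted so as to carry those contained in `U` to those
contained in `V`; the permutation and its inverse are given as functions on `ℕ`. -/
lemma exists_perm {U V : Set X} {c : Tower X} (h : exc U V c = 0) : ∃ s t : ℕ → ℕ,
    (∀ j < c.len, s j < c.len ∧ t (s j) = j) ∧ (∀ j < c.len, t j < c.len ∧ s (t j) = j) ∧
      ∀ j < c.len, (c.at' j ⊆ U ↔ c.at' (s j) ⊆ V) := by
  classical
  have hcard : Fintype.card {j : Fin c.len // c.at' j ⊆ U} =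
      Fintype.card {j : Fin c.len // c.at' j ⊆ V} := by
    rw [Fintype.card_subtype, Fintype.card_subtype]
    have h' : exc U V c = ((Finset.univ.filter fun j : Fin c.len => c.at' j ⊆ U).card : ℤ) -
        ((Finset.univ.filter fun j : Fin c.len => c.at' j ⊆ V).card : ℤ) := by
      unfold exc
      rw [Finset.sum_range, Finset.sum_sub_distrib, ← Finset.sum_boole, ← Finset.sum_boole]
    omega
  let e := Fintype.equivOfCardEq hcard
  let σ : Equiv.Perm (Fin c.len) := e.extendSubtype
  refine ⟨fun j => if hj : j < c.len then σ ⟨j, hj⟩ else j,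
    fun j => if hj : j < c.len then σ.symm ⟨j, hj⟩ else j, ?_, ?_, ?_⟩
  · intro j hj
    simp [hj]
  · intro j hj
    simp [hj]
  · intro j hj
    simp only [hj, dif_pos]
    constructor
    · exact fun hU => e.extendSubtype_mem ⟨j, hj⟩ hU
    · intro hV
      by_contra hU
      exact e.extendSubtype_not_mem ⟨j, hj⟩ hU hV

section saturation

variable {L : List (Tower X)} {g : X ≃ₜ X}

lemma pow_up (hL : Valid K L) (hg : ∀ x, Step L x (g x)) {c : Tower X} (hc : c ∈ L) {x : X} {j : ℕ}
    (hx : x ∈ c.at' j) (m : ℕ) (hm : j + m < c.len) : (g.toEquiv ^ m) x ∈ c.at' (j + m) := by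
  induction m with
  | zero => simpa using hx
  | succ m ih =>
    rw [pow_succ', Equiv.Perm.mul_apply]
    exact (hg _).mid hL hc (ih (by omega)) (by omega)

lemma pow_down (hL : Valid K L) (hg : ∀ x, Step L x (g x)) {c : Tower X} (hc : c ∈ L) {j : ℕ}
    (m : ℕ) : ∀ {x : X}, x ∈ c.at' (j + m) → ((g.toEquiv ^ m)⁻¹) x ∈ c.at' j := by
  induction m with
  | zero => exact fun hx => by simpa using hx
  | succ m ih =>
    intro x hx
    rw [pow_succ', mul_inv_rev, Equiv.Perm.mul_apply]
    refine ih ?_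
    have h := hg (g.symm x)
    rw [Homeomorph.apply_symm_apply] at h
    exact h.back_mid hL hc hx

lemma zpow_mem (hL : Valid K L) (hg : ∀ x, Step L x (g x)) {c : Tower X} (hc : c ∈ L) {x : X}
    {j k : ℕ} (hx : x ∈ c.at' j) (hk : k < c.len) :
    (g.toEquiv ^ ((k : ℤ) - (j : ℤ))) x ∈ c.at' k := by
  rcases le_total j k with h | h
  · obtain ⟨m, rfl⟩ := Nat.exists_eq_add_of_le h
    have := pow_up hL hg hc hx m hk
    rwa [show ((j + m : ℕ) : ℤ) - (j : ℤ) = (m : ℤ) by push_cast; ring, zpow_natCast]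
  · obtain ⟨m, rfl⟩ := Nat.exists_eq_add_of_le h
    have := pow_down hL hg hc (j := k) m hx
    rwa [show (k : ℤ) - ((k + m : ℕ) : ℤ) = -(m : ℤ) by push_cast; ring, zpow_neg, zpow_natCast]

/-- The number of steps from each point of `L` to the level prescribed by `s`. -/
lemma exists_cocycle (hL : Valid K L) (hs : Sup L = Set.univ) (s : Tower X → ℕ → ℕ) :
    ∃ n : X → ℤ, IsLocallyConstant n ∧
      ∀ c ∈ L, ∀ j, ∀ x ∈ c.at' j, n x = (s c j : ℤ) - (j : ℤ) := by
  choose c hc j hj using exists_pos (X := X) hs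
  have key : ∀ d ∈ L, ∀ i, ∀ x ∈ d.at' i, (s (c x) (j x) : ℤ) - (j x : ℤ) = s d i - i := by
    intro d hd i x hx
    obtain ⟨h1, h2⟩ := hL.pos_unique (hc x) hd (hj x) hx
    rw [h1, h2]
  refine ⟨fun x => (s (c x) (j x) : ℤ) - (j x : ℤ), fun S => ?_, key⟩
  refine isOpen_of_inv hL hs (fun d hd i x hx x' hx' hS => ?_)
  rw [Set.mem_preimage, key d hd i x hx] at hS
  rwa [Set.mem_preimage, key d hd i x' hx']

lemma continuous_zpow_cocycle (g : X ≃ₜ X) {n : X → ℤ} (hn : IsLocallyConstant n) :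
    Continuous (fun x => (g.toEquiv ^ n x) x) := by
  have hpow : ∀ m : ℕ, Continuous (g.toEquiv ^ m : Equiv.Perm X) ∧
      Continuous ((g.toEquiv ^ m)⁻¹ : Equiv.Perm X) := by
    intro m
    induction m with
    | zero => exact ⟨continuous_id, continuous_id⟩
    | succ m ih =>
      rw [pow_succ, mul_inv_rev, Equiv.Perm.coe_mul, Equiv.Perm.coe_mul]
      exact ⟨ih.1.comp g.continuous, g.symm.continuous.comp ih.2⟩
  have hz : ∀ m : ℤ, Continuous (g.toEquiv ^ m : Equiv.Perm X) := by
    intro m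
    obtain ⟨k, rfl | rfl⟩ := m.eq_nat_or_neg
    · rw [zpow_natCast]
      exact (hpow k).1
    · rw [zpow_neg, zpow_natCast]
      exact (hpow k).2
  refine continuous_iff_continuousAt.2 (fun x => ?_)
  refine (hz (n x)).continuousAt.congr ?_
  filter_upwards [hn.eventually_eq x] with y hy
  rw [hy]

lemma inTopologicalFullGroup_of_cocycle [CompactSpace X] {g h : X ≃ₜ X} {n : X → ℤ}
    (hn : IsLocallyConstant n) (hh : ∀ x, h x = (g.toEquiv ^ n x) x) :
    InTopologicalFullGroup g h := by
  have hfin : Finite (Set.range n) := hn.range_finite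
  obtain ⟨k, ⟨e⟩⟩ := Finite.exists_equiv_fin (Set.range n)
  refine ⟨k, fun i => n ⁻¹' {(e.symm i : ℤ)}, fun i => e.symm i, ?_, ?_, ?_⟩
  · exact fun i => hn.isClopen_fiber _
  · intro x
    refine ⟨e ⟨n x, x, rfl⟩, by simp, fun i hi => ?_⟩
    refine (Equiv.symm_apply_eq e).1 (Subtype.ext ?_)
    exact (show n x = e.symm i from hi).symm
  · intro i x hx
    rw [hh, show n x = e.symm i from hx]

lemma exists_fullGroup [CompactSpace X] [T2Space X] (hL : Valid K L) (hs : Sup L = Set.univ)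
    (hg : ∀ x, Step L x (g x)) {U V : Set X} (hU : ∀ c ∈ L, ∀ j, Pure (c.at' j) U)
    (hV : ∀ c ∈ L, ∀ j, Pure (c.at' j) V) (hE : ∀ c ∈ L, exc U V c = 0) :
    ∃ h : X ≃ₜ X, InTopologicalFullGroup g h ∧ h '' U = V := by
  have hperm : ∀ c : Tower X, ∃ s t : ℕ → ℕ, c ∈ L →
      (∀ j < c.len, s j < c.len ∧ t (s j) = j) ∧ (∀ j < c.len, t j < c.len ∧ s (t j) = j) ∧
      ∀ j < c.len, (c.at' j ⊆ U ↔ c.at' (s j) ⊆ V) := by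
    intro c
    by_cases hc : c ∈ L
    · obtain ⟨s, t, h⟩ := exists_perm (hE c hc)
      exact ⟨s, t, fun _ => h⟩
    · exact ⟨id, id, fun h => (hc h).elim⟩
  choose s t hst using hperm
  obtain ⟨n, hn, hns⟩ := exists_cocycle hL hs s
  obtain ⟨m, hm, hmt⟩ := exists_cocycle hL hs t
  have hf : ∀ c ∈ L, ∀ j, ∀ x ∈ c.at' j, (g.toEquiv ^ n x) x ∈ c.at' (s c j) := by
    intro c hc j x hx
    rw [hns c hc j x hx]
    exact zpow_mem hL hg hc hx ((hst c hc).1 j ((hL.1 c hc).lt_len hx)).1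
  have hf' : ∀ c ∈ L, ∀ j, ∀ x ∈ c.at' j, (g.toEquiv ^ m x) x ∈ c.at' (t c j) := by
    intro c hc j x hx
    rw [hmt c hc j x hx]
    exact zpow_mem hL hg hc hx ((hst c hc).2.1 j ((hL.1 c hc).lt_len hx)).1
  let e : X ≃ X := ⟨fun x => (g.toEquiv ^ n x) x, fun x => (g.toEquiv ^ m x) x, fun x => by
      obtain ⟨c, hc, j, hx⟩ := exists_pos hs x
      have hj := ((hst c hc).1 j ((hL.1 c hc).lt_len hx)).2
      show (g.toEquiv ^ m ((g.toEquiv ^ n x) x)) ((g.toEquiv ^ n x) x) = x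
      rw [hmt c hc _ _ (hf c hc j x hx), hns c hc j x hx, hj, ← Equiv.Perm.mul_apply, ← zpow_add]
      simp, fun x => by
      obtain ⟨c, hc, j, hx⟩ := exists_pos hs x
      have hj := ((hst c hc).2.1 j ((hL.1 c hc).lt_len hx)).2
      show (g.toEquiv ^ n ((g.toEquiv ^ m x) x)) ((g.toEquiv ^ m x) x) = x
      rw [hns c hc _ _ (hf' c hc j x hx), hmt c hc j x hx, hj, ← Equiv.Perm.mul_apply, ← zpow_add]
      simp⟩
  let h : X ≃ₜ X := ⟨e, continuous_zpow_cocycle g hn, continuous_zpow_cocycle g hm⟩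
  refine ⟨h, inTopologicalFullGroup_of_cocycle hn (fun _ => rfl), Set.Subset.antisymm ?_ ?_⟩
  · rintro _ ⟨x, hxU, rfl⟩
    obtain ⟨c, hc, j, hx⟩ := exists_pos hs x
    have hjU : c.at' j ⊆ U := fun y hy => (hU c hc j).mem hx hy hxU
    exact ((hst c hc).2.2 j ((hL.1 c hc).lt_len hx)).1 hjU (hf c hc j x hx)
  · intro y hyV
    obtain ⟨c, hc, j, hy⟩ := exists_pos hs y
    have hjV : c.at' j ⊆ V := fun z hz => (hV c hc j).mem hy hz hyV
    obtain ⟨h1, h2⟩ := (hst c hc).2.1 j ((hL.1 c hc).lt_len hy)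
    exact ⟨h.symm y, ((hst c hc).2.2 (t c j) h1).2 (by rwa [h2]) (hf' c hc j y hy),
      h.apply_symm_apply y⟩

end saturation

/-! ### The sequence of refinements -/

lemma exists_seq {τ : Type*} [Countable τ] [Nonempty τ] (P : τ → List (Tower X) → Prop)
    {L₀ : List (Tower X)} (hL₀ : Valid K L₀) (hs₀ : Sup L₀ = Set.univ)
    (step : ∀ (t : τ) (L : List (Tower X)), Valid K L → Sup L = Set.univ →
      ∃ L', Ref K L L' ∧ P t L') :
    ∃ L : ℕ → List (Tower X), (∀ n, Valid K (L n) ∧ Sup (L n) = Set.univ) ∧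
      (∀ n, Ref K (L n) (L (n + 1))) ∧ ∀ t, ∃ n, P t (L n) := by
  obtain ⟨e, he⟩ := exists_surjective_nat τ
  choose! F hF using step
  let L : ℕ → List (Tower X) := fun n => Nat.rec L₀ (fun n M => F (e n) M) n
  have hL : ∀ n, Valid K (L n) ∧ Sup (L n) = Set.univ := by
    intro n
    induction n with
    | zero => exact ⟨hL₀, hs₀⟩
    | succ n ih =>
      have := (hF (e n) (L n) ih.1 ih.2).1
      exact ⟨this.valid, this.sup.trans ih.2⟩
  refine ⟨L, hL, fun n => (hF (e n) (L n) (hL n).1 (hL n).2).1, fun t => ?_⟩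
  obtain ⟨n, rfl⟩ := he t
  exact ⟨n + 1, (hF (e n) (L n) (hL n).1 (hL n).2).2⟩

/-- The partition of `X` into a single tower of height one. -/
def trivialTower (X : Type*) : Tower X := ⟨1, fun j => if j = 0 then Set.univ else ∅⟩

lemma trivialTower_ok : (trivialTower X).Ok K where
  pos := Nat.one_pos
  clopen j := by
    simp only [trivialTower]
    split_ifs
    · exact isClopen_univ
    · exact isClopen_empty
  eqv j hj := by
    obtain rfl : j = 0 := by
      simp only [trivialTower] at hj
      omega
    exact Eqv.rfl' _
  empty j hj := by
    simp only [trivialTower] at hj ⊢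
    rw [if_neg (by omega)]
  disj i j x hx hx' := by
    simp only [trivialTower] at hx hx'
    split_ifs at hx hx' with h1 h2 h2
    · rw [h1, h2]
    all_goals simp_all

/-- What a stage must achieve: for a clopen set, decide it on all levels, on the base and on the
top; for a pair of `K`-equivalent clopen sets, balance it on every tower. -/
def Achieves (K : Set (ProbabilityMeasure X)) :
    TopologicalSpace.Clopens X ⊕ TopologicalSpace.Clopens X × TopologicalSpace.Clopens X →
      List (Tower X) → Prop
  | Sum.inl W, L => (∀ c ∈ L, ∀ j, Pure (c.at' j) W) ∧ Pure (Hd L) W ∧ Pure (Lt L) W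
  | Sum.inr (U, V), L => Eqv K (U : Set X) V → (∀ c ∈ L, ∀ j, Pure (c.at' j) U) ∧
      (∀ c ∈ L, ∀ j, Pure (c.at' j) V) ∧ ∀ c ∈ L, exc (U : Set X) V c = 0

lemma exists_saturated_of_hyp [CompactSpace X] [T2Space X] [SecondCountableTopology X]
    [TotallyDisconnectedSpace X] [Nonempty X] (H : Hyp K) :
    ∃ g : X ≃ₜ X, PreservesAll K g ∧ KSaturated K g := by
  have hcount : Countable (TopologicalSpace.Clopens X) :=
    TopologicalSpace.Clopens.countable_iff_secondCountable.2 inferInstance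
  obtain ⟨L, hL, hR, hA⟩ := exists_seq (K := K) (Achieves K) (L₀ := [trivialTower X])
    (valid_singleton trivialTower_ok) (by
      ext x
      simp only [Sup, Tower.sup, Set.mem_univ, iff_true]
      exact ⟨_, List.mem_singleton_self _, 0, by simp [trivialTower]⟩) (by
    rintro (W | ⟨U, V⟩) L hV hs
    · obtain ⟨L', h1, h2, h3, h4⟩ := pure_ends H hV hs W.isClopen
      exact ⟨L', h1, h2, h3, h4⟩
    · by_cases hE : Eqv K (U : Set X) V
      · obtain ⟨L', h1, h2, h3⟩ := balance H U.isClopen V.isClopen hE hV hs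
        exact ⟨L', h1, fun _ => ⟨h2.pureU, h2.pureV, h3⟩⟩
      · exact ⟨L, Ref.refl hV, fun h => (hE h).elim⟩)
  obtain ⟨g, hg⟩ := exists_homeo (R := fun n => Step (L n)) (fun n x y h => (hR n).step h)
    (fun n => exists_step H (hL n).1 (hL n).2) (fun n => exists_step_back H (hL n).1 (hL n).2)
    (fun n => isClopen_step_left (hL n).1 (hL n).2)
    (fun n => isClopen_step_right (hL n).1 (hL n).2) (fun W hW => by
      obtain ⟨n, h1, h2, h3⟩ := hA (Sum.inl ⟨W, hW⟩)
      exact ⟨n, fun x y y' h h' => Step.det (hL n).1 (hL n).2 h1 h2 h h',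
        fun x x' y h h' => Step.det_back (hL n).1 (hL n).2 h1 h3 h h'⟩)
  refine ⟨g, fun μ hμ => preserves_of_clopen fun U hU => ?_, fun U V hU hV hUV => ?_⟩
  · obtain ⟨n, h1, h2, -⟩ := hA (Sum.inl ⟨U, hU⟩)
    exact measure_preimage (hL n).1 (hL n).2 (hg n) hU h1 h2 hμ
  · obtain ⟨n, hn⟩ := hA (Sum.inr (⟨U, hU⟩, ⟨V, hV⟩))
    obtain ⟨h1, h2, h3⟩ := hn (fun μ hμ => by
      show ms μ U = ms μ V
      rw [ms_eq, ms_eq, hUV μ hμ])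
    exact exists_fullGroup (hL n).1 (hL n).2 (hg n) h1 h2 h3

end SaturatedProof

theorem exists_saturated
    {X : Type*} [TopologicalSpace X] [CompactSpace X]
    [TopologicalSpace.MetrizableSpace X] [TotallyDisconnectedSpace X] [PerfectSpace X]
    [Nonempty X] [MeasurableSpace X] [BorelSpace X]
    (K : Set (MeasureTheory.ProbabilityMeasure X)) (hK : DynSimplex.DynamicalSimplex K) :
    ∃ g : X ≃ₜ X, DynSimplex.PreservesAll K g ∧ DynSimplex.KSaturated K g := by
  let _ := TopologicalSpace.metrizableSpaceMetric X
  exact SaturatedProof.exists_saturated_of_hyp (SaturatedProof.hyp_of_dynamicalSimplex hK)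
end

section
/- Let X be a Cantor space, K a dynamical simplex on X, and G the group of all homeomorphisms of X preserving every measure in K. If g ∈ G is K-saturated, then the set K_g of g-invariant Borel probability measures equals the set K_G of Borel probability measures invariant under every element of G. -/
/-!
The inclusion of the `G`-invariant measures in the `g`-invariant ones holds because `g ∈ G`.
Conversely, let `ν` be `g`-invariant and `h ∈ G`. For clopen `U`, the sets `h⁻¹(U)` and `U` are
`K`-equivalent, so saturation yields `k ∈ [[g]]` carrying the first onto the second. Since `k` is
piecewise a power of `g`, it preserves the `ν`-measure of clopen sets (`measure_image_of_inTFG`), whence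
`ν (h⁻¹(U)) = ν U`. Clopen sets form a π-system generating the Borel σ-algebra
(`measure_ext_of_isClopen`), so `h` preserves `ν`.
-/

open MeasureTheory

namespace DynSimplex

/-- On a compact metrizable totally disconnected space, a finite measure equals any measure with
the same values on clopen sets, since these form a π-system generating the Borel σ-algebra. -/
lemma measure_ext_of_isClopen {X : Type*} [TopologicalSpace X] [CompactSpace X]
    [TopologicalSpace.MetrizableSpace X] [TotallyDisconnectedSpace X]
    [MeasurableSpace X] [BorelSpace X] (μ ν : Measure X) [IsFiniteMeasure μ]
    (h : ∀ U : Set X, IsClopen U → μ U = ν U) : μ = ν := by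
  let := TopologicalSpace.metrizableSpaceMetric X
  have hb : (inferInstance : MeasurableSpace X) =
      MeasurableSpace.generateFrom {s : Set X | IsClopen s} := by
    rw [← (isTopologicalBasis_isClopen (X := X)).borel_eq_generateFrom]
    exact BorelSpace.measurable_eq
  exact ext_of_generate_finite _ hb (fun _ hs _ ht _ => hs.inter ht)
    (fun s hs => h s hs) (h _ isClopen_univ)

/-- Iterates of a measure-preserving homeomorphism, negative ones included, preserve the measure
of images. -/
lemma measure_image_zpow {X : Type*} [TopologicalSpace X] [MeasurableSpace X] [BorelSpace X]
    {g : X ≃ₜ X} {ν : ProbabilityMeasure X} (hg : Preserves g ν) (n : ℤ) (S : Set X) :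
    (ν : Measure X) ((g.toEquiv ^ n) '' S) = (ν : Measure X) S := by
  have hmap : (ν : Measure X).map g = (ν : Measure X) := hg
  have hpre : ∀ T : Set X, (ν : Measure X) (g ⁻¹' T) = (ν : Measure X) T := fun T => by
    conv_rhs => rw [← hmap]
    exact (g.toMeasurableEquiv.map_apply T).symm
  have himg : ∀ T : Set X, (ν : Measure X) (g '' T) = (ν : Measure X) T := fun T => by
    rw [← hpre (g '' T), Set.preimage_image_eq _ g.injective]
  induction n generalizing S with
  | zero => simp
  | succ n ih =>
    rw [zpow_add_one, Equiv.Perm.coe_mul, Set.image_comp, ih]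
    exact himg S
  | pred n ih =>
    rw [zpow_sub_one, Equiv.Perm.coe_mul, Set.image_comp, ih, ← himg (_ '' S)]
    exact congrArg _ (g.toEquiv.image_symm_image S)

/-- Elements of the topological full group of `g` preserve the measure of clopen sets for `g`-invariant `ν`: cut `S`
along the clopen partition and translate each piece by a power of `g`. -/
lemma measure_image_of_inTFG {X : Type*} [TopologicalSpace X] [MeasurableSpace X] [BorelSpace X]
    {g k : X ≃ₜ X} {ν : ProbabilityMeasure X} (hg : Preserves g ν)
    (hk : InTopologicalFullGroup g k) {S : Set X} (hS : IsClopen S) :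
    (ν : Measure X) (k '' S) = (ν : Measure X) S := by
  obtain ⟨m, A, n, hA, hpart, hkA⟩ := hk
  have hunion : S = ⋃ i, S ∩ A i := by
    ext x
    obtain ⟨i, hi, -⟩ := hpart x
    simp only [Set.mem_iUnion, Set.mem_inter_iff]
    exact ⟨fun hx => ⟨i, hx, hi⟩, fun ⟨_, hx, _⟩ => hx⟩
  have hdisj : Pairwise (Function.onFun Disjoint fun i => S ∩ A i) := fun i j hij =>
    Set.disjoint_left.2 fun x hi hj => hij ((hpart x).unique hi.2 hj.2)
  have hmeas : ∀ i, IsClopen (S ∩ A i) := fun i => hS.inter (hA i)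
  have hpiece : ∀ i, k '' (S ∩ A i) = (g.toEquiv ^ n i) '' (S ∩ A i) := fun i =>
    Set.image_congr fun x hx => hkA i x hx.2
  conv_lhs => rw [hunion]
  conv_rhs => rw [hunion]
  rw [Set.image_iUnion, measure_iUnion _ fun i => (k.isOpenMap _ (hmeas i).isOpen).measurableSet,
    measure_iUnion hdisj fun i => (hmeas i).isOpen.measurableSet]
  · exact tsum_congr fun i => by rw [hpiece, measure_image_zpow hg]
  · exact fun i j hij => (Set.disjoint_image_iff k.injective).2 (hdisj hij)

end DynSimplex

theorem invariantMeasures_eq_G_invariant_of_saturated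
    {X : Type*} [TopologicalSpace X] [CompactSpace X]
    [TopologicalSpace.MetrizableSpace X] [TotallyDisconnectedSpace X] [PerfectSpace X]
    [Nonempty X] [MeasurableSpace X] [BorelSpace X]
    (K : Set (MeasureTheory.ProbabilityMeasure X)) (hK : DynSimplex.DynamicalSimplex K)
    (g : X ≃ₜ X) (hg : DynSimplex.PreservesAll K g) (hsat : DynSimplex.KSaturated K g) :
    {μ : MeasureTheory.ProbabilityMeasure X | DynSimplex.Preserves g μ} =
      {ν : MeasureTheory.ProbabilityMeasure X |
        ∀ h : X ≃ₜ X, DynSimplex.PreservesAll K h → DynSimplex.Preserves h ν} := by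
  ext ν
  refine ⟨fun hν h hh => ?_, fun hν => hν g hg⟩
  have hmap : ∀ (μ : ProbabilityMeasure X) (U : Set X), (μ : Measure X).map h U =
      (μ : Measure X) (h ⁻¹' U) := fun μ U => h.toMeasurableEquiv.map_apply U
  refine DynSimplex.measure_ext_of_isClopen _ _ fun U hU => ?_
  have hpre : IsClopen (h ⁻¹' U) := hU.preimage h.continuous
  obtain ⟨k, hk, hkU⟩ := hsat (h ⁻¹' U) U hpre hU fun μ hμ => by
    have hμh : (μ : Measure X).map h = (μ : Measure X) := hh μ hμ
    have heq : (μ : Measure X) (h ⁻¹' U) = (μ : Measure X) U := by rw [← hmap, hμh]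
    exact congrArg ENNReal.toNNReal heq
  rw [hmap, ← DynSimplex.measure_image_of_inTFG hν hk hpre, hkU]
end

section
/- Let X be a Cantor space, K a dynamical simplex on X, and G the group of all homeomorphisms of X preserving every measure in K. If ν is a Borel probability measure on X with h_*ν = ν for every h ∈ G, then ν ∈ K. -/
/-!
The proof compares `ν` with `K` on clopen sets.

If two clopen sets `A`, `B` have the same measure for every `μ ∈ K`, a back-and-forth construction
gives a homeomorphism `g` preserving all of `K` with `g ⁻¹' B = A` (`exists_homeo`): one builds two
refining sequences of labelled clopen partitions whose pieces with equal labels have equal measure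
for all `μ ∈ K`, cutting along every clopen set on both sides. A cut of a piece transfers to its
partner by goodness, because full support makes a proper clopen subset strictly smaller for all
`μ ∈ K`; in the limit, `g` matches the points having the same labels. Hence `ν A = ν B`, and with
goodness once more, `μ A < μ B` for all `μ ∈ K` implies `ν A ≤ ν B` (`le_of_forall_lt`).

Approximate divisibility and greedy packing of disjoint equivalent copies then show that for
`c ∈ [0, 1]` each clopen `U` admits a clopen `W` with `μ W ≈ c * μ U` uniformly on `K` and also
`ν W ≈ c * ν U` (`exists_fraction`).

If `ν ∉ K`, compactness yields finitely many clopen sets on which `ν` differs from each `μ ∈ K`, and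
finite-dimensional Hahn–Banach a linear combination of their measures, larger on `K` than at `ν` by
a uniform gap (`exists_separation`). Passing to complements makes the coefficients nonnegative;
after rescaling, the combination is approximated by one clopen set `D`, and the separating level
by a clopen `E` with `μ E < μ D` for all `μ ∈ K` but `ν D < ν E` (`not_separated`): a
contradiction.
-/

open MeasureTheory

namespace DynSimplex

open Set Filter Topology TopologicalSpace

/-! ### Homeomorphisms exchanging equivalent clopen sets -/

section

variable {X : Type*}

open Classical in
/-- The labelling obtained from `p` by cutting every piece along `U`: the piece labelled `i`
splits into the pieces labelled `2 * i + 1` (inside `U`) and `2 * i` (outside `U`). -/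
noncomputable def splitLabel (p : X → ℕ) (U : Set X) (x : X) : ℕ :=
  2 * p x + if x ∈ U then 1 else 0

theorem splitLabel_div_two (p : X → ℕ) (U : Set X) (x : X) : splitLabel p U x / 2 = p x := by
  unfold splitLabel; split_ifs <;> omega

theorem splitLabel_mod_two (p : X → ℕ) (U : Set X) (x : X) :
    splitLabel p U x % 2 = 1 ↔ x ∈ U := by
  unfold splitLabel; split_ifs <;> simp_all

theorem splitLabel_preimage_odd (p : X → ℕ) (U : Set X) (i : ℕ) (hi : i % 2 = 1) :
    splitLabel p U ⁻¹' {i} = p ⁻¹' {i / 2} ∩ U := by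
  ext x
  simp only [mem_preimage, mem_singleton_iff, mem_inter_iff, splitLabel]
  split_ifs with h <;> simp only [h, and_true, and_false, iff_false] <;> omega

theorem splitLabel_preimage_even (p : X → ℕ) (U : Set X) (i : ℕ) (hi : i % 2 = 0) :
    splitLabel p U ⁻¹' {i} = p ⁻¹' {i / 2} \ U := by
  ext x
  simp only [mem_preimage, mem_singleton_iff, Set.mem_sdiff, splitLabel]
  split_ifs with h <;>
    simp only [h, not_true, not_false_iff, and_true, and_false, iff_false] <;> omega

theorem continuous_splitLabel [TopologicalSpace X] {p : X → ℕ} {U : Set X}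
    (hp : Continuous p) (hU : IsClopen U) : Continuous (splitLabel p U) := by
  rw [continuous_discrete_rng]
  intro i
  rcases Nat.mod_two_eq_zero_or_one i with hi | hi
  · rw [splitLabel_preimage_even p U i hi]
    exact ((isOpen_discrete _).preimage hp).sdiff hU.isClosed
  · rw [splitLabel_preimage_odd p U i hi]
    exact ((isOpen_discrete _).preimage hp).inter hU.isOpen

end

section

variable {X : Type*} [TopologicalSpace X] [MeasurableSpace X]

/-- Two `ℕ`-labelled clopen partitions of `X`, encoded as continuous maps to the discrete
space `ℕ`, whose pieces with the same label have the same measure for every `μ ∈ K`. -/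
structure Matched (K : Set (ProbabilityMeasure X)) (p q : X → ℕ) : Prop where
  contL : Continuous p
  contR : Continuous q
  eqv : ∀ i, ∀ μ ∈ K, μ (p ⁻¹' {i}) = μ (q ⁻¹' {i})

theorem Matched.symm {K : Set (ProbabilityMeasure X)} {p q : X → ℕ} (h : Matched K p q) :
    Matched K q p := ⟨h.contR, h.contL, fun i μ hμ => (h.eqv i μ hμ).symm⟩

/-- For matched refining sequences of partitions, every point has a partner with the same labels on
the other side: the pieces with its labels are nonempty by full support, so compactness applies. -/
theorem exists_same_labels [CompactSpace X] {K : Set (ProbabilityMeasure X)} (hne : K.Nonempty)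
    (hfull : ∀ μ ∈ K, FullSupport μ) {p q : ℕ → X → ℕ} (h : ∀ n, Matched K (p n) (q n))
    (hp : ∀ n x, p (n + 1) x / 4 = p n x) (hq : ∀ n x, q (n + 1) x / 4 = q n x) (x : X) :
    ∃ y, ∀ n, q n y = p n x := by
  obtain ⟨μ, hμ⟩ := hne
  have hcl : ∀ n, IsClosed (q n ⁻¹' {p n x}) := fun n =>
    (isClosed_discrete _).preimage (h n).contR
  have := IsCompact.nonempty_iInter_of_sequence_nonempty_isCompact_isClosed
    (fun n => q n ⁻¹' {p n x}) (fun n y hy => ?_) (fun n => ?_) (hcl 0).isCompact hcl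
  · obtain ⟨y, hy⟩ := this
    exact ⟨y, fun n => mem_iInter.1 hy n⟩
  · simp only [mem_preimage, mem_singleton_iff] at hy ⊢
    rw [← hq, ← hp, hy]
  · by_contra hcon
    have h1 := (h n).eqv (p n x) μ hμ
    rw [not_nonempty_iff_eq_empty.1 hcon, ProbabilityMeasure.coeFn_empty] at h1
    exact (hfull μ hμ _ ((isOpen_discrete {p n x}).preimage (h n).contL) ⟨x, rfl⟩).ne' h1

variable [BorelSpace X]

theorem coe_inter_add_diff (μ : ProbabilityMeasure X) (A : Set X) {U : Set X} (hU : IsClopen U) :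
    μ (A ∩ U) + μ (A \ U) = μ A := by
  have := measureReal_inter_add_sdiff (μ := (μ : Measure X)) (s := A) hU.isOpen.measurableSet
  simp only [ProbabilityMeasure.measureReal_eq_coe_coeFn] at this
  exact_mod_cast this

/-- The one-sided step of the back-and-forth: any cut of the left partition can be matched by a
cut of the right one. In each piece this is goodness, applicable since a proper clopen subset has
strictly smaller measure for every `μ ∈ K`. -/
theorem Matched.step {K : Set (ProbabilityMeasure X)} (hgood : Good K)
    (hfull : ∀ μ ∈ K, FullSupport μ) {p q : X → ℕ} (h : Matched K p q) {U : Set X}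
    (hU : IsClopen U) :
    ∃ V, IsClopen V ∧ Matched K (splitLabel p U) (splitLabel q V) := by
  have hp : ∀ i, IsClopen (p ⁻¹' {i}) := fun i => (isClopen_discrete _).preimage h.contL
  have hq : ∀ i, IsClopen (q ⁻¹' {i}) := fun i => (isClopen_discrete _).preimage h.contR
  have key : ∀ i, ∃ V : Set X, IsClopen V ∧ V ⊆ q ⁻¹' {i} ∧
      ∀ μ ∈ K, μ V = μ (p ⁻¹' {i} ∩ U) := by
    intro i
    by_cases hne : (p ⁻¹' {i} \ U).Nonempty
    · refine hgood _ _ ((hp i).inter hU) (hq i) fun μ hμ => ?_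
      rw [← h.eqv i μ hμ, ← coe_inter_add_diff μ (p ⁻¹' {i}) hU]
      exact lt_add_of_pos_right _ (hfull μ hμ _ ((hp i).diff hU).isOpen hne)
    · refine ⟨q ⁻¹' {i}, hq i, subset_rfl, fun μ hμ => ?_⟩
      rw [not_nonempty_iff_eq_empty, sdiff_eq_empty] at hne
      rw [inter_eq_left.2 hne, h.eqv i μ hμ]
  choose V hVc hVs hVμ using key
  have hVq : ∀ i, q ⁻¹' {i} ∩ {y | y ∈ V (q y)} = V i := by
    intro i
    ext y
    simp only [mem_inter_iff, mem_preimage, mem_singleton_iff, mem_ofPred_eq]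
    refine ⟨fun ⟨h1, h2⟩ => h1 ▸ h2, fun hy => ?_⟩
    have : q y = i := hVs i hy
    exact ⟨this, by rwa [this]⟩
  have hVclopen : IsClopen {y | y ∈ V (q y)} := by
    have e1 : {y | y ∈ V (q y)} = ⋃ i, V i := by
      ext y
      simp only [mem_ofPred_eq, mem_iUnion]
      refine ⟨fun hy => ⟨_, hy⟩, fun ⟨i, hy⟩ => ?_⟩
      have : q y = i := hVs i hy
      rwa [this]
    have e2 : {y | y ∈ V (q y)}ᶜ = ⋃ i, (q ⁻¹' {i} \ V i) := by
      ext y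
      simp
    refine ⟨⟨?_⟩, ?_⟩
    · rw [e2]
      exact isOpen_iUnion fun i => ((hq i).diff (hVc i)).isOpen
    · rw [e1]
      exact isOpen_iUnion fun i => (hVc i).isOpen
  refine ⟨_, hVclopen, continuous_splitLabel h.contL hU, continuous_splitLabel h.contR hVclopen,
    fun i μ hμ => ?_⟩
  have hin : ∀ j, μ (p ⁻¹' {j} ∩ U) = μ (q ⁻¹' {j} ∩ {y | y ∈ V (q y)}) := fun j => by
    rw [hVq, hVμ j μ hμ]
  rcases Nat.mod_two_eq_zero_or_one i with hi | hi
  · rw [splitLabel_preimage_even _ _ i hi, splitLabel_preimage_even _ _ i hi]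
    have h1 := coe_inter_add_diff μ (p ⁻¹' {i / 2}) hU
    have h2 := coe_inter_add_diff μ (q ⁻¹' {i / 2}) hVclopen
    rw [h.eqv _ μ hμ, ← h2, hin] at h1
    exact add_left_cancel h1
  · rw [splitLabel_preimage_odd _ _ i hi, splitLabel_preimage_odd _ _ i hi, hin]

/-- The two-sided step of the back-and-forth: after refining, `U` is a union of pieces of both
partitions. -/
theorem Matched.step_both {K : Set (ProbabilityMeasure X)} (hgood : Good K)
    (hfull : ∀ μ ∈ K, FullSupport μ) {p q : X → ℕ} (h : Matched K p q) {U : Set X}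
    (hU : IsClopen U) :
    ∃ p' q', Matched K p' q' ∧ (∀ x, p' x / 4 = p x) ∧ (∀ x, q' x / 4 = q x) ∧
      (∃ S : Set ℕ, U = p' ⁻¹' S) ∧ ∃ S : Set ℕ, U = q' ⁻¹' S := by
  obtain ⟨V, -, h1⟩ := h.step hgood hfull hU
  obtain ⟨W, -, h2⟩ := h1.symm.step hgood hfull hU
  refine ⟨_, _, h2.symm, fun x => ?_, fun x => ?_, ⟨{n | n / 2 % 2 = 1}, ?_⟩,
    ⟨{n | n % 2 = 1}, ?_⟩⟩
  · rw [show 4 = 2 * 2 from rfl, ← Nat.div_div_eq_div_mul, splitLabel_div_two, splitLabel_div_two]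
  · rw [show 4 = 2 * 2 from rfl, ← Nat.div_div_eq_div_mul, splitLabel_div_two, splitLabel_div_two]
  · ext x
    rw [mem_preimage, mem_ofPred_eq, splitLabel_div_two, splitLabel_mod_two]
  · ext x
    rw [mem_preimage, mem_ofPred_eq, splitLabel_mod_two]

theorem Matched.preimage_eq {K : Set (ProbabilityMeasure X)} {p q : X → ℕ} (h : Matched K p q)
    (S : Set ℕ) {μ : ProbabilityMeasure X} (hμ : μ ∈ K) :
    (μ : Measure X) (p ⁻¹' S) = (μ : Measure X) (q ⁻¹' S) := by
  have : (μ : Measure X).map p = (μ : Measure X).map q := by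
    refine Measure.ext_of_singleton fun i => ?_
    rw [Measure.map_apply h.contL.measurable (measurableSet_singleton i),
      Measure.map_apply h.contR.measurable (measurableSet_singleton i),
      ← ProbabilityMeasure.ennreal_coeFn_eq_coeFn_toMeasure,
      ← ProbabilityMeasure.ennreal_coeFn_eq_coeFn_toMeasure, h.eqv i μ hμ]
  rw [← Measure.map_apply h.contL.measurable (MeasurableSet.of_discrete),
    ← Measure.map_apply h.contR.measurable (MeasurableSet.of_discrete), this]

end

section

variable {X : Type*} [TopologicalSpace X] [CompactSpace X] [MetrizableSpace X]
  [TotallyDisconnectedSpace X]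

theorem eq_of_same_labels {q : ℕ → X → ℕ}
    (hS : ∀ U : Set X, IsClopen U → ∃ n, ∃ S : Set ℕ, U = q n ⁻¹' S) {x y : X}
    (hxy : ∀ n, q n x = q n y) : x = y := by
  by_contra hne
  obtain ⟨U, hU, hx, hy⟩ := exists_isClopen_of_totally_separated hne
  obtain ⟨n, S, rfl⟩ := hS U hU
  rw [mem_compl_iff, mem_preimage, ← hxy n] at hy
  exact hy hx

variable [MeasurableSpace X] [BorelSpace X]

theorem measure_ext_clopen {μ ν : Measure X} [IsFiniteMeasure μ]
    (h : ∀ U, IsClopen U → μ U = ν U) : μ = ν := by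
  have : SecondCountableTopology X := inferInstance
  refine ext_of_generate_finite {s : Set X | IsClopen s} ?_ ?_ h (h _ isClopen_univ)
  · rw [BorelSpace.measurable_eq (α := X)]
    exact isTopologicalBasis_isClopen.borel_eq_generateFrom
  · exact fun s hs t ht _ => hs.inter ht

/-- `K`-equivalent clopen sets are exchanged by a homeomorphism preserving `K`. -/
theorem exists_homeo {K : Set (ProbabilityMeasure X)} (hne : K.Nonempty) (hgood : Good K)
    (hfull : ∀ μ ∈ K, FullSupport μ) {A B : Set X} (hA : IsClopen A) (hB : IsClopen B)
    (hAB : ∀ μ ∈ K, μ A = μ B) :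
    ∃ g : X ≃ₜ X, PreservesAll K g ∧ g ⁻¹' B = A := by
  have h0 : Matched K (splitLabel (fun _ => 0) A) (splitLabel (fun _ => 0) B) := by
    refine ⟨continuous_splitLabel continuous_const hA, continuous_splitLabel continuous_const hB,
      fun i μ hμ => ?_⟩
    have h1 := coe_inter_add_diff μ univ hA
    rw [← coe_inter_add_diff μ univ hB, univ_inter, univ_inter, hAB μ hμ] at h1
    have h2 := add_left_cancel h1
    rcases Nat.mod_two_eq_zero_or_one i with hi | hi
    · rw [splitLabel_preimage_even _ _ i hi, splitLabel_preimage_even _ _ i hi]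
      by_cases h : (0 : ℕ) ∈ ({i / 2} : Set ℕ) <;> simp [h, h2]
    · rw [splitLabel_preimage_odd _ _ i hi, splitLabel_preimage_odd _ _ i hi]
      by_cases h : (0 : ℕ) ∈ ({i / 2} : Set ℕ) <;> simp [h, hAB μ hμ]
  have : SecondCountableTopology X := inferInstance
  have : Countable (Clopens X) := Clopens.countable_iff_secondCountable.2 inferInstance
  obtain ⟨U, hUsurj⟩ := exists_surjective_nat (Clopens X)
  choose P Q hM hP hQ hSP hSQ using
    fun (n : ℕ) (s : {s : (X → ℕ) × (X → ℕ) // Matched K s.1 s.2}) =>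
      s.2.step_both hgood hfull (U n).isClopen
  let s : ℕ → {s : (X → ℕ) × (X → ℕ) // Matched K s.1 s.2} := fun n =>
    Nat.rec ⟨(_, _), h0⟩ (fun n s => ⟨(P n s, Q n s), hM n s⟩) n
  let p : ℕ → X → ℕ := fun n => (s n).1.1
  let q : ℕ → X → ℕ := fun n => (s n).1.2
  have hpq : ∀ n, Matched K (p n) (q n) := fun n => (s n).2
  have hp : ∀ n x, p (n + 1) x / 4 = p n x := fun n x => hP n (s n) x
  have hq : ∀ n x, q (n + 1) x / 4 = q n x := fun n x => hQ n (s n) x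
  have hpS : ∀ W : Set X, IsClopen W → ∃ n, ∃ S : Set ℕ, W = p n ⁻¹' S := by
    intro W hW
    obtain ⟨n, hn⟩ := hUsurj ⟨W, hW⟩
    obtain ⟨S, hS⟩ := hSP n (s n)
    exact ⟨n + 1, S, by rw [hn] at hS; exact hS⟩
  have hqS : ∀ W : Set X, IsClopen W → ∃ n, ∃ S : Set ℕ, W = q n ⁻¹' S := by
    intro W hW
    obtain ⟨n, hn⟩ := hUsurj ⟨W, hW⟩
    obtain ⟨S, hS⟩ := hSQ n (s n)
    exact ⟨n + 1, S, by rw [hn] at hS; exact hS⟩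
  choose f hf using exists_same_labels hne hfull hpq hp hq
  choose f' hf' using exists_same_labels hne hfull (fun n => (hpq n).symm) hq hp
  have pre : ∀ n (S : Set ℕ), f ⁻¹' (q n ⁻¹' S) = p n ⁻¹' S := fun n S => by
    ext x; simp [hf]
  have pre' : ∀ n (S : Set ℕ), f' ⁻¹' (p n ⁻¹' S) = q n ⁻¹' S := fun n S => by
    ext x; simp [hf']
  let g : X ≃ₜ X :=
    { toFun := f
      invFun := f'
      left_inv := fun x => eq_of_same_labels hpS fun n => by rw [hf', hf]
      right_inv := fun x => eq_of_same_labels hqS fun n => by rw [hf, hf']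
      continuous_toFun := by
        refine isTopologicalBasis_isClopen.continuous_iff.2 fun W hW => ?_
        obtain ⟨n, S, rfl⟩ := hqS W hW
        rw [pre]
        exact (isOpen_discrete S).preimage (hpq n).contL
      continuous_invFun := by
        refine isTopologicalBasis_isClopen.continuous_iff.2 fun W hW => ?_
        obtain ⟨n, S, rfl⟩ := hpS W hW
        rw [pre']
        exact (isOpen_discrete S).preimage (hpq n).contR }
  refine ⟨g, fun μ hμ => ?_, ?_⟩
  · have : IsFiniteMeasure ((μ : Measure X).map g) := inferInstance
    refine measure_ext_clopen fun W hW => ?_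
    rw [Measure.map_apply g.continuous.measurable hW.isOpen.measurableSet]
    obtain ⟨n, S, rfl⟩ := hqS W hW
    change (μ : Measure X) (f ⁻¹' _) = _
    rw [pre, (hpq n).preimage_eq S hμ]
  · ext x
    have h1 : splitLabel (fun _ => 0) B (f x) = splitLabel (fun _ => 0) A x := hf x 0
    change f x ∈ B ↔ x ∈ A
    rw [← splitLabel_mod_two (fun _ => 0) B, ← splitLabel_mod_two (fun _ => 0) A, h1]

end

/-! ### Clopen sets realizing prescribed values -/

section

variable {X : Type*} [MeasurableSpace X]

theorem coe_mono_real (μ : ProbabilityMeasure X) {A B : Set X} (h : A ⊆ B) :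
    (μ A : ℝ) ≤ μ B := by
  exact_mod_cast μ.apply_mono h

theorem coe_le_one_real (μ : ProbabilityMeasure X) (A : Set X) : (μ A : ℝ) ≤ 1 := by
  exact_mod_cast μ.apply_le_one A

variable [TopologicalSpace X]

/-- `a` (on `K`) and `t` are the values of the measures in `K` and of `ν` on a single clopen
subset of `U`. -/
def Realized (K : Set (ProbabilityMeasure X)) (ν : ProbabilityMeasure X) (U : Set X)
    (a : ProbabilityMeasure X → ℝ) (t : ℝ) : Prop :=
  ∃ D, IsClopen D ∧ D ⊆ U ∧ (∀ μ ∈ K, (μ D : ℝ) = a μ) ∧ (ν D : ℝ) = t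

/-- `ν` takes equal values on clopen sets on which every measure of `K` agrees. -/
def RespectsEquiv (K : Set (ProbabilityMeasure X)) (ν : ProbabilityMeasure X) : Prop :=
  ∀ A B : Set X, IsClopen A → IsClopen B → (∀ μ ∈ K, μ A = μ B) → ν A = ν B

variable {K : Set (ProbabilityMeasure X)} {ν : ProbabilityMeasure X}

theorem Realized.empty (U : Set X) : Realized K ν U (fun _ => 0) 0 :=
  ⟨∅, isClopen_empty, empty_subset _, by simp, by simp⟩

theorem le_of_forall_lt (hgood : Good K) (hν : RespectsEquiv K ν) {A B : Set X}
    (hA : IsClopen A) (hB : IsClopen B) (h : ∀ μ ∈ K, (μ A : ℝ) < μ B) : (ν A : ℝ) ≤ ν B := by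
  obtain ⟨C, hC, hCB, hCA⟩ := hgood A B hA hB fun μ hμ => by exact_mod_cast h μ hμ
  rw [← hν C A hC hA hCA]
  exact coe_mono_real ν hCB

variable [BorelSpace X]

theorem coe_diff_real (μ : ProbabilityMeasure X) {A U : Set X} (hA : IsClopen A) (h : A ⊆ U) :
    (μ (U \ A) : ℝ) = μ U - μ A := by
  have := coe_inter_add_diff μ U hA
  rw [inter_eq_right.2 h] at this
  rw [← this]
  push_cast
  ring

/-- Greedy packing: as long as there is room left in `U` for every `μ ∈ K`, a `K`-equivalent copy
of a clopen set can be added disjointly, and `ν` sees it as such. -/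
theorem Realized.add (hgood : Good K) (hν : RespectsEquiv K ν) {U V : Set X} (hU : IsClopen U)
    {a b : ProbabilityMeasure X → ℝ} {s t : ℝ} (ha : Realized K ν U a s)
    (hb : Realized K ν V b t) (hlt : ∀ μ ∈ K, a μ + b μ < μ U) :
    Realized K ν U (fun μ => a μ + b μ) (s + t) := by
  obtain ⟨D, hD, hDU, hDa, hDs⟩ := ha
  obtain ⟨E, hE, -, hEb, hEt⟩ := hb
  obtain ⟨C, hC, hCU, hCE⟩ := hgood E (U \ D) hE (hU.diff hD) fun μ hμ => by
    rw [← NNReal.coe_lt_coe, coe_diff_real μ hD hDU, hDa μ hμ, hEb μ hμ]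
    linarith [hlt μ hμ]
  have hdisj : (D ∪ C) \ D = C := by
    rw [union_sdiff_left]
    exact (disjoint_left.2 fun x hx => (hCU hx).2).sdiff_eq_left
  have hun : ∀ μ : ProbabilityMeasure X, (μ (D ∪ C) : ℝ) = μ D + μ C := fun μ => by
    have := coe_diff_real μ hD (subset_union_left (s := D) (t := C))
    rw [hdisj] at this
    linarith
  refine ⟨D ∪ C, hD.union hC, union_subset hDU (hCU.trans sdiff_subset), fun μ hμ => ?_, ?_⟩
  · rw [hun, hDa μ hμ, hCE μ hμ, hEb μ hμ]
  · rw [hun, hDs, hν C E hC hE hCE, hEt]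

theorem Realized.nsmul (hgood : Good K) (hν : RespectsEquiv K ν) {U B : Set X} (hU : IsClopen U)
    (hB : IsClopen B) {n : ℕ} (hn : ∀ μ ∈ K, n * (μ B : ℝ) < μ U) :
    Realized K ν U (fun μ => n * (μ B : ℝ)) (n * (ν B : ℝ)) := by
  induction n with
  | zero => simpa using Realized.empty U
  | succ n ih =>
    have h1 : ∀ μ ∈ K, n * (μ B : ℝ) + μ B < μ U := fun μ hμ => by
      have := hn μ hμ
      push_cast at this
      linarith
    have := (ih fun μ hμ => by linarith [h1 μ hμ, (μ B).coe_nonneg]).add hgood hν hU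
      (⟨B, hB, subset_rfl, fun _ _ => rfl, rfl⟩ : Realized K ν B (fun μ => (μ B : ℝ)) (ν B)) h1
    simpa only [Nat.cast_succ, add_mul, one_mul] using this

theorem Realized.sum (hgood : Good K) (hν : RespectsEquiv K ν) {ι : Type*} (F : Finset ι)
    {W : ι → Set X} (hW : ∀ i, IsClopen (W i)) (hF : ∀ μ ∈ K, ∑ i ∈ F, (μ (W i) : ℝ) < 1) :
    Realized K ν univ (fun μ => ∑ i ∈ F, (μ (W i) : ℝ)) (∑ i ∈ F, (ν (W i) : ℝ)) := by
  classical
  induction F using Finset.induction_on with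
  | empty => simpa using Realized.empty univ
  | insert i F hi ih =>
    simp only [Finset.sum_insert hi] at hF ⊢
    have := (ih fun μ hμ => by linarith [hF μ hμ, (μ (W i)).coe_nonneg]).add hgood hν
      isClopen_univ (⟨W i, hW i, subset_rfl, fun _ _ => rfl, rfl⟩ :
        Realized K ν (W i) (fun μ => (μ (W i) : ℝ)) (ν (W i)))
      (fun μ hμ => by simpa [add_comm] using hF μ hμ)
    simpa only [add_comm] using this

/-- `M` disjoint copies of a set which is uniformly smaller than `1 / M` fit in `X`. -/
theorem small_of_small (hgood : Good K) (hν : RespectsEquiv K ν) {A : Set X} (hA : IsClopen A)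
    (M : ℕ) (h : ∀ μ ∈ K, M * (μ A : ℝ) < 1) : M * (ν A : ℝ) ≤ 1 := by
  obtain ⟨D, -, -, -, hD⟩ := Realized.nsmul hgood hν isClopen_univ hA (n := M)
    (fun μ hμ => by simpa using h μ hμ)
  rw [← hD]
  exact coe_le_one_real ν D

/-- Every fraction `c` of a clopen set `U` is approximated by a clopen subset, simultaneously for
all measures of `K` and for `ν`. The subset is a union of `⌊c * n⌋` out of `n = 2 * M` disjoint
copies of a set of measure about `1 / n` of that of `U`. -/
theorem exists_fraction (hgood : Good K) (hdiv : ApproximatelyDivisible K)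
    (hfull : ∀ μ ∈ K, FullSupport μ) (hν : RespectsEquiv K ν) {U : Set X} (hU : IsClopen U)
    {c : ℝ} (hc0 : 0 ≤ c) (hc1 : c ≤ 1) {η : ℝ} (hη : 0 < η) :
    ∃ W, IsClopen W ∧ (∀ μ ∈ K, |(μ W : ℝ) - c * μ U| ≤ η) ∧ |(ν W : ℝ) - c * ν U| ≤ η := by
  rcases U.eq_empty_or_nonempty with rfl | hne
  · exact ⟨∅, isClopen_empty, by simp [hη.le], by simp [hη.le]⟩
  obtain ⟨M, hM⟩ := exists_nat_gt (3 / η)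
  have hM0 : (0 : ℝ) < M := lt_trans (by positivity) hM
  have hMη : 3 / (M : ℝ) ≤ η := by
    rw [div_le_iff₀ hM0]
    rw [div_lt_iff₀ hη] at hM
    linarith
  obtain ⟨B, hB, hBU, hBμ⟩ := hdiv U hU (2 * M + 1) (by omega) (1 / (2 * M + 1)) (by positivity)
  push_cast at hBμ
  have hN : (0 : ℝ) < 2 * M + 1 := by positivity
  have hBsmall : ∀ μ ∈ K, (μ B : ℝ) ≤ 1 / (2 * M + 1) := fun μ hμ => by
    rw [le_div_iff₀ hN]
    linarith [(hBμ μ hμ).2, coe_le_one_real μ U]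
  have hroom : ∀ μ ∈ K, ((2 * M : ℕ) : ℝ) * (μ B : ℝ) < μ U := fun μ hμ => by
    push_cast
    have h1 : (0 : ℝ) < μ U := by exact_mod_cast hfull μ hμ U hU.isOpen hne
    rcases (μ B).coe_nonneg.eq_or_lt with h0 | h0
    · rw [← h0]
      simpa using h1
    · linarith [(hBμ μ hμ).2]
  obtain ⟨D, hD, hDU, hDμ, hDν⟩ := Realized.nsmul hgood hν hU hB hroom
  push_cast at hDμ hDν
  have hrest : ∀ μ ∈ K, (μ (U \ D) : ℝ) ≤ 2 / (2 * M + 1) := fun μ hμ => by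
    rw [coe_diff_real μ hD hDU, hDμ μ hμ]
    have h1 := (hBμ μ hμ).1
    have h2 := hBsmall μ hμ
    have h3 : (2 : ℝ) / (2 * M + 1) = 1 / (2 * M + 1) + 1 / (2 * M + 1) := by ring
    linarith
  have hrestν : (ν (U \ D) : ℝ) ≤ 1 / M := by
    rw [le_div_iff₀ hM0, mul_comm]
    refine small_of_small hgood hν (hU.diff hD) M fun μ hμ => ?_
    calc (M : ℝ) * (μ (U \ D) : ℝ) ≤ M * (2 / (2 * M + 1)) :=
          mul_le_mul_of_nonneg_left (hrest μ hμ) hM0.le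
      _ < 1 := by
          rw [mul_div_assoc', div_lt_one hN]
          linarith
  have hcn : 0 ≤ c * (2 * M) := by positivity
  have hm1 := Nat.floor_le hcn
  have hm2 := (Nat.lt_floor_add_one (c * (2 * M))).le
  set m := ⌊c * (2 * M)⌋₊ with hm
  have hmn : (m : ℝ) ≤ 2 * M := hm1.trans (mul_le_of_le_one_left (by positivity) hc1)
  obtain ⟨W, hW, -, hWμ, hWν⟩ := Realized.nsmul (n := m) hgood hν hU hB fun μ hμ => by
    refine lt_of_le_of_lt ?_ (hroom μ hμ)
    push_cast
    exact mul_le_mul_of_nonneg_right hmn (μ B).coe_nonneg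
  -- rounding `c * n` down costs at most one copy of `B`, the rest of `U` is negligible
  have est : ∀ b u : ℝ, 0 ≤ b → b ≤ 1 / M → 2 * M * b ≤ u → u - 2 * M * b ≤ 2 / M →
      |m * b - c * u| ≤ η := by
    intro b u hb0 hb1 hbu hub
    have h1 : m * b ≤ c * (2 * M) * b := mul_le_mul_of_nonneg_right hm1 hb0
    have h2 : c * (2 * M) * b ≤ (m + 1) * b := mul_le_mul_of_nonneg_right hm2 hb0
    have h3 : 0 ≤ c * (u - 2 * M * b) := mul_nonneg hc0 (by linarith)
    have h4 : c * (u - 2 * M * b) ≤ 1 * (u - 2 * M * b) :=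
      mul_le_mul_of_nonneg_right hc1 (by linarith)
    have h5 : (3 : ℝ) / M = 1 / M + 2 / M := by ring
    rw [abs_le]
    constructor <;> nlinarith
  have hMN : (1 : ℝ) / (2 * M + 1) ≤ 1 / M :=
    one_div_le_one_div_of_le hM0 (by linarith)
  refine ⟨W, hW, fun μ hμ => ?_, ?_⟩
  · rw [hWμ μ hμ]
    refine est _ _ (μ B).coe_nonneg ((hBsmall μ hμ).trans hMN) ?_ ?_
    · have := hroom μ hμ
      push_cast at this
      exact this.le
    · have := hrest μ hμ
      rw [coe_diff_real μ hD hDU, hDμ μ hμ] at this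
      have h3 : (2 : ℝ) / (2 * M + 1) = 2 * (1 / (2 * M + 1)) := by ring
      have h4 : (2 : ℝ) / M = 2 * (1 / M) := by ring
      linarith
  · rw [hWν]
    rw [coe_diff_real ν hD hDU, hDν] at hrestν
    have hDle := coe_mono_real ν hDU
    rw [hDν] at hDle
    refine est _ _ (ν B).coe_nonneg ?_ hDle ?_
    · rw [le_div_iff₀ hM0]
      nlinarith [coe_le_one_real ν U, (ν B).coe_nonneg]
    · have h4 : (2 : ℝ) / M = 1 / M + 1 / M := by ring
      have : (0 : ℝ) < 1 / M := by positivity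
      linarith

/-- No nonnegative combination of clopen sets separates `ν` from `K`. -/
theorem not_separated (hgood : Good K) (hdiv : ApproximatelyDivisible K) (hne : K.Nonempty)
    (hfull : ∀ μ ∈ K, FullSupport μ) (hν : RespectsEquiv K ν) {ι : Type*} (F : Finset ι)
    {V : ι → Set X} (hV : ∀ i, IsClopen (V i)) {d : ι → ℝ} (hd : ∀ i, 0 ≤ d i) {u : ℝ}
    (hνu : ∑ i ∈ F, d i * (ν (V i) : ℝ) < u) (δ : ℝ) (hδ : 0 < δ)
    (hμu : ∀ μ ∈ K, u + δ < ∑ i ∈ F, d i * (μ (V i) : ℝ)) : False := by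
  -- rescale the coefficients so that their sum is at most `1 / 2`
  set T : ℝ := ∑ i ∈ F, d i with hT
  have hT0 : 0 ≤ T := Finset.sum_nonneg fun i _ => hd i
  set r : ℝ := 1 / (2 * (T + 1)) with hr
  have hr0 : 0 < r := by positivity
  have hrT : r * T ≤ 1 / 2 := by
    rw [hr, one_div_mul_eq_div, div_le_div_iff₀ (by positivity) (by norm_num)]
    linarith
  have hdT : ∀ i ∈ F, d i ≤ T := fun i hi => Finset.single_le_sum (fun j _ => hd j) hi
  set k : ℝ := (F.card : ℝ) with hk
  have hk0 : 0 ≤ k := Nat.cast_nonneg _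
  -- the error allowed in each approximation: the total stays below `r * δ / 2` and `1 / 4`
  set η : ℝ := min (r * δ / 2) (1 / 4) / (k + 2) with hη
  have hη0 : 0 < η := div_pos (lt_min (by positivity) (by norm_num)) (by positivity)
  have hηk : (k + 2) * η = min (r * δ / 2) (1 / 4) := by
    rw [hη]; field_simp
  have hη1 : (k + 2) * η ≤ r * δ / 2 := hηk.le.trans (min_le_left _ _)
  have hη2 : (k + 2) * η ≤ 1 / 4 := hηk.le.trans (min_le_right _ _)
  have hW : ∀ i, ∃ W, IsClopen W ∧ (i ∈ F → (∀ μ ∈ K, |(μ W : ℝ) - r * d i * μ (V i)| ≤ η) ∧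
      |(ν W : ℝ) - r * d i * ν (V i)| ≤ η) := by
    intro i
    by_cases hi : i ∈ F
    · have h1 : r * d i ≤ 1 := by
        have := mul_le_mul_of_nonneg_left (hdT i hi) hr0.le
        linarith
      obtain ⟨W, hW, h2, h3⟩ := exists_fraction hgood hdiv hfull hν (hV i)
        (mul_nonneg hr0.le (hd i)) h1 hη0
      exact ⟨W, hW, fun _ => ⟨h2, h3⟩⟩
    · exact ⟨∅, isClopen_empty, fun h => absurd h hi⟩
  choose W hWc hWF using hW
  have hsum : ∀ μ : ProbabilityMeasure X,
      (∀ i ∈ F, |(μ (W i) : ℝ) - r * d i * μ (V i)| ≤ η) →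
      |∑ i ∈ F, (μ (W i) : ℝ) - r * ∑ i ∈ F, d i * (μ (V i) : ℝ)| ≤ k * η := by
    intro μ h
    rw [Finset.mul_sum, ← Finset.sum_sub_distrib]
    refine (Finset.abs_sum_le_sum_abs _ _).trans ?_
    rw [hk, ← nsmul_eq_mul]
    refine Finset.sum_le_card_nsmul _ _ _ fun i hi => ?_
    rw [← mul_assoc]
    exact h i hi
  have hsumμ := fun μ hμ => abs_le.1 (hsum μ fun i hi => (hWF i hi).1 μ hμ)
  have hsumν := abs_le.1 (hsum ν fun i hi => (hWF i hi).2)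
  have hle : ∀ μ : ProbabilityMeasure X, r * ∑ i ∈ F, d i * (μ (V i) : ℝ) ≤ 1 / 2 := fun μ =>
    (mul_le_mul_of_nonneg_left (Finset.sum_le_sum fun i _ =>
      mul_le_of_le_one_right (hd i) (coe_le_one_real μ _)) hr0.le).trans hrT
  obtain ⟨D, hD, -, hDμ, hDν⟩ := Realized.sum hgood hν F hWc fun μ hμ => by
    have h1 := hle μ
    have h2 := (hsumμ μ hμ).2
    linarith
  -- a clopen set `E` whose size lies strictly between those of `D` for `ν` and for `K`
  have hνV : 0 ≤ ∑ i ∈ F, d i * (ν (V i) : ℝ) :=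
    Finset.sum_nonneg fun i _ => mul_nonneg (hd i) NNReal.zero_le_coe
  have hu0 : 0 ≤ r * (u + δ / 2) := mul_nonneg hr0.le (by linarith)
  have hu1 : r * (u + δ / 2) ≤ 1 := by
    obtain ⟨μ, hμ⟩ := hne
    have h1 := hle μ
    have h2 := mul_le_mul_of_nonneg_left (hμu μ hμ).le hr0.le
    nlinarith
  obtain ⟨E, hE, hEμ, hEν⟩ := exists_fraction hgood hdiv hfull hν isClopen_univ hu0 hu1 hη0
  have h1 := le_of_forall_lt hgood hν hE hD fun μ hμ => by
    have h1 := (abs_le.1 (hEμ μ hμ)).2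
    have h2 := (hsumμ μ hμ).1
    have h3 := mul_lt_mul_of_pos_left (hμu μ hμ) hr0
    rw [hDμ μ hμ]
    simp only [ProbabilityMeasure.coeFn_univ, NNReal.coe_one, mul_one] at h1
    nlinarith
  have h2 := (abs_le.1 hEν).1
  simp only [ProbabilityMeasure.coeFn_univ, NNReal.coe_one, mul_one] at h2
  have h3 := mul_lt_mul_of_pos_left hνu hr0
  rw [hDν] at h1
  nlinarith [hsumν.2]

end

/-! ### Separation by finitely many clopen sets -/

section

variable {X : Type*} [TopologicalSpace X] [MetrizableSpace X] [MeasurableSpace X] [BorelSpace X]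

theorem continuous_coe_clopen {U : Set X} (hU : IsClopen U) :
    Continuous fun μ : ProbabilityMeasure X => (μ U : ℝ) := by
  refine NNReal.continuous_coe.comp (continuous_iff_continuousAt.2 fun μ => ?_)
  exact ProbabilityMeasure.tendsto_measure_of_isClopen_of_tendsto tendsto_id hU

variable [CompactSpace X] [TotallyDisconnectedSpace X]

/-- A measure outside a compact set `K` is distinguished from all of `K` by finitely many clopen
sets. -/
theorem exists_finset_clopens {K : Set (ProbabilityMeasure X)} (hK : IsCompact K)
    {ν : ProbabilityMeasure X} (hν : ν ∉ K) :
    ∃ F : Finset (Clopens X), ∀ μ ∈ K, ∃ U ∈ F, (μ (U : Set X) : ℝ) ≠ ν (U : Set X) := by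
  have hcover : K ⊆ ⋃ U : Clopens X,
      {μ : ProbabilityMeasure X | (μ (U : Set X) : ℝ) ≠ ν (U : Set X)} := by
    intro μ hμ
    by_contra hcon
    simp only [mem_iUnion, mem_ofPred_eq, not_exists, not_not] at hcon
    refine hν ?_
    have heq : (μ : Measure X) = (ν : Measure X) := measure_ext_clopen fun U hU => by
      have := hcon ⟨U, hU⟩
      rw [NNReal.coe_inj] at this
      rw [← ProbabilityMeasure.ennreal_coeFn_eq_coeFn_toMeasure,
        ← ProbabilityMeasure.ennreal_coeFn_eq_coeFn_toMeasure]
      exact congrArg _ this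
    have : μ = ν := Subtype.ext heq
    rwa [← this]
  obtain ⟨F, hF⟩ := hK.elim_finite_subcover _
    (fun U => isOpen_ne_fun (continuous_coe_clopen U.isClopen) continuous_const) hcover
  refine ⟨F, fun μ hμ => ?_⟩
  simpa using hF hμ

/-- Hahn–Banach in the finite-dimensional space of values on finitely many clopen sets. -/
theorem exists_separation {K : Set (ProbabilityMeasure X)} (hK : IsCompact K)
    (hconv : ProbConvex K) {ν : ProbabilityMeasure X} (hν : ν ∉ K) :
    ∃ (F : Finset (Clopens X)) (c : F → ℝ) (u δ : ℝ), 0 < δ ∧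
      (∑ i, c i * (ν (i : Set X) : ℝ) < u) ∧
      ∀ μ ∈ K, u + δ < ∑ i, c i * (μ (i : Set X) : ℝ) := by
  classical
  obtain ⟨F, hF⟩ := exists_finset_clopens hK hν
  let v : ProbabilityMeasure X → F → ℝ := fun μ i => (μ (i : Set X) : ℝ)
  have hvc : Continuous v := continuous_pi fun i => continuous_coe_clopen i.1.isClopen
  have hcomp : IsCompact (v '' K) := hK.image hvc
  have hconv' : Convex ℝ (v '' K) := by
    rintro _ ⟨μ₁, h₁, rfl⟩ _ ⟨μ₂, h₂, rfl⟩ a b ha hb hab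
    lift a to NNReal using ha
    lift b to NNReal using hb
    obtain ⟨μ, hμ, e⟩ := hconv ⟨μ₁, h₁, rfl⟩ ⟨μ₂, h₂, rfl⟩ zero_le zero_le
      (by exact_mod_cast hab)
    refine ⟨μ, hμ, funext fun i => ?_⟩
    have := congrArg (fun m : FiniteMeasure X => ((m (i : Set X) : NNReal) : ℝ)) e
    simpa [v] using this
  have hnot : v ν ∉ v '' K := by
    rintro ⟨μ, hμ, e⟩
    obtain ⟨U, hU, h⟩ := hF μ hμ
    exact h (congrFun e ⟨U, hU⟩)
  obtain ⟨l, s, t, hs, hst, ht⟩ := geometric_hahn_banach_compact_closed (convex_singleton (v ν))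
    isCompact_singleton hconv' hcomp.isClosed (disjoint_singleton_left.2 hnot)
  have hl : ∀ w : F → ℝ, l w = ∑ i, l (Pi.single i 1) * w i := fun w => by
    conv_lhs => rw [← Finset.univ_sum_single w, map_sum]
    refine Finset.sum_congr rfl fun i _ => ?_
    rw [show Pi.single i (w i) = w i • (Pi.single i (1 : ℝ) : F → ℝ) by
      rw [← Pi.single_smul, smul_eq_mul, mul_one], map_smul, smul_eq_mul, mul_comm]
  refine ⟨F, fun i => l (Pi.single i 1), s, t - s, by linarith, ?_, fun μ hμ => ?_⟩
  · rw [← hl (v ν)]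
    exact hs _ rfl
  · rw [add_sub_cancel, ← hl (v μ)]
    exact ht _ ⟨μ, hμ, rfl⟩

end

end DynSimplex

/-! ### The invariant measure lies in `K` -/

theorem G_invariant_mem_of_dynamicalSimplex
    {X : Type*} [TopologicalSpace X] [CompactSpace X]
    [TopologicalSpace.MetrizableSpace X] [TotallyDisconnectedSpace X] [PerfectSpace X]
    [Nonempty X] [MeasurableSpace X] [BorelSpace X]
    (K : Set (MeasureTheory.ProbabilityMeasure X)) (hK : DynSimplex.DynamicalSimplex K)
    (ν : MeasureTheory.ProbabilityMeasure X)
    (hν : ∀ h : X ≃ₜ X, DynSimplex.PreservesAll K h → DynSimplex.Preserves h ν) :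
    ν ∈ K := by
  classical
  obtain ⟨hne, hcomp, hconv, hreg, hgood, hdiv⟩ := hK
  have hfull : ∀ μ ∈ K, DynSimplex.FullSupport μ := fun μ hμ => (hreg μ hμ).2
  have hresp : DynSimplex.RespectsEquiv K ν := by
    intro A B hA hB hAB
    obtain ⟨g, hg, rfl⟩ := DynSimplex.exists_homeo hne hgood hfull hA hB hAB
    have h1 := congrArg (fun m : Measure X => (m B).toNNReal) (hν g hg)
    simp only [Measure.map_apply g.continuous.measurable hB.isOpen.measurableSet] at h1
    exact h1
  by_contra hnot
  obtain ⟨F, c, u, δ, hδ, hcν, hcμ⟩ := DynSimplex.exists_separation hcomp hconv hnot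
  -- a negative coefficient on `U` is traded for a positive one on the complement of `U`
  let V : F → Set X := fun i => if 0 ≤ c i then (i : Set X) else (i : Set X)ᶜ
  have hV : ∀ i, IsClopen (V i) := fun i => by
    simp only [V]
    split_ifs
    · exact i.1.isClopen
    · exact i.1.isClopen.compl
  have hshift : ∀ μ : ProbabilityMeasure X, ∑ i, |c i| * (μ (V i) : ℝ) =
      ∑ i, c i * (μ (i : Set X) : ℝ) + ∑ i, (if 0 ≤ c i then 0 else -c i) := fun μ => by
    rw [← Finset.sum_add_distrib]
    refine Finset.sum_congr rfl fun i _ => ?_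
    simp only [V]
    split_ifs with h
    · rw [abs_of_nonneg h, add_zero]
    · rw [abs_of_neg (not_le.1 h), Set.compl_eq_univ_sdiff,
        DynSimplex.coe_diff_real μ i.1.isClopen (Set.subset_univ _)]
      simp
      ring
  refine DynSimplex.not_separated hgood hdiv hne hfull hresp Finset.univ hV
    (d := fun i => |c i|) (fun i => abs_nonneg _)
    (u := u + ∑ i, (if 0 ≤ c i then 0 else -c i)) ?_ δ hδ fun μ hμ => ?_
  · rw [hshift]
    linarith
  · rw [hshift]
    linarith [hcμ μ hμ]
end

section
/- Let X be a Cantor space, K a dynamical simplex on X, and G the group of all homeomorphisms of X preserving every measure in K. If g ∈ G is K-saturated, then the set of g-invariant Borel probability measures on X equals K. -/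
/-!
Every measure of `K` is `g`-invariant by hypothesis, so the content is that a `g`-invariant
probability measure `ν` lies in `K`.

Elements of the topological full group of `g` preserve the `ν`-measure of clopen sets, so by
saturation `K`-equivalent clopen sets have equal `ν`-measure (`measure_eq_of_saturated`). Goodness
of `K` therefore holds with copies that are also copies for `ν` (`GoodWith`); in particular
`μ A < μ B` for all `μ ∈ K` implies `ν A ≤ ν B`.

This comparison extends from clopen sets to real combinations of them. Clopen sets uniformly small
for `K` are small for `ν` (`GoodWith.exists_small`), hence approximate divisibility by large
integers holds for `ν` along with `K` (`GoodWith.exists_division`). Packing disjoint copies of the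
pieces obtained by division realises a combination `∑ cᵢ ρ(Aᵢ)` with `cᵢ ≥ 0` and `∑ cᵢ < 1`, up to
a small error, as `ρ(P)` for one clopen `P` and all `ρ ∈ K ∪ {ν}` (`GoodWith.exists_combination`).
Comparing the sets obtained from the positive and the negative parts of the coefficients shows that
no real combination separates `ν` from `K` (`GoodWith.sum_lt`).

By Hahn–Banach separation in finite dimension, on each finite family of clopen sets `ν` agrees with
some member of `K` (`GoodWith.exists_agree`). Compactness of `K` gives a single member agreeing
with `ν` on all clopen sets, and the clopen sets form a π-system generating the Borel sets.
-/

open MeasureTheory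

namespace DynSimplex

set_option linter.unusedSectionVars false

variable {X : Type*} [TopologicalSpace X] [MeasurableSpace X] [BorelSpace X]

/-! ### Invariant measures and saturation -/

lemma preserves_measure_image {g : X ≃ₜ X} {ν : ProbabilityMeasure X} (h : Preserves g ν)
    (n : ℤ) (S : Set X) :
    (ν : Measure X) ((g.toEquiv ^ n) '' S) = (ν : Measure X) S := by
  have h1 : ∀ T : Set X, (ν : Measure X) (g ⁻¹' T) = (ν : Measure X) T := by
    intro T
    have h2 := congrArg (fun m : Measure X => m T) h
    have h3 : (ν : Measure X).map g T = (ν : Measure X) (g ⁻¹' T) :=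
      g.toMeasurableEquiv.map_apply T
    simpa [h3] using h2
  have himg : ∀ T : Set X, (ν : Measure X) (g.toEquiv '' T) = (ν : Measure X) T := by
    intro T
    rw [← h1 (g.toEquiv '' T)]
    congr 1
    exact g.toEquiv.preimage_image T
  have hinv : ∀ T : Set X, (ν : Measure X) ((g.toEquiv⁻¹ : Equiv.Perm X) '' T) = (ν : Measure X) T := by
    intro T
    rw [← himg ((g.toEquiv⁻¹ : Equiv.Perm X) '' T), Set.image_image]
    simp
  induction n generalizing S with
  | zero => simp
  | succ n ih =>
    rw [zpow_add_one, Equiv.Perm.coe_mul, Set.image_comp, ih, himg]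
  | pred n ih =>
    rw [zpow_sub_one, Equiv.Perm.coe_mul, Set.image_comp, ih, hinv]

lemma measure_eq_of_saturated {K : Set (ProbabilityMeasure X)} {g : X ≃ₜ X}
    (hsat : KSaturated K g) {ν : ProbabilityMeasure X} (hν : Preserves g ν) {U V : Set X}
    (hU : IsClopen U) (hV : IsClopen V) (hUV : ∀ μ ∈ K, μ U = μ V) :
    (ν : Measure X) U = (ν : Measure X) V := by
  -- Subadditivity gives one inequality, and the hypotheses are symmetric in `U` and `V`.
  have key : ∀ U V : Set X, IsClopen U → IsClopen V → (∀ μ ∈ K, μ U = μ V) →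
      (ν : Measure X) V ≤ (ν : Measure X) U := by
    intro U V hU hV hUV
    obtain ⟨h, ⟨k, A, n, hA, hpart, hh⟩, rfl⟩ := hsat U V hU hV hUV
    have hsub : h '' U ⊆ ⋃ i, (g.toEquiv ^ (n i)) '' (U ∩ A i) := by
      rintro _ ⟨x, hx, rfl⟩
      obtain ⟨i, hi, -⟩ := hpart x
      exact Set.mem_iUnion.2 ⟨i, x, ⟨hx, hi⟩, (hh i x hi).symm⟩
    have hUeq : U = ⋃ i, U ∩ A i := by
      ext x
      obtain ⟨i, hi, -⟩ := hpart x
      simp only [Set.mem_iUnion, Set.mem_inter_iff]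
      exact ⟨fun hx => ⟨i, hx, hi⟩, fun ⟨_, hx, _⟩ => hx⟩
    have hdisj : Pairwise (Function.onFun Disjoint fun i => U ∩ A i) := by
      intro i j hij
      refine Set.disjoint_left.2 fun x hx hx' => hij ?_
      exact (hpart x).unique hx.2 hx'.2
    calc (ν : Measure X) (h '' U)
        ≤ ∑ i, (ν : Measure X) ((g.toEquiv ^ (n i)) '' (U ∩ A i)) :=
          (measure_mono hsub).trans (measure_iUnion_fintype_le _ _)
      _ = ∑ i, (ν : Measure X) (U ∩ A i) := by simp only [preserves_measure_image hν]
      _ = (ν : Measure X) U := by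
          conv_rhs => rw [hUeq]
          rw [measure_iUnion hdisj fun i => (hU.inter (hA i)).isOpen.measurableSet, tsum_fintype]
  exact le_antisymm (key V U hV hU fun μ hμ => (hUV μ hμ).symm) (key U V hU hV hUV)

/-! ### Goodness relative to an additional measure -/

/-- Goodness of `K` in which the copies produced are also copies for the extra measure `ν`. -/
def GoodWith (K : Set (ProbabilityMeasure X)) (ν : ProbabilityMeasure X) : Prop :=
  ∀ A B : Set X, IsClopen A → IsClopen B →
    (∀ μ ∈ K, (μ : Measure X).real A < (μ : Measure X).real B) →
    ∃ C : Set X, IsClopen C ∧ C ⊆ B ∧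
      ∀ ρ ∈ insert ν K, (ρ : Measure X).real C = (ρ : Measure X).real A

lemma goodWith_of_saturated {K : Set (ProbabilityMeasure X)} (hK : Good K) {g : X ≃ₜ X}
    (hsat : KSaturated K g) {ν : ProbabilityMeasure X} (hν : Preserves g ν) :
    GoodWith K ν := by
  intro A B hA hB hlt
  obtain ⟨C, hC, hCB, hCA⟩ := hK A B hA hB fun μ hμ => NNReal.coe_lt_coe.1 (hlt μ hμ)
  refine ⟨C, hC, hCB, ?_⟩
  rintro ρ (rfl | hρ)
  · exact congrArg ENNReal.toReal (measure_eq_of_saturated hsat hν hC hA hCA)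
  · exact congrArg NNReal.toReal (hCA ρ hρ)

/-- Disjoint copies of finitely many clopen sets fit into a clopen set as soon as every measure
of `K` leaves strictly enough room. -/
lemma GoodWith.exists_packing {K : Set (ProbabilityMeasure X)} {ν : ProbabilityMeasure X}
    (hG : GoodWith K ν) {ι : Type*} (s : Finset ι) (D : ι → Set X) (hD : ∀ i, IsClopen (D i))
    {A : Set X} (hA : IsClopen A)
    (hlt : ∀ μ ∈ K, ∑ i ∈ s, (μ : Measure X).real (D i) < (μ : Measure X).real A) :
    ∃ C : Set X, IsClopen C ∧ C ⊆ A ∧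
      ∀ ρ ∈ insert ν K, (ρ : Measure X).real C = ∑ i ∈ s, (ρ : Measure X).real (D i) := by
  classical
  induction s using Finset.induction_on with
  | empty => exact ⟨∅, isClopen_empty, Set.empty_subset _, by simp⟩
  | insert a s ha ih =>
    simp only [Finset.sum_insert ha] at hlt ⊢
    obtain ⟨C, hC, hCA, hCs⟩ := ih fun μ hμ =>
      lt_of_le_of_lt (le_add_of_nonneg_left measureReal_nonneg) (hlt μ hμ)
    obtain ⟨C', hC', hC'A, hCa⟩ := hG (D a) (A \ C) (hD a) (hA.diff hC) fun μ hμ => by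
      rw [measureReal_sdiff hCA hC.isOpen.measurableSet, hCs μ (Or.inr hμ)]
      linarith [hlt μ hμ]
    refine ⟨C' ∪ C, hC'.union hC, Set.union_subset (hC'A.trans Set.sdiff_subset) hCA, ?_⟩
    intro ρ hρ
    rw [measureReal_union (Set.disjoint_of_subset_left hC'A Set.disjoint_sdiff_left)
      hC.isOpen.measurableSet, hCs ρ hρ, hCa ρ hρ]

lemma GoodWith.le_of_lt {K : Set (ProbabilityMeasure X)} {ν : ProbabilityMeasure X}
    (hG : GoodWith K ν) {A B : Set X} (hA : IsClopen A) (hB : IsClopen B)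
    (hlt : ∀ μ ∈ K, (μ : Measure X).real A < (μ : Measure X).real B) :
    (ν : Measure X).real A ≤ (ν : Measure X).real B := by
  obtain ⟨C, -, hCB, hCA⟩ := hG A B hA hB hlt
  rw [← hCA ν (Or.inl rfl)]
  exact measureReal_mono hCB

/-- Convexity over `ℝ≥0` in the finite measures gives real convexity of the value vectors. -/
lemma convex_image {K : Set (ProbabilityMeasure X)} (hK : ProbConvex K) {ι : Type*}
    (A : ι → Set X) :
    Convex ℝ ((fun (μ : ProbabilityMeasure X) i => (μ : Measure X).real (A i)) '' K) := by
  rintro _ ⟨μ₁, h₁, rfl⟩ _ ⟨μ₂, h₂, rfl⟩ a b ha hb hab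
  lift a to NNReal using ha
  lift b to NNReal using hb
  obtain ⟨μ, hμ, heq⟩ := hK ⟨μ₁, h₁, rfl⟩ ⟨μ₂, h₂, rfl⟩ (zero_le (a := a)) (zero_le (a := b))
    (by exact_mod_cast hab)
  refine ⟨μ, hμ, funext fun i => ?_⟩
  have h := congrArg (fun m : FiniteMeasure X => ((m (A i) : NNReal) : ℝ)) heq
  simpa using h

/-! ### Divisibility and combinations of clopen sets -/

section Cantor

variable [CompactSpace X] [TopologicalSpace.MetrizableSpace X] [TotallyDisconnectedSpace X]

lemma exists_isClopen_half [PerfectSpace X] (ν : ProbabilityMeasure X) {A : Set X}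
    (hA : IsClopen A) (hne : A.Nonempty) :
    ∃ B : Set X, IsClopen B ∧ B.Nonempty ∧
      (ν : Measure X).real B ≤ (ν : Measure X).real A / 2 := by
  obtain ⟨x, hx⟩ := hne
  obtain ⟨y, hy, hxy⟩ := (preperfect_iff_nhds.1 (PerfectSpace.univ_preperfect (α := X))) x
    (Set.mem_univ x) A (hA.isOpen.mem_nhds hx)
  obtain ⟨U, hU, hxU, hyU⟩ := exists_isClopen_of_totally_separated hxy.symm
  have hsum : (ν : Measure X).real (A ∩ U) + (ν : Measure X).real (A \ U)
      = (ν : Measure X).real A := measureReal_inter_add_sdiff hU.isOpen.measurableSet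
  rcases le_total ((ν : Measure X).real (A ∩ U)) ((ν : Measure X).real (A \ U)) with h | h
  · exact ⟨A ∩ U, hA.inter hU, ⟨x, hx, hxU⟩, by linarith⟩
  · exact ⟨A \ U, hA.diff hU, ⟨y, hy.1, hyU⟩, by linarith⟩

lemma exists_isClopen_small [PerfectSpace X] [Nonempty X] (ν : ProbabilityMeasure X) {ε : ℝ}
    (hε : 0 < ε) :
    ∃ B : Set X, IsClopen B ∧ B.Nonempty ∧ (ν : Measure X).real B < ε := by
  have h : ∀ k : ℕ, ∃ B : Set X, IsClopen B ∧ B.Nonempty ∧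
      (ν : Measure X).real B ≤ (1 / 2 : ℝ) ^ k := by
    intro k
    induction k with
    | zero => exact ⟨Set.univ, isClopen_univ, Set.univ_nonempty, by simp⟩
    | succ k ih =>
      obtain ⟨A, hA, hne, hle⟩ := ih
      obtain ⟨B, hB, hBne, hBle⟩ := exists_isClopen_half ν hA hne
      exact ⟨B, hB, hBne, by rw [pow_succ]; linarith⟩
  obtain ⟨k, hk⟩ := exists_pow_lt_of_lt_one hε (by norm_num : (1 / 2 : ℝ) < 1)
  obtain ⟨B, hB, hBne, hBle⟩ := h k
  exact ⟨B, hB, hBne, hBle.trans_lt hk⟩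

lemma continuous_measureReal {A : Set X} (hA : IsClopen A) :
    Continuous fun μ : ProbabilityMeasure X => (μ : Measure X).real A := by
  have h : Continuous fun μ : ProbabilityMeasure X => μ A :=
    continuous_iff_continuousAt.2 fun μ =>
      ProbabilityMeasure.tendsto_measure_of_null_frontier_of_tendsto Filter.tendsto_id
        (by simp [hA.frontier_eq])
  exact NNReal.continuous_coe.comp h

/-- On clopen sets, uniform smallness for `K` forces smallness for `ν`: such a set has a copy
inside a fixed clopen set of small `ν`-measure, on which `K` is bounded away from zero. -/
lemma GoodWith.exists_small [PerfectSpace X] [Nonempty X] {K : Set (ProbabilityMeasure X)}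
    (hK : DynamicalSimplex K) {ν : ProbabilityMeasure X} (hG : GoodWith K ν) {ε : ℝ}
    (hε : 0 < ε) :
    ∃ δ > 0, ∀ R : Set X, IsClopen R → (∀ μ ∈ K, (μ : Measure X).real R < δ) →
      (ν : Measure X).real R < ε := by
  obtain ⟨hne, hcomp, -, hfull, -, -⟩ := hK
  obtain ⟨D, hD, hDne, hDε⟩ := exists_isClopen_small ν hε
  obtain ⟨μ₀, hμ₀, hmin⟩ := hcomp.exists_isMinOn hne (continuous_measureReal hD).continuousOn
  refine ⟨(μ₀ : Measure X).real D, ?_, fun R hR hlt => ?_⟩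
  · exact NNReal.coe_pos.2 ((hfull μ₀ hμ₀).2 D hD.isOpen hDne)
  · exact (hG.le_of_lt hR hD fun μ hμ => (hlt μ hμ).trans_le (hmin hμ)).trans_lt hDε

/-- Approximate divisibility by large integers, valid for `ν` as well as for `K`. -/
lemma GoodWith.exists_division [PerfectSpace X] [Nonempty X] {K : Set (ProbabilityMeasure X)}
    (hK : DynamicalSimplex K) {ν : ProbabilityMeasure X} (hG : GoodWith K ν) {η : ℝ}
    (hη : 0 < η) :
    ∃ n₀ : ℕ, ∀ n ≥ n₀, ∀ A : Set X, IsClopen A → ∃ B : Set X, IsClopen B ∧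
      ∀ ρ ∈ insert ν K, (ρ : Measure X).real A - η ≤ n * (ρ : Measure X).real B ∧
        n * (ρ : Measure X).real B ≤ (ρ : Measure X).real A := by
  obtain ⟨δ', hδ', hsmall⟩ := hG.exists_small hK hη
  obtain ⟨-, -, -, hfull, -, hdiv⟩ := hK
  set δ := min δ' η
  have hδ : 0 < δ := lt_min hδ' hη
  obtain ⟨n₀, hn₀⟩ := exists_nat_gt (2 / δ)
  refine ⟨n₀, fun n hn A hA => ?_⟩
  rcases A.eq_empty_or_nonempty with rfl | hAne
  · exact ⟨∅, isClopen_empty, fun ρ _ => by simp [hη.le]⟩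
  -- Dividing by `n + 1` leaves the strict room needed to pack `n` copies, at the cost of a
  -- remainder of size at most `δ / 2 + 1 / (n + 1)`.
  obtain ⟨B, hB, -, hBdiv⟩ := hdiv A hA (n + 1) (by omega) (δ / 2) (by linarith)
  have hpos : ∀ μ ∈ K, 0 < (μ : Measure X).real A := fun μ hμ =>
    NNReal.coe_pos.2 ((hfull μ hμ).2 A hA.isOpen hAne)
  have hBdiv' : ∀ μ ∈ K, (μ : Measure X).real A - δ / 2 ≤ (n + 1) * (μ : Measure X).real B ∧
      (n + 1) * (μ : Measure X).real B ≤ (μ : Measure X).real A := by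
    intro μ hμ
    have := hBdiv μ hμ
    push_cast at this
    exact this
  have hnpos : (2 / δ : ℝ) < n := hn₀.trans_le (by exact_mod_cast hn)
  have hnδ : 2 < n * δ := (div_lt_iff₀ hδ).1 hnpos
  have hstrict : ∀ μ ∈ K, n * (μ : Measure X).real B < (μ : Measure X).real A := by
    intro μ hμ
    have h1 := hpos μ hμ
    have h2 := (hBdiv' μ hμ).2
    rcases (measureReal_nonneg (μ := (μ : Measure X)) (s := B)).eq_or_lt with h | h
    · rw [← h]; simpa using h1
    · linarith
  have hBsmall : ∀ μ ∈ K, (μ : Measure X).real A - n * (μ : Measure X).real B < δ := by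
    intro μ hμ
    have h1 := hBdiv' μ hμ
    have h2 : (μ : Measure X).real A ≤ 1 := measureReal_le_one
    have h3 : (0 : ℝ) ≤ (μ : Measure X).real B := measureReal_nonneg
    have h4 : (μ : Measure X).real B < δ / 2 := by
      by_contra hcon
      push Not at hcon
      have : (n : ℝ) * (δ / 2) ≤ n * (μ : Measure X).real B := by gcongr
      linarith
    linarith
  obtain ⟨C, hC, hCA, hCB⟩ := hG.exists_packing (Finset.univ : Finset (Fin n)) (fun _ => B)
    (fun _ => hB) hA (by simpa using hstrict)
  simp only [Finset.sum_const, Finset.card_univ, Fintype.card_fin, nsmul_eq_mul] at hCB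
  refine ⟨B, hB, ?_⟩
  rintro ρ (rfl | hρ)
  · have hR := hsmall (A \ C) (hA.diff hC) fun μ hμ => by
      rw [measureReal_sdiff hCA hC.isOpen.measurableSet, hCB μ (Or.inr hμ)]
      exact (hBsmall μ hμ).trans_le (min_le_left _ _)
    rw [measureReal_sdiff hCA hC.isOpen.measurableSet, hCB ρ (Or.inl rfl)] at hR
    refine ⟨by linarith, ?_⟩
    rw [← hCB ρ (Or.inl rfl)]
    exact measureReal_mono hCA
  · exact ⟨by linarith [hBsmall ρ hρ, min_le_right δ' η], (hstrict ρ hρ).le⟩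

/-- Every subconvex combination of values on clopen sets is realised, up to `η`, by a single
clopen set, simultaneously for `ν` and all of `K`. -/
lemma GoodWith.exists_combination [PerfectSpace X] [Nonempty X]
    {K : Set (ProbabilityMeasure X)} (hK : DynamicalSimplex K) {ν : ProbabilityMeasure X}
    (hG : GoodWith K ν) {ι : Type*} [Fintype ι] (A : ι → Set X) (hA : ∀ i, IsClopen (A i))
    (c : ι → ℝ) (hc : ∀ i, 0 ≤ c i) (hsum : ∑ i, c i < 1) {η : ℝ} (hη : 0 < η) :
    ∃ P : Set X, IsClopen P ∧ ∀ ρ ∈ insert ν K,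
      |(ρ : Measure X).real P - ∑ i, c i * (ρ : Measure X).real (A i)| ≤ η := by
  obtain ⟨n₀, hn₀⟩ := hG.exists_division hK (half_pos hη)
  obtain ⟨n₁, hn₁⟩ := exists_nat_gt (2 * (Fintype.card ι : ℝ) / η)
  set n := max n₀ n₁ + 1
  have hn0 : (0 : ℝ) < n := by positivity
  have hnι : (Fintype.card ι : ℝ) / n ≤ η / 2 := by
    have h1 : (n₁ : ℝ) ≤ n := by
      exact_mod_cast (le_max_right n₀ n₁).trans (Nat.le_succ _)
    rw [div_lt_iff₀ hη] at hn₁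
    rw [div_le_iff₀ hn0]
    nlinarith
  choose B hB hBdiv using fun i =>
    hn₀ n ((le_max_left _ _).trans (Nat.le_succ _)) (A i) (hA i)
  set m : ι → ℕ := fun i => ⌊c i * n⌋₊
  have hm : ∀ i, (m i : ℝ) ≤ c i * n := fun i => Nat.floor_le (mul_nonneg (hc i) hn0.le)
  have hm' : ∀ i, c i * n - 1 ≤ (m i : ℝ) := fun i => (Nat.sub_one_lt_floor _).le
  have hle : ∀ ρ ∈ insert ν K, ∀ i,
      (m i : ℝ) * (ρ : Measure X).real (B i) ≤ c i * (ρ : Measure X).real (A i) := by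
    intro ρ hρ i
    calc (m i : ℝ) * (ρ : Measure X).real (B i)
        ≤ c i * n * (ρ : Measure X).real (B i) :=
          mul_le_mul_of_nonneg_right (hm i) measureReal_nonneg
      _ = c i * (n * (ρ : Measure X).real (B i)) := by ring
      _ ≤ _ := mul_le_mul_of_nonneg_left (hBdiv i ρ hρ).2 (hc i)
  have hge : ∀ ρ ∈ insert ν K, ∀ i, c i * (ρ : Measure X).real (A i) - c i * (η / 2) - 1 / n
      ≤ (m i : ℝ) * (ρ : Measure X).real (B i) := by
    intro ρ hρ i
    have h0 : (0 : ℝ) ≤ (ρ : Measure X).real (B i) := measureReal_nonneg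
    have h1 : (ρ : Measure X).real (B i) ≤ 1 / n := by
      rw [le_div_iff₀ hn0]
      have h2 : (ρ : Measure X).real (A i) ≤ 1 := measureReal_le_one
      linarith [(hBdiv i ρ hρ).2]
    have h3 := mul_le_mul_of_nonneg_left (hBdiv i ρ hρ).1 (hc i)
    have h4 := mul_le_mul_of_nonneg_right (hm' i) h0
    linarith
  obtain ⟨P, hP, -, hPsum⟩ := hG.exists_packing
    (Finset.univ : Finset ((i : ι) × Fin (m i))) (fun p => B p.1) (fun p => hB p.1)
    isClopen_univ (by
      intro μ hμ
      simp only [Fintype.sum_sigma, Finset.sum_const, Finset.card_univ, Fintype.card_fin,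
        nsmul_eq_mul, probReal_univ]
      refine lt_of_le_of_lt (Finset.sum_le_sum fun i _ => ?_) hsum
      exact (hle μ (Or.inr hμ) i).trans (mul_le_of_le_one_right (hc i) measureReal_le_one))
  refine ⟨P, hP, fun ρ hρ => ?_⟩
  have hPρ := hPsum ρ hρ
  simp only [Fintype.sum_sigma, Finset.sum_const, Finset.card_univ, Fintype.card_fin,
    nsmul_eq_mul] at hPρ
  rw [hPρ, abs_le]
  have h1 := Finset.sum_le_sum fun i (_ : i ∈ Finset.univ) => hle ρ hρ i
  have h2 := Finset.sum_le_sum fun i (_ : i ∈ Finset.univ) => hge ρ hρ i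
  simp only [Finset.sum_sub_distrib, ← Finset.sum_mul, Finset.sum_const, Finset.card_univ,
    nsmul_eq_mul, mul_one_div] at h2
  have h3 : (∑ i, c i) * (η / 2) ≤ η / 2 := mul_le_of_le_one_left (half_pos hη).le hsum.le
  constructor <;> linarith

/-- A real combination of clopen indicators with uniformly negative integrals over `K` cannot
have a comparably positive integral for `ν`. -/
lemma GoodWith.sum_lt [PerfectSpace X] [Nonempty X]
    {K : Set (ProbabilityMeasure X)} (hK : DynamicalSimplex K) {ν : ProbabilityMeasure X}
    (hG : GoodWith K ν) {ι : Type*} [Fintype ι] (A : ι → Set X) (hA : ∀ i, IsClopen (A i))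
    (c : ι → ℝ) {γ : ℝ} (hγ : 0 < γ)
    (hneg : ∀ μ ∈ K, ∑ i, c i * (μ : Measure X).real (A i) ≤ -γ) :
    ∑ i, c i * (ν : Measure X).real (A i) < γ := by
  by_contra! hcon
  -- Rescaling by `t` makes the positive and the negative parts subconvex.
  set t : ℝ := 1 / (∑ i, |c i| + 1)
  have hden : 0 < ∑ i, |c i| + 1 := by positivity
  have ht : 0 < t := by positivity
  have hbound : ∀ d : ι → ℝ, (∀ i, d i ≤ |c i|) → ∑ i, t * d i < 1 := by
    intro d hd
    rw [← Finset.mul_sum, one_div_mul_eq_div, div_lt_one hden]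
    linarith [Finset.sum_le_sum fun i (_ : i ∈ Finset.univ) => hd i]
  have hη : 0 < t * γ / 4 := by positivity
  obtain ⟨P, hP, hPc⟩ := hG.exists_combination hK A hA (fun i => t * (c i)⁺)
    (fun i => mul_nonneg ht.le (posPart_nonneg _))
    (hbound _ fun i => by rw [← posPart_add_negPart]; linarith [negPart_nonneg (c i)]) hη
  obtain ⟨Q, hQ, hQc⟩ := hG.exists_combination hK A hA (fun i => t * (c i)⁻)
    (fun i => mul_nonneg ht.le (negPart_nonneg _))
    (hbound _ fun i => by rw [← posPart_add_negPart]; linarith [posPart_nonneg (c i)]) hη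
  have hsplit : ∀ ρ : ProbabilityMeasure X,
      ∑ i, t * (c i)⁺ * (ρ : Measure X).real (A i) - ∑ i, t * (c i)⁻ * (ρ : Measure X).real (A i)
        = t * ∑ i, c i * (ρ : Measure X).real (A i) := by
    intro ρ
    rw [← Finset.sum_sub_distrib, Finset.mul_sum]
    refine Finset.sum_congr rfl fun i _ => ?_
    conv_rhs => rw [← posPart_sub_negPart (c i)]
    ring
  have htγ : 0 < t * γ := by positivity
  have hPQ := hG.le_of_lt hP hQ fun μ hμ => by
    have h1 := abs_le.1 (hPc μ (Or.inr hμ))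
    have h2 := abs_le.1 (hQc μ (Or.inr hμ))
    have h3 := mul_le_mul_of_nonneg_left (hneg μ hμ) ht.le
    linarith [hsplit μ]
  have h1 := abs_le.1 (hPc ν (Or.inl rfl))
  have h2 := abs_le.1 (hQc ν (Or.inl rfl))
  have h3 := mul_le_mul_of_nonneg_left hcon ht.le
  linarith [hsplit ν]

/-! ### Separation and compactness -/

/-- Finite-dimensional form of the result: `ν` agrees with some member of `K` on any given
finite family of clopen sets. -/
lemma GoodWith.exists_agree [PerfectSpace X] [Nonempty X]
    {K : Set (ProbabilityMeasure X)} (hK : DynamicalSimplex K) {ν : ProbabilityMeasure X}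
    (hG : GoodWith K ν) {ι : Type*} [Fintype ι] (A : ι → Set X) (hA : ∀ i, IsClopen (A i)) :
    ∃ μ ∈ K, ∀ i, (μ : Measure X).real (A i) = (ν : Measure X).real (A i) := by
  classical
  set φ : ProbabilityMeasure X → ι → ℝ := fun μ i => (μ : Measure X).real (A i)
  by_contra! hcon
  have hφ : Continuous φ := continuous_pi fun i => continuous_measureReal (hA i)
  have hnot : φ ν ∉ φ '' K := by
    rintro ⟨μ, hμ, h⟩
    obtain ⟨i, hi⟩ := hcon μ hμ
    exact hi (congrFun h i)
  obtain ⟨f, u, hfu, huf⟩ := geometric_hahn_banach_closed_point (convex_image hK.2.2.1 A)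
    (hK.2.1.image hφ).isClosed hnot
  have hf : ∀ x : ι → ℝ, f x = ∑ i, f (Pi.single i 1) * x i := by
    intro x
    conv_lhs => rw [pi_eq_sum_univ' x]
    rw [map_sum]
    refine Finset.sum_congr rfl fun i _ => ?_
    rw [map_smul, smul_eq_mul, mul_comm]
  -- The threshold `w` enters as the coefficient of an additional clopen set, the whole space.
  set w := (u + f (φ ν)) / 2
  have hsum : ∀ ρ : ProbabilityMeasure X,
      ∑ o : Option ι, (o.elim (-w) fun i => f (Pi.single i 1)) *
        (ρ : Measure X).real (o.elim Set.univ A) = f (φ ρ) - w := by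
    intro ρ
    rw [Fintype.sum_option, hf (φ ρ)]
    simp [φ]
    ring
  have h := hG.sum_lt hK (fun o : Option ι => o.elim Set.univ A)
    (by rintro (_ | i); exacts [isClopen_univ, hA i])
    (fun o => o.elim (-w) fun i => f (Pi.single i 1)) (γ := (f (φ ν) - u) / 2)
    (by linarith) (fun μ hμ => by
      rw [hsum]
      have := hfu _ ⟨μ, hμ, rfl⟩
      simp only [w]
      linarith)
  rw [hsum] at h
  simp only [w] at h
  linarith

lemma eq_of_isClopen {μ ν : ProbabilityMeasure X}
    (h : ∀ A : Set X, IsClopen A → (μ : Measure X).real A = (ν : Measure X).real A) :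
    μ = ν := by
  refine Subtype.ext (?_ : (μ : Measure X) = (ν : Measure X))
  refine ext_of_generate_finite {A : Set X | IsClopen A} ?_ ?_ ?_ (by simp)
  · rw [BorelSpace.measurable_eq (α := X)]
    exact isTopologicalBasis_isClopen.borel_eq_generateFrom
  · exact fun A hA B hB _ => hA.inter hB
  · exact fun A hA => (measureReal_eq_measureReal_iff (by simp) (by simp)).1 (h A hA)

lemma GoodWith.mem [PerfectSpace X] [Nonempty X]
    {K : Set (ProbabilityMeasure X)} (hK : DynamicalSimplex K) {ν : ProbabilityMeasure X}
    (hG : GoodWith K ν) : ν ∈ K := by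
  obtain ⟨μ, hμ, hμν⟩ := hK.2.1.inter_iInter_nonempty
    (fun A : {A : Set X // IsClopen A} =>
      {μ : ProbabilityMeasure X | (μ : Measure X).real A = (ν : Measure X).real A})
    (fun A => isClosed_eq (continuous_measureReal A.2) continuous_const)
    (fun s => by
      obtain ⟨μ, hμ, h⟩ := hG.exists_agree hK (fun A : s => (A : Set X)) (fun A => A.1.2)
      exact ⟨μ, hμ, Set.mem_iInter₂.2 fun A hA => h ⟨A, hA⟩⟩)
  rw [Set.mem_iInter] at hμν
  rwa [← eq_of_isClopen fun A hA => hμν ⟨A, hA⟩]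

end Cantor

end DynSimplex

theorem invariantMeasures_eq_K_of_saturated
    {X : Type*} [TopologicalSpace X] [CompactSpace X]
    [TopologicalSpace.MetrizableSpace X] [TotallyDisconnectedSpace X] [PerfectSpace X]
    [Nonempty X] [MeasurableSpace X] [BorelSpace X]
    (K : Set (MeasureTheory.ProbabilityMeasure X)) (hK : DynSimplex.DynamicalSimplex K)
    (g : X ≃ₜ X) (hg : DynSimplex.PreservesAll K g) (hsat : DynSimplex.KSaturated K g) :
    {μ : MeasureTheory.ProbabilityMeasure X | DynSimplex.Preserves g μ} = K := by
  refine Set.Subset.antisymm (fun ν hν => ?_) hg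
  exact (DynSimplex.goodWith_of_saturated hK.2.2.2.2.1 hsat hν).mem hK
end
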